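/- Let R be a reduced commutative noetherian ring of finite Krull dimension. If R satisfies one of the following conditions: (i) R has prime characteristic p and R is finitely generated as a module over its subring R^p of p-th powers; (ii) R is a localization of a finitely generated algebra over the ring of integers ℤ; then R has the uniform Briançon–Skoda property, i.e. there exists an integer k ≥ 0 such that for every ideal I of R and every n ≥ k, \overline{I^n} ⊆ I^{n−k}. -/

import Mathlib

/-!
The proof is a Noetherian induction over the prime quotients of a ring, and the property that is
carried along, `PUBS D`, is the uniform Briançon–Skoda property of all polynomial rings
`D[x₁, …, x_s]` (with a bound depending on `s`). For a domain `D` two facts are needed.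

* A *uniform multiplier*: some `c ≠ 0` in `D` such that, for every `s`, there is `k` with
  `c * \overline{I ^ n} ⊆ I ^ (n - k)` for all ideals `I` of `D[x₁, …, x_s]`.
* *Uniform Artin–Rees* for the primes `P` of `D` that contain `c`:
  `I ^ n ⊓ P B ≤ I ^ (n - k) * P B` in `B = D[x₁, …, x_s]`, with `k` independent of `I`.

Filtering `D ⧸ (c)` by primes, the second fact gives the same bound for the ideal `(c)`
(`UAR.of_primes`), so that `c * x ∈ I ^ n` implies `c * x ∈ I ^ (n - k) * (c)`, and `c` can be
cancelled (`PUBS.of_multiplier`).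

The second fact follows from `PUBS E` for the smaller quotient `E = D ⧸ P`. For the kernel of an
evaluation `E[z] → E` it is elementary: if `(z - ξ) * u ∈ 𝔄 ^ n`, deforming the evaluation of `z`
at each valuation shows that `u` is integral over `𝔄 ^ (n - 1)` (`isInt_of_linear_mul`). Flatness
then transports the bound from `E[z₁, …, z_N] → E` to a presentation `Λ[z₁, …, z_N] → E` whenever
`E` is flat over `Λ` (`uar_ker_aeval`). Over `ℤ` this settles the case where `E` has characteristic
zero. If `E` has characteristic `p`, one first divides by `p`: the ideal `(p)` of `ℤ[z₁, …, z_N]`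
is handled by a lift of the Frobenius (`isInt_of_prime_mul`), and `E` is flat over the field with
`p` elements. For rings that are finite over their `p`-th powers, the ring is presented over itself
through high powers of the Frobenius; modulo a power of a maximal ideal the coefficients become a
field (`FGen.uar`).

Uniform multipliers in characteristic `p` come from tight closure. A domain that is finite over its
`p`-th powers is finite and split over them up to a multiplier `c` (`HasFrob.exists`), and then `c ^ 3`
multiplies the tight closure of any ideal into the ideal (`tight_closure`). Every ideal has, after
the extension `B → B[t]` and localization, a reduction with a number of generators bounded by the
dimension (`bounded_reduction`, `local_reduction`), and for an ideal with `l` generators the integral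
closure of the `n`-th power lies in the tight closure of the `(n - l)`-th power.

In characteristic zero, for domains of finite type over `ℤ`, the multiplier is a maximal Jacobian
minor of a presentation, in the spirit of Lipman and Sathaye. If `S` is quasi-finite over a normal
subring `A`, the Jacobian of a presentation of `S` over `A` is the image of an element of `S ⊗ S`
that is killed by all `x ⊗ 1 - 1 ⊗ x`; since traces of integral elements lie in `A`, the Jacobian
multiplies the integral closure of `S` into `S` (`jacobian_mul`). Here `S` is the extended Rees
algebra of an ideal with boundedly many generators over `B[t]`, and `A` is the polynomial ring in
the elements `x ^ q - x + w`, where `x` runs over a transcendence basis of generators, `q` is the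
order of a residue field, and `w` lies in a high power of the prime under consideration. For general
`w` this prime is isolated in its fibre, so Zariski's main theorem applies (`exists_perturb`, `zmt`);
the derivative `q * x ^ (q - 1) - 1` is a unit there, so the Jacobian over `A` agrees, up to a unit
and an error in a high power of the prime, with the Jacobian over `Λ` (`main_step`, `main_local`).
Reading off the graded pieces gives the statement about `I ^ n` (`rees_local`,
`jacobian_multiplier`).

For a reduced ring, membership in `I ^ (n - k)` is known modulo each minimal prime, and is glued,
one prime at a time, by the uniform Artin–Rees property of sums of ideals (`UBS.of_reduced`); the
property passes to localizations (`UBS.localization`).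
-/

universe u v

/-- An element `x` is integral over the ideal `J`: it satisfies an equation
`x ^ n + a 1 * x ^ (n - 1) + ⋯ + a n = 0` with `a i ∈ J ^ i` for `1 ≤ i ≤ n`. -/
def IsIntegralOverIdeal {R : Type*} [CommRing R] (J : Ideal R) (x : R) : Prop :=
  ∃ n : ℕ, 0 < n ∧ ∃ a : ℕ → R, (∀ i, 1 ≤ i → i ≤ n → a i ∈ J ^ i) ∧
    x ^ n + ∑ i ∈ Finset.Icc 1 n, a i * x ^ (n - i) = 0

/-- The integral closure `\overline J` of an ideal `J`: the ideal of all elements integral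
over `J` (realized as the ideal generated by this set, which is in fact already an ideal). -/
def Ideal.intClosure {R : Type*} [CommRing R] (J : Ideal R) : Ideal R :=
  Ideal.span {x | IsIntegralOverIdeal J x}

/-- `R` is essentially of finite type over a noetherian local ring: `R` is a localization of
a finitely generated algebra over a commutative noetherian local ring. -/
inductive IsEssentiallyOfFiniteTypeOverLocalRing (R : Type u) [CommRing R] : Prop where
  | intro : ∀ (S A : Type u) [CommRing S] [CommRing A] [IsNoetherianRing S] [IsLocalRing S]
      [Algebra S A] (_ : Algebra.FiniteType S A) [Algebra A R] (M : Submonoid A)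
      (_ : IsLocalization M R), IsEssentiallyOfFiniteTypeOverLocalRing R

/-- `R` is essentially of finite type over `ℤ`: `R` is a localization of a finitely generated
`ℤ`-algebra. -/
inductive IsEssentiallyOfFiniteTypeOverInt (R : Type u) [CommRing R] : Prop where
  | intro : ∀ (A : Type u) [CommRing A] (_ : Algebra.FiniteType ℤ A) [Algebra A R]
      (M : Submonoid A) (_ : IsLocalization M R), IsEssentiallyOfFiniteTypeOverInt R

/-- `R` has prime characteristic `p` and is finitely generated as a module over its subring
`R^p` of `p`-th powers; the latter is expressed as finiteness of the Frobenius ring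
homomorphism `x ↦ x ^ p`. -/
def ModuleFiniteOverPthPowers (R : Type u) [CommRing R] : Prop :=
  ∃ p : ℕ, p.Prime ∧ CharP R p ∧ ∃ f : R →+* R, (∀ x : R, f x = x ^ p) ∧ f.Finite

namespace BS

/-! ### Integral closure of ideals -/

section IntClosure

theorem isInt_zero {R : Type*} [CommRing R] (J : Ideal R) : IsIntegralOverIdeal J 0 :=
  ⟨1, one_pos, fun _ => 0, by simp, by simp⟩

theorem isInt_map {R S : Type*} [CommRing R] [CommRing S] (f : R →+* S) {J : Ideal R} {x : R}
    (h : IsIntegralOverIdeal J x) : IsIntegralOverIdeal (J.map f) (f x) := by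
  obtain ⟨n, hn, a, ha, he⟩ := h
  refine ⟨n, hn, fun i => f (a i), fun i h1 h2 => ?_, ?_⟩
  · rw [← Ideal.map_pow]; exact Ideal.mem_map_of_mem _ (ha i h1 h2)
  · have := congrArg f he
    simpa using this

theorem isInt_mono {R : Type*} [CommRing R] {J J' : Ideal R} (hJ : J ≤ J') {x : R}
    (h : IsIntegralOverIdeal J x) : IsIntegralOverIdeal J' x := by
  obtain ⟨n, hn, a, ha, he⟩ := h
  exact ⟨n, hn, a, fun i h1 h2 => Ideal.pow_right_mono hJ i (ha i h1 h2), he⟩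

theorem isInt_mul {R : Type*} [CommRing R] {J : Ideal R} {x : R} (c : R)
    (h : IsIntegralOverIdeal J x) : IsIntegralOverIdeal J (c * x) := by
  obtain ⟨n, hn, a, ha, he⟩ := h
  refine ⟨n, hn, fun i => c ^ i * a i, fun i h1 h2 => Ideal.mul_mem_left _ _ (ha i h1 h2), ?_⟩
  have : (c * x) ^ n + ∑ i ∈ Finset.Icc 1 n, c ^ i * a i * (c * x) ^ (n - i) =
      c ^ n * (x ^ n + ∑ i ∈ Finset.Icc 1 n, a i * x ^ (n - i)) := by
    rw [mul_add, mul_pow, Finset.mul_sum]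
    congr 1
    refine Finset.sum_congr rfl fun i hi => ?_
    have hi := Finset.mem_Icc.1 hi
    have : c ^ n = c ^ i * c ^ (n - i) := by rw [← pow_add]; congr 1; omega
    rw [this, mul_pow]; ring
  rw [this, he, mul_zero]

/-- An element of a power of `J` lies in the corresponding power after raising to a power, with
a bounded loss. -/
theorem isInt_pow_mem {R : Type*} [CommRing R] {J : Ideal R} {x : R}
    (h : IsIntegralOverIdeal J x) :
    ∃ m : ℕ, ∀ N, ∀ j ∈ J ^ m, j * x ^ N ∈ J ^ N := by
  obtain ⟨m, hm, a, ha, he⟩ := h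
  have key : ∀ N, x ^ N ∈ J ^ (N + 1 - m) := by
    intro N
    induction N using Nat.strong_induction_on with
    | _ N ih =>
      by_cases hN : N < m
      · have : N + 1 - m = 0 := by omega
        rw [this]; simp
      · have e : x ^ N = - ∑ i ∈ Finset.Icc 1 m, a i * x ^ (N - i) := by
          have h1 : x ^ N = x ^ (N - m) * x ^ m := by rw [← pow_add]; congr 1; omega
          rw [h1, eq_neg_of_add_eq_zero_left he, mul_neg, Finset.mul_sum]
          congr 1
          refine Finset.sum_congr rfl fun i hi => ?_
          have hi := Finset.mem_Icc.1 hi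
          have : x ^ (N - i) = x ^ (N - m) * x ^ (m - i) := by
            rw [← pow_add]; congr 1; omega
          rw [this]; ring
        rw [e]
        refine neg_mem (sum_mem fun i hi => ?_)
        have hi := Finset.mem_Icc.1 hi
        have := Ideal.mul_mem_mul (ha i hi.1 hi.2) (ih (N - i) (by omega))
        rw [← pow_add] at this
        exact Ideal.pow_le_pow_right (by omega) this
  refine ⟨m, fun N j hj => ?_⟩
  have := Ideal.mul_mem_mul hj (key N)
  rw [← pow_add] at this
  exact Ideal.pow_le_pow_right (by omega) this

/-- Principal ideals of a valuation ring are integrally closed. -/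
theorem isInt_valuationRing {V : Type*} [CommRing V] [IsDomain V] [ValuationRing V]
    {a x : V} (h : IsIntegralOverIdeal (Ideal.span {a}) x) : a ∣ x := by
  obtain ⟨m, hm, c, hc, he⟩ := h
  rcases ValuationRing.dvd_total a x with h | ⟨b, rfl⟩
  · exact h
  have hc' : ∀ i, ∃ d, 1 ≤ i → i ≤ m → c i = (x * b) ^ i * d := by
    intro i
    by_cases hi : 1 ≤ i ∧ i ≤ m
    · have := hc i hi.1 hi.2
      rw [Ideal.span_singleton_pow, Ideal.mem_span_singleton] at this
      obtain ⟨d, hd⟩ := this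
      exact ⟨d, fun _ _ => hd⟩
    · exact ⟨0, fun h1 h2 => absurd ⟨h1, h2⟩ hi⟩
  choose d hd using hc'
  have e : x ^ m * (1 + ∑ i ∈ Finset.Icc 1 m, b ^ i * d i) = 0 := by
    rw [← he, mul_add, mul_one, Finset.mul_sum]
    congr 1
    refine Finset.sum_congr rfl fun i hi => ?_
    have hi := Finset.mem_Icc.1 hi
    have : x ^ m = x ^ i * x ^ (m - i) := by rw [← pow_add]; congr 1; omega
    rw [hd i hi.1 hi.2, this, mul_pow]; ring
  rcases mul_eq_zero.1 e with h0 | h0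
  · have : x = 0 := by simpa using (pow_eq_zero_iff (by omega : m ≠ 0)).1 h0
    simp [this]
  · have hb : b ∣ 1 := by
      have h1 : (1 : V) = -∑ i ∈ Finset.Icc 1 m, b ^ i * d i := eq_neg_of_add_eq_zero_left h0
      rw [h1]
      refine (dvd_neg).2 (Finset.dvd_sum fun i hi => ?_)
      have hi := Finset.mem_Icc.1 hi
      exact Dvd.dvd.mul_right (dvd_pow_self b (by omega)) _
    obtain ⟨u, hu⟩ := hb
    exact ⟨u, by rw [mul_assoc, ← hu, mul_one]⟩

/-- A finitely generated ideal extends to a principal ideal of a valuation ring, generated by the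
image of one of its elements. -/
theorem fg_map_principal {R V : Type*} [CommRing R] [CommRing V] [IsDomain V] [ValuationRing V]
    (φ : R →+* V) {J : Ideal R} (hJ : J.FG) : ∃ a ∈ J, J.map φ = Ideal.span {φ a} := by
  classical
  obtain ⟨s, rfl⟩ := hJ
  induction s using Finset.induction_on with
  | empty => exact ⟨0, zero_mem _, by rw [Finset.coe_empty, Ideal.span_empty, Ideal.map_bot, map_zero,
      Ideal.span_singleton_zero]⟩
  | insert b s hb ih =>
    obtain ⟨a, ha, he⟩ := ih
    have hsp : Ideal.span ((insert b s : Finset R) : Set R) =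
        Ideal.span {b} ⊔ Ideal.span (s : Set R) := by
      rw [Finset.coe_insert, Ideal.span_insert]
    rcases ValuationRing.dvd_total (φ a) (φ b) with h | h
    · refine ⟨a, ?_, ?_⟩
      · rw [hsp]; exact Ideal.mem_sup_right ha
      · rw [hsp, Ideal.map_sup, he, Ideal.map_span, Set.image_singleton, sup_eq_right]
        exact Ideal.span_singleton_le_span_singleton.2 h
    · refine ⟨b, Ideal.subset_span (by simp), ?_⟩
      rw [hsp, Ideal.map_sup, he, Ideal.map_span, Set.image_singleton, sup_eq_left]
      exact Ideal.span_singleton_le_span_singleton.2 h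

theorem isInt_valuation_mem {R V : Type*} [CommRing R] [CommRing V] [IsDomain V] [ValuationRing V]
    (φ : R →+* V) {J : Ideal R} (hJ : J.FG) {x : R} (h : IsIntegralOverIdeal J x) :
    φ x ∈ J.map φ := by
  obtain ⟨a, ha, he⟩ := fg_map_principal φ hJ
  have := isInt_map φ h
  rw [he] at this ⊢
  exact Ideal.mem_span_singleton.2 (isInt_valuationRing this)

/-- The valuative criterion for integrality over an ideal of a domain. -/
theorem isInt_of_valuations {R : Type u} [CommRing R] [IsDomain R] {J : Ideal R} {x : R}
    (h : ∀ (V : Type u) [CommRing V] [IsDomain V] [ValuationRing V] (φ : R →+* V),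
      Function.Injective φ → φ x ∈ J.map φ) : IsIntegralOverIdeal J x := by
  by_cases hx : x = 0
  · subst hx; exact isInt_zero J
  let K := FractionRing R
  let ev : reesAlgebra J →+* K :=
    (Polynomial.eval₂RingHom (algebraMap R K) (algebraMap R K x)⁻¹).comp
      (reesAlgebra J).toSubring.subtype
  have hxK : algebraMap R K x ≠ 0 := by
    simpa using hx
  -- `N` is the ideal of elements of positive degree of the Rees algebra, and `ev` sends `T` to
  -- `x⁻¹`. If `N` generates the unit ideal of `R[J x⁻¹]`, clearing denominators gives an integral
  -- equation for `x`; otherwise a valuation ring dominates `R[J x⁻¹]` at a prime containing `J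
  -- x⁻¹`.
  let N : Ideal (reesAlgebra J) := RingHom.ker
    (Polynomial.constantCoeff.comp (reesAlgebra J).toSubring.subtype : reesAlgebra J →+* R)
  let ev' := ev.rangeRestrict
  by_cases hN : N.map ev' = ⊤
  · have h1 : (1 : ev.range) ∈ N.map ev' := by rw [hN]; trivial
    obtain ⟨f, hf, hf1⟩ := (Ideal.mem_map_iff_of_surjective ev'
      ev.rangeRestrict_surjective).1 h1
    have hf0 : f.1.coeff 0 = 0 := hf
    have hf1 : ev f = 1 := congrArg Subtype.val hf1
    have hev : ∑ i ∈ Finset.range (f.1.natDegree + 1),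
        algebraMap R K (f.1.coeff i) * (algebraMap R K x)⁻¹ ^ i = 1 := by
      rw [← hf1]
      exact (Polynomial.eval₂_eq_sum_range _ _).symm
    set m := f.1.natDegree with hm
    rw [Finset.sum_range_succ', hf0] at hev
    simp only [map_zero, zero_mul, add_zero] at hev
    have hm0 : 0 < m := by
      rcases Nat.eq_zero_or_pos m with h0 | h0
      · rw [h0] at hev; simp at hev
      · exact h0
    refine ⟨m, hm0, fun i => - f.1.coeff i, fun i _ _ => neg_mem (f.2 i), ?_⟩
    apply IsFractionRing.injective R K
    have e2 : ∑ i ∈ Finset.Icc 1 m, (-f.1.coeff i) * x ^ (m - i) =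
        ∑ i ∈ Finset.range m, (-f.1.coeff (i+1)) * x ^ (m - (i+1)) := by
      rw [Finset.range_eq_Ico, Finset.sum_Ico_add' (fun i => (-f.1.coeff i) * x ^ (m - i)) 0 m 1]
      rfl
    rw [e2]
    simp only [map_add, map_pow, map_sum, map_mul, map_neg, map_zero]
    have e3 : ∑ i ∈ Finset.range m, -(algebraMap R K) (f.1.coeff (i + 1)) *
        (algebraMap R K) x ^ (m - (i + 1)) = - (algebraMap R K x ^ m *
        ∑ i ∈ Finset.range m, (algebraMap R K) (f.1.coeff (i + 1)) *
          ((algebraMap R K) x)⁻¹ ^ (i + 1)) := by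
      rw [Finset.mul_sum, ← Finset.sum_neg_distrib]
      refine Finset.sum_congr rfl fun i hi => ?_
      have hi := Finset.mem_range.1 hi
      have : algebraMap R K x ^ m = algebraMap R K x ^ (m - (i+1)) * algebraMap R K x ^ (i+1) := by
        rw [← pow_add]; congr 1; omega
      rw [this, neg_mul, neg_inj, inv_pow]
      have h0 : algebraMap R K x ^ (i+1) ≠ 0 := pow_ne_zero _ hxK
      have h1 := mul_inv_cancel₀ h0
      linear_combination (-(algebraMap R K x ^ (m - (i+1))) * algebraMap R K (f.1.coeff (i+1))) * h1
    rw [e3, hev]; ring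
  · exfalso
    obtain ⟨V, hV, hVN⟩ := Ideal.image_subset_nonunits_valuationSubring (A := ev.range) _ hN
    have hC : ∀ r : R, algebraMap R K r ∈ ev.range := by
      intro r
      refine ⟨⟨Polynomial.C r, (reesAlgebra J).algebraMap_mem r⟩, ?_⟩
      simp [ev]
    let φ : R →+* V := (algebraMap R K).codRestrict V.toSubring (fun r => hV (hC r))
    have hφ : Function.Injective φ := by
      intro a b hab
      exact IsFractionRing.injective R K (congrArg Subtype.val hab)
    have hmem := h V φ hφ
    have hle : J.map φ ≤ Ideal.span {φ x} * IsLocalRing.maximalIdeal V := by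
      rw [Ideal.map_le_iff_le_comap]
      intro j hj
      have hjm : (Polynomial.monomial 1 j : Polynomial R) ∈ reesAlgebra J :=
        reesAlgebra.monomial_mem.2 (by simpa using hj)
      let f : reesAlgebra J := ⟨_, hjm⟩
      have hfN : f ∈ N := by
        change (Polynomial.monomial 1 j).coeff 0 = 0
        simp [Polynomial.coeff_monomial]
      have hevf : ev f = algebraMap R K j * (algebraMap R K x)⁻¹ := by
        simp [ev, f, Polynomial.eval₂_monomial]
      have h1 : ev f ∈ V.nonunits := hVN ⟨ev' f, Ideal.mem_map_of_mem _ hfN, rfl⟩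
      rw [hevf, ValuationSubring.mem_nonunits_iff_exists_mem_maximalIdeal] at h1
      obtain ⟨h2, h3⟩ := h1
      rw [Ideal.mem_comap]
      have : φ j = φ x * ⟨_, h2⟩ := by
        apply Subtype.ext
        change algebraMap R K j = algebraMap R K x * (algebraMap R K j * (algebraMap R K x)⁻¹)
        have h1 := mul_inv_cancel₀ hxK
        linear_combination (-(algebraMap R K j)) * h1
      rw [this]
      exact Ideal.mul_mem_mul (Ideal.mem_span_singleton_self _) h3
    have := hle hmem
    rw [Ideal.mem_span_singleton_mul] at this
    obtain ⟨m, hm, hm'⟩ := this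
    have hφx : φ x ≠ 0 := by
      intro h0; exact hx (hφ (by rw [h0, map_zero]))
    have : m = 1 := mul_left_cancel₀ hφx (by rw [hm', mul_one])
    rw [this] at hm
    exact (IsLocalRing.maximalIdeal.isMaximal V).ne_top ((Ideal.eq_top_iff_one _).2 hm)

/-- Integrality over an ideal descends along a localization, up to a denominator. -/
theorem isInt_of_localization {A B : Type*} [CommRing A] [CommRing B] [Algebra A B]
    (M : Submonoid A) [IsLocalization M B] {J : Ideal A} {x : A}
    (h : IsIntegralOverIdeal (J.map (algebraMap A B)) (algebraMap A B x)) :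
    ∃ s ∈ M, IsIntegralOverIdeal J (s * x) := by
  obtain ⟨m, hm, a, ha, he⟩ := h
  have h1 : ∀ i, ∃ s : M, ∃ b : A, (1 ≤ i → i ≤ m → b ∈ J ^ i ∧
      algebraMap A B s * a i = algebraMap A B b) := by
    intro i
    by_cases hi : 1 ≤ i ∧ i ≤ m
    · have := ha i hi.1 hi.2
      rw [← Ideal.map_pow, IsLocalization.mem_map_algebraMap_iff M] at this
      obtain ⟨⟨b, s⟩, hs⟩ := this
      exact ⟨s, b, fun _ _ => ⟨b.2, by rw [mul_comm]; exact hs⟩⟩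
    · exact ⟨1, 0, fun h1 h2 => absurd ⟨h1, h2⟩ hi⟩
  choose s b hb using h1
  let S : M := ∏ i ∈ Finset.Icc 1 m, s i
  have h2 : ∀ i, ∃ c : A, (1 ≤ i → i ≤ m → c ∈ J ^ i ∧
      algebraMap A B S ^ i * a i = algebraMap A B c) := by
    intro i
    by_cases hi : 1 ≤ i ∧ i ≤ m
    · obtain ⟨t, ht⟩ : s i ∣ S := Finset.dvd_prod_of_mem s (Finset.mem_Icc.2 hi)
      refine ⟨S ^ (i - 1) * t * b i, fun _ _ => ⟨Ideal.mul_mem_left _ _ (hb i hi.1 hi.2).1, ?_⟩⟩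
      have e : algebraMap A B S ^ i = algebraMap A B S ^ (i - 1) * algebraMap A B S := by
        rw [← pow_succ]; congr 1; omega
      rw [e]
      have e' : algebraMap A B S = algebraMap A B (s i) * algebraMap A B t := by
        rw [ht, Submonoid.coe_mul, map_mul]
      rw [map_mul, map_mul, ← (hb i hi.1 hi.2).2, map_pow]
      nth_rewrite 2 [e']
      ring
    · exact ⟨0, fun h1 h2 => absurd ⟨h1, h2⟩ hi⟩
  choose c hc using h2
  have h3 : algebraMap A B ((S * x) ^ m + ∑ i ∈ Finset.Icc 1 m, c i * (S * x) ^ (m - i)) = 0 := by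
    have : algebraMap A B ((S * x) ^ m + ∑ i ∈ Finset.Icc 1 m, c i * (S * x) ^ (m - i)) =
      algebraMap A B S ^ m * (algebraMap A B x ^ m + ∑ i ∈ Finset.Icc 1 m, a i *
        algebraMap A B x ^ (m - i)) := by
      simp only [map_add, map_pow, map_sum, map_mul]
      rw [mul_add, mul_pow, Finset.mul_sum]
      congr 1
      refine Finset.sum_congr rfl fun i hi => ?_
      have hi := Finset.mem_Icc.1 hi
      have : algebraMap A B S ^ m = algebraMap A B S ^ i * algebraMap A B S ^ (m - i) := by
        rw [← pow_add]; congr 1; omega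
      rw [this, ← (hc i hi.1 hi.2).2, mul_pow]; ring
    rw [this, he, mul_zero]
  obtain ⟨t, ht⟩ := (IsLocalization.map_eq_zero_iff M B _).1 h3
  refine ⟨t * S, (t * S).2, m, hm, fun i => t ^ i * c i,
    fun i h1 h2 => Ideal.mul_mem_left _ _ (hc i h1 h2).1, ?_⟩
  have : ((t : A) * S * x) ^ m + ∑ i ∈ Finset.Icc 1 m, t ^ i * c i * (t * S * x) ^ (m - i) =
      t ^ (m - 1) * (t * ((S * x) ^ m + ∑ i ∈ Finset.Icc 1 m, c i * (S * x) ^ (m - i))) := by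
    rw [← mul_assoc, ← pow_succ, Nat.sub_add_cancel hm, mul_add, Finset.mul_sum, mul_assoc,
      mul_pow]
    congr 1
    refine Finset.sum_congr rfl fun i hi => ?_
    have hi := Finset.mem_Icc.1 hi
    have : (t : A) ^ m = t ^ i * t ^ (m - i) := by rw [← pow_add]; congr 1; omega
    rw [this, mul_pow (t : A)]; ring
  rw [this, ht, mul_zero]

end IntClosure

/-! ### Uniform bounds and reduction to neighbourhoods of maximal ideals -/

section Uniform

theorem mem_left_of_mem_mul {R : Type*} [CommRing R] {I J : Ideal R} {x : R} (h : x ∈ I * J) :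
    x ∈ I := (Ideal.mul_le_left : I * J ≤ I) h

theorem mem_right_of_mem_mul {R : Type*} [CommRing R] {I J : Ideal R} {x : R} (h : x ∈ I * J) :
    x ∈ J := (Ideal.mul_le_right : I * J ≤ J) h

/-- The uniform Briançon–Skoda property, phrased with elements (and truncated subtraction, so
that nothing is claimed for `n ≤ k`). -/
def UBS (R : Type*) [CommRing R] : Prop :=
  ∃ k : ℕ, ∀ (I : Ideal R) (n : ℕ) (x : R), IsIntegralOverIdeal (I ^ n) x → x ∈ I ^ (n - k)

/-- The ideal contains a power of a maximal ideal. -/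
def Near {R : Type*} [CommRing R] (I : Ideal R) : Prop :=
  ∃ M : Ideal R, M.IsMaximal ∧ ∃ t : ℕ, M ^ t ≤ I

/-- The uniform Artin–Rees property of the ideal `Q`. -/
def UAR {B : Type*} [CommRing B] (Q : Ideal B) : Prop :=
  ∃ k : ℕ, ∀ (I : Ideal B) (n : ℕ), I ^ n ⊓ Q ≤ I ^ (n - k) * Q

theorem UBS.of_equiv {R S : Type*} [CommRing R] [CommRing S] (e : R ≃+* S) (h : UBS R) :
    UBS S := by
  obtain ⟨k, hk⟩ := h
  refine ⟨k, fun I n x hx => ?_⟩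
  have h1 := isInt_map (e.symm : S →+* R) hx
  rw [Ideal.map_pow] at h1
  have h2 := Ideal.mem_map_of_mem (e : R →+* S) (hk _ _ _ h1)
  rw [Ideal.map_pow, Ideal.map_map] at h2
  simpa using h2

theorem UBS.localization {A B : Type*} [CommRing A] [CommRing B] [Algebra A B]
    (M : Submonoid A) [IsLocalization M B] (h : UBS A) : UBS B := by
  obtain ⟨k, hk⟩ := h
  refine ⟨k, fun I n y hy => ?_⟩
  obtain ⟨⟨x, s⟩, hxs⟩ := IsLocalization.surj M y
  simp only at hxs
  have hI := IsLocalization.map_under M B I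
  set I' := I.comap (algebraMap A B)
  have h1 : IsIntegralOverIdeal ((I' ^ n).map (algebraMap A B)) (algebraMap A B x) := by
    rw [Ideal.map_pow, hI, ← hxs, mul_comm]
    exact isInt_mul _ hy
  obtain ⟨t, ht, h2⟩ := isInt_of_localization M h1
  have h3 := Ideal.mem_map_of_mem (algebraMap A B) (hk _ _ _ h2)
  rw [Ideal.map_pow, hI, map_mul, ← hxs] at h3
  rw [Ideal.unit_mul_mem_iff_mem _ (IsLocalization.map_units B ⟨t, ht⟩)] at h3
  rwa [mul_comm, Ideal.unit_mul_mem_iff_mem _ (IsLocalization.map_units B s)] at h3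

theorem sup_pow_le {R : Type*} [CommRing R] (I J : Ideal R) (n : ℕ) :
    (I ⊔ J) ^ n ≤ I ^ n ⊔ J := by
  induction n with
  | zero => simp
  | succ n ih =>
    rw [pow_succ, pow_succ]
    refine (Ideal.mul_mono_left ih).trans ?_
    rw [Ideal.sup_mul, Ideal.mul_sup]
    refine sup_le (sup_le le_sup_left fun x hx => ?_) fun x hx => ?_
    · exact Ideal.mem_sup_right (mem_right_of_mem_mul hx)
    · exact Ideal.mem_sup_right (mem_left_of_mem_mul hx)

/-- By Krull's intersection theorem, membership in an ideal can be tested modulo powers of maximal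
ideals. -/
theorem mem_of_forall_near {R : Type*} [CommRing R] [IsNoetherianRing R] (L : Ideal R) (x : R)
    (h : ∀ M : Ideal R, M.IsMaximal → ∀ t, x ∈ L ⊔ M ^ t) : x ∈ L := by
  by_contra hx
  let 𝔞 : Ideal R := L.colon {x}
  have hne : 𝔞 ≠ ⊤ := by
    intro h1
    have : (1 : R) ∈ 𝔞 := by rw [h1]; trivial
    rw [Submodule.mem_colon_singleton] at this
    exact hx (by simpa using this)
  obtain ⟨M, hM, hle⟩ := 𝔞.exists_le_maximal hne
  have h1 : (Ideal.Quotient.mk L x) ∈ (⨅ i : ℕ, M ^ i • (⊤ : Submodule R (R ⧸ L))) := by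
    rw [Submodule.mem_iInf]
    intro i
    obtain ⟨a, ha, b, hb, rfl⟩ := Submodule.mem_sup.1 (h M hM i)
    rw [map_add, Ideal.Quotient.eq_zero_iff_mem.2 ha, zero_add]
    have : Ideal.Quotient.mk L b = b • (1 : R ⧸ L) := by
      rw [Algebra.smul_def, mul_one]; rfl
    rw [this]
    exact Submodule.smul_mem_smul hb trivial
  rw [Ideal.mem_iInf_smul_pow_eq_bot_iff] at h1
  obtain ⟨r, hr⟩ := h1
  have h2 : (1 - (r : R)) ∈ 𝔞 := by
    rw [Submodule.mem_colon_singleton, ← Ideal.Quotient.eq_zero_iff_mem]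
    have : (r : R) • Ideal.Quotient.mk L x = Ideal.Quotient.mk L (r * x) := by
      rw [Algebra.smul_def, map_mul]; rfl
    rw [this] at hr
    rw [smul_eq_mul, sub_mul, one_mul, map_sub, hr, sub_self]
  have h3 := M.add_mem (hle h2) r.2
  rw [sub_add_cancel] at h3
  exact hM.ne_top ((Ideal.eq_top_iff_one _).2 h3)

theorem Near.sup {R : Type*} [CommRing R] (I : Ideal R) {M : Ideal R} (hM : M.IsMaximal) (t : ℕ) :
    Near (I ⊔ M ^ t) := ⟨M, hM, t, le_sup_right⟩

/-- It suffices to treat ideals containing a power of a maximal ideal, with a bound `k` which does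
not depend on the ideal. -/
theorem UBS.of_near {R : Type*} [CommRing R] [IsNoetherianRing R] (k : ℕ)
    (h : ∀ I : Ideal R, Near I → ∀ (n : ℕ) (x : R), IsIntegralOverIdeal (I ^ n) x →
      x ∈ I ^ (n - k)) : UBS R := by
  refine ⟨k, fun I n x hx => mem_of_forall_near _ _ fun M hM t => ?_⟩
  exact sup_pow_le _ _ _ (h _ (Near.sup I hM t) n x
    (isInt_mono (Ideal.pow_right_mono le_sup_left n) hx))

theorem UAR.of_near {R : Type*} [CommRing R] [IsNoetherianRing R] {Q : Ideal R} (k : ℕ)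
    (h : ∀ I : Ideal R, Near I → ∀ n : ℕ, I ^ n ⊓ Q ≤ I ^ (n - k) * Q) : UAR Q := by
  refine ⟨k, fun I n u hu => mem_of_forall_near _ _ fun M hM t => ?_⟩
  have h1 := h _ (Near.sup I hM t) n ⟨Ideal.pow_right_mono le_sup_left n hu.1, hu.2⟩
  refine (Ideal.mul_mono_left (sup_pow_le _ _ _)).trans ?_ h1
  rw [Ideal.sup_mul]
  exact sup_le_sup_left (fun x hx => mem_left_of_mem_mul hx) _

/-- Noetherian induction reduces uniform Artin–Rees bounds for extended ideals to extensions of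
primes. -/
theorem UAR.of_primes {D B : Type*} [CommRing D] [IsNoetherianRing D] [CommRing B]
    (f : D →+* B)
    (hf : ∀ (N : Ideal D) (z : D) (b : B), f z * b ∈ N.map f → b ∈ (N.colon {z}).map f)
    (N₀ : Ideal D) (h : ∀ P : Ideal D, P.IsPrime → N₀ ≤ P → UAR (P.map f)) :
    ∀ N : Ideal D, N₀ ≤ N → UAR (N.map f) := by
  intro N
  induction N using WellFoundedGT.induction with
  | _ N ih =>
  intro hN
  by_cases htop : N = ⊤
  · subst htop
    refine ⟨0, fun I n => ?_⟩
    rw [Ideal.map_top]; simp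
  have : Nontrivial (D ⧸ N) := Ideal.Quotient.nontrivial_iff.2 htop
  obtain ⟨P, hP⟩ := associatedPrimes.nonempty D (D ⧸ N)
  rw [AssociatedPrimes.mem_iff, isAssociatedPrime_iff] at hP
  obtain ⟨hPp, w, hw⟩ := hP
  obtain ⟨z, rfl⟩ := Ideal.Quotient.mk_surjective w
  have hPz : P = N.colon {z} := by
    rw [hw]
    ext a
    rw [Submodule.mem_colon_singleton, Submodule.mem_colon_singleton, Submodule.mem_bot,
      ← Ideal.Quotient.eq_zero_iff_mem, smul_eq_mul, map_mul, Algebra.smul_def]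
    rfl
  have hz : z ∉ N := by
    intro hz
    apply hPp.ne_top
    rw [hPz, Ideal.eq_top_iff_one, Submodule.mem_colon_singleton]
    simpa using hz
  have hlt : N < N ⊔ Ideal.span {z} := by
    refine lt_of_le_of_ne le_sup_left fun e => hz ?_
    rw [e]; exact Ideal.mem_sup_right (Ideal.mem_span_singleton_self z)
  obtain ⟨k1, hk1⟩ := ih _ hlt (hN.trans hlt.le)
  have hNP : N ≤ P := by
    rw [hPz]; intro a ha
    rw [Submodule.mem_colon_singleton]; exact N.mul_mem_right _ ha
  obtain ⟨k2, hk2⟩ := h P hPp (hN.trans hNP)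
  refine ⟨k1 + k2, fun I n u hu => ?_⟩
  have h1 := hk1 I n ⟨hu.1, Ideal.map_mono le_sup_left hu.2⟩
  rw [Ideal.map_sup, Ideal.mul_sup, Ideal.map_span, Set.image_singleton] at h1
  obtain ⟨α, hα, γ, hγ, rfl⟩ := Submodule.mem_sup.1 h1
  rw [mul_comm, Ideal.mem_span_singleton_mul] at hγ
  obtain ⟨β, hβ, rfl⟩ := hγ
  have hβP : β ∈ P.map f := by
    rw [hPz]
    apply hf
    have := Ideal.sub_mem _ hu.2 (mem_right_of_mem_mul hα)
    simpa using this
  have h2 := hk2 I _ ⟨hβ, hβP⟩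
  refine Ideal.add_mem _ ?_ ?_
  · exact Ideal.mul_mono_left (Ideal.pow_le_pow_right (by omega)) hα
  · have h3 : f z * β ∈ Ideal.span {f z} * (I ^ (n - k1 - k2) * P.map f) :=
      Ideal.mul_mem_mul (Ideal.mem_span_singleton_self _) h2
    rw [← mul_assoc, mul_comm (Ideal.span _), mul_assoc, Nat.sub_sub] at h3
    refine Ideal.mul_mono_right ?_ h3
    rw [← Set.image_singleton, ← Ideal.map_span, ← Ideal.map_mul]
    refine Ideal.map_mono (Ideal.span_singleton_mul_le_iff.2 fun p hp => ?_)
    rw [hPz, Submodule.mem_colon_singleton, smul_eq_mul, mul_comm] at hp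
    exact hp

theorem colon_id {D : Type*} [CommRing D] (N : Ideal D) (z : D) (b : D)
    (h : RingHom.id D z * b ∈ N.map (RingHom.id D)) :
    b ∈ (N.colon {z}).map (RingHom.id D) := by
  rw [Ideal.map_id] at h ⊢
  rw [Submodule.mem_colon_singleton, smul_eq_mul, mul_comm]
  exact h

/-- Colon ideals by constants commute with extension to polynomials. -/
theorem colon_mvPolynomial {D σ : Type*} [CommRing D] (N : Ideal D) (z : D)
    (b : MvPolynomial σ D)
    (h : (MvPolynomial.C : D →+* MvPolynomial σ D) z * b ∈ N.map MvPolynomial.C) :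
    b ∈ (N.colon {z}).map (MvPolynomial.C : D →+* MvPolynomial σ D) := by
  rw [MvPolynomial.mem_map_C_iff] at h ⊢
  intro m
  rw [Submodule.mem_colon_singleton, smul_eq_mul, mul_comm]
  have := h m
  rwa [MvPolynomial.coeff_C_mul] at this

/-- Passage from the quotients by minimal primes to a reduced ring. -/
theorem UBS.of_reduced {R : Type*} [CommRing R] [IsNoetherianRing R] [IsReduced R]
    (h1 : ∀ P : Ideal R, P.IsPrime → UBS (R ⧸ P)) (h2 : ∀ P : Ideal R, P.IsPrime → UAR P) :
    UBS R := by
  classical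
  have h3 : ∀ N : Ideal R, UAR N := by
    intro N
    have := UAR.of_primes (RingHom.id R) colon_id ⊥
      (fun P hP _ => by rw [Ideal.map_id]; exact h2 P hP) N bot_le
    rwa [Ideal.map_id] at this
  have key : ∀ s : Finset (Ideal R), (∀ P ∈ s, P.IsPrime) → ∃ k, ∀ (I : Ideal R)
      (n : ℕ) (x : R), IsIntegralOverIdeal (I ^ n) x → x ∈ I ^ (n - k) ⊔ s.inf id := by
    intro s
    induction s using Finset.induction_on with
    | empty => intro _; exact ⟨0, fun I n x _ => by simp⟩
    | insert P s hPs ih =>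
      intro hs
      obtain ⟨k2, hk2⟩ := ih fun P' hP' => hs P' (Finset.mem_insert_of_mem hP')
      obtain ⟨k1, hk1⟩ := h1 P (hs P (Finset.mem_insert_self _ _))
      obtain ⟨k3, hk3⟩ := h3 (P ⊔ s.inf id)
      refine ⟨k1 + k2 + k3, fun I n x hx => ?_⟩
      have hx1 := isInt_map (Ideal.Quotient.mk P) hx
      rw [Ideal.map_pow] at hx1
      have hx1 := hk1 _ _ _ hx1
      rw [← Ideal.map_pow] at hx1
      obtain ⟨a, ha, hax⟩ := (Ideal.mem_map_iff_of_surjective (Ideal.Quotient.mk P)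
        Ideal.Quotient.mk_surjective).1 hx1
      have hp : x - a ∈ P := Ideal.Quotient.eq.1 hax.symm
      obtain ⟨b, hb, m, hm, hbm⟩ := Submodule.mem_sup.1 (hk2 I n x hx)
      have hab : a - b ∈ I ^ (n - (k1 + k2)) :=
        sub_mem (Ideal.pow_le_pow_right (by omega) ha) (Ideal.pow_le_pow_right (by omega) hb)
      have hab2 : a - b ∈ P ⊔ s.inf id := by
        have : a - b = -(x - a) + m := by rw [← hbm]; ring
        rw [this]
        exact add_mem (neg_mem (Ideal.mem_sup_left hp)) (Ideal.mem_sup_right hm)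
      have h4 := hk3 I _ ⟨hab, hab2⟩
      rw [Ideal.mul_sup, Nat.sub_sub] at h4
      obtain ⟨α, hα, β, hβ, hαβ⟩ := Submodule.mem_sup.1 h4
      have e : x = (a - α) + (x - a + α) := by ring
      rw [e]
      refine add_mem (Ideal.mem_sup_left (sub_mem (Ideal.pow_le_pow_right (by omega) ha)
        (mem_left_of_mem_mul hα))) (Ideal.mem_sup_right ?_)
      rw [Finset.inf_insert]
      refine ⟨add_mem hp (mem_right_of_mem_mul hα), ?_⟩
      have : x - a + α = m - β := by linear_combination hαβ - hbm
      rw [this]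
      exact sub_mem hm (mem_right_of_mem_mul hβ)
  obtain ⟨k, hk⟩ := key (minimalPrimes.finite_of_isNoetherianRing R).toFinset
    (fun P hP => ((minimalPrimes.finite_of_isNoetherianRing R).mem_toFinset.1 hP).1.1)
  refine ⟨k, fun I n x hx => ?_⟩
  have := hk I n x hx
  have h0 : (minimalPrimes.finite_of_isNoetherianRing R).toFinset.inf id = (⊥ : Ideal R) := by
    rw [Finset.inf_id_eq_sInf, Set.Finite.coe_toFinset, minimalPrimes, Ideal.sInf_minimalPrimes]
    exact nilradical_eq_zero R
  rwa [h0, sup_bot_eq] at this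

end Uniform

/-! ### Uniform Artin–Rees bounds along evaluation maps and flat descent -/

section ArtinRees

/-- All polynomial rings over `E` in finitely many variables have the uniform Briançon–Skoda
property. -/
def PUBS (E : Type*) [CommRing E] : Prop := ∀ s : ℕ, UBS (MvPolynomial (Fin s) E)

/-- The uniform Artin–Rees properties of `ker π` and of `Q` give that of the preimage of `Q`. -/
theorem UAR.comp {G F : Type*} [CommRing G] [CommRing F] (π : G →+* F)
    (hπ : Function.Surjective π) (h1 : UAR (RingHom.ker π)) {Q : Ideal F} (h2 : UAR Q) :
    UAR (Q.comap π) := by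
  obtain ⟨k1, hk1⟩ := h1
  obtain ⟨k2, hk2⟩ := h2
  refine ⟨k2 + k1, fun I n u hu => ?_⟩
  have h3 := hk2 (I.map π) n ⟨by rw [← Ideal.map_pow]; exact Ideal.mem_map_of_mem _ hu.1, hu.2⟩
  have e : I.map π ^ (n - k2) * Q = (I ^ (n - k2) * Q.comap π).map π := by
    rw [Ideal.map_mul, Ideal.map_pow, Ideal.map_comap_of_surjective π hπ]
  rw [e, Ideal.mem_map_iff_of_surjective π hπ] at h3
  obtain ⟨w, hw, hwu⟩ := h3
  have hv : u - w ∈ I ^ (n - k2 - k1) * RingHom.ker π := by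
    refine hk1 I _ ⟨sub_mem (Ideal.pow_le_pow_right (by omega) hu.1) (mem_left_of_mem_mul hw), ?_⟩
    rw [SetLike.mem_coe, RingHom.mem_ker, map_sub, hwu, sub_self]
  rw [Nat.sub_sub] at hv
  rw [← sub_add_cancel u w]
  refine add_mem (Ideal.mul_mono_right (Ideal.comap_mono bot_le) hv)
    (Ideal.mul_mono_left (Ideal.pow_le_pow_right (by omega)) hw)

theorem UAR.of_comap {G F : Type*} [CommRing G] [CommRing F] (π : G →+* F)
    (hπ : Function.Surjective π) {Q : Ideal F} (h : UAR (Q.comap π)) : UAR Q := by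
  obtain ⟨k, hk⟩ := h
  refine ⟨k, fun I n u hu => ?_⟩
  have hI := Ideal.map_comap_of_surjective π hπ I
  have h1 : u ∈ I ^ n := hu.1
  rw [← hI, ← Ideal.map_pow, Ideal.mem_map_iff_of_surjective π hπ] at h1
  obtain ⟨w, hw, rfl⟩ := h1
  have h2 := Ideal.mem_map_of_mem π (hk _ n ⟨hw, hu.2⟩)
  rwa [Ideal.map_mul, Ideal.map_pow, hI, Ideal.map_comap_of_surjective π hπ] at h2

/-- The polynomial `X + b` is monic, hence a nonzerodivisor modulo `a`. -/
theorem linear_dvd {V : Type*} [CommRing V] {a b : V} {g : Polynomial V}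
    (h : Polynomial.C a ∣ (Polynomial.X + Polynomial.C b) * g) : Polynomial.C a ∣ g := by
  have h1 : ((Polynomial.X + Polynomial.C b) * g).map (Ideal.Quotient.mk (Ideal.span {a})) = 0 := by
    obtain ⟨w, hw⟩ := h
    rw [hw, Polynomial.map_mul, Polynomial.map_C,
      Ideal.Quotient.eq_zero_iff_mem.2 (Ideal.mem_span_singleton_self a), map_zero, zero_mul]
  rw [Polynomial.map_mul, Polynomial.map_add, Polynomial.map_X, Polynomial.map_C,
    Polynomial.Monic.mul_right_eq_zero_iff (Polynomial.monic_X_add_C _)] at h1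
  rw [Polynomial.C_dvd_iff_dvd_coeff]
  intro i
  have := congrArg (Polynomial.coeff · i) h1
  simpa [Polynomial.coeff_map, Ideal.Quotient.eq_zero_iff_mem, Ideal.mem_span_singleton] using this

/-- If `(z - ξ) u` lies in `𝔄 ^ n`, then `u` is integral over `𝔄 ^ (n - 1)`: at a valuation
where `𝔄` is generated by `a`, deform the evaluation of `z` to `z + a s`. -/
theorem isInt_of_linear_mul {E : Type u} [CommRing E] [IsDomain E] [IsNoetherianRing E]
    (ξ : E) (𝔄 : Ideal (Polynomial E)) (n : ℕ) (u : Polynomial E)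
    (h : (Polynomial.X - Polynomial.C ξ) * u ∈ 𝔄 ^ n) : IsIntegralOverIdeal (𝔄 ^ (n - 1)) u := by
  refine isInt_of_valuations fun V _ _ _ φ hφ => ?_
  rcases Nat.eq_zero_or_pos n with rfl | hn
  · simp [Ideal.one_eq_top, Ideal.map_top]
  obtain ⟨a0, -, ha⟩ := fg_map_principal φ (IsNoetherian.noetherian 𝔄)
  set a := φ a0
  -- `θ` evaluates `X` at `φ X + a s`, where `s` is the new variable.
  let θ : Polynomial E →+* Polynomial V :=
    Polynomial.eval₂RingHom (Polynomial.C.comp (φ.comp Polynomial.C))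
      (Polynomial.C (φ Polynomial.X) + Polynomial.C a * Polynomial.X)
  have hθ0 : (Polynomial.constantCoeff).comp θ = φ := by
    apply Polynomial.ringHom_ext
    · intro r; simp [θ]
    · simp [θ]
  have hθa : (Ideal.Quotient.mk (Ideal.span {Polynomial.C a})).comp θ =
      ((Ideal.Quotient.mk (Ideal.span {Polynomial.C a})).comp Polynomial.C).comp φ := by
    apply Polynomial.ringHom_ext
    · intro r; simp [θ]
    · have : Ideal.Quotient.mk (Ideal.span {Polynomial.C a}) (Polynomial.C a) = 0 :=
        Ideal.Quotient.eq_zero_iff_mem.2 (Ideal.mem_span_singleton_self _)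
      simp [θ, this]
  have hθ𝔄 : 𝔄.map θ ≤ Ideal.span {Polynomial.C a} := by
    rw [Ideal.map_le_iff_le_comap]
    intro f hf
    rw [Ideal.mem_comap, ← Ideal.Quotient.eq_zero_iff_mem]
    have h1 := RingHom.congr_fun hθa f
    simp only [RingHom.comp_apply] at h1
    rw [h1, Ideal.Quotient.eq_zero_iff_mem, Ideal.mem_span_singleton]
    have h2 := Ideal.mem_map_of_mem φ hf
    rw [ha, Ideal.mem_span_singleton] at h2
    exact map_dvd _ h2
  have h3 : Polynomial.C (a ^ n) ∣ θ (Polynomial.X - Polynomial.C ξ) * θ u := by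
    have := Ideal.mem_map_of_mem θ h
    rw [Ideal.map_pow] at this
    have := Ideal.pow_right_mono hθ𝔄 n this
    rw [Ideal.span_singleton_pow, Ideal.mem_span_singleton, map_mul] at this
    rwa [Polynomial.C_pow]
  have h4 : θ (Polynomial.X - Polynomial.C ξ) =
      Polynomial.C (φ (Polynomial.X - Polynomial.C ξ)) + Polynomial.C a * Polynomial.X := by
    simp [θ]; ring
  set ζ := φ (Polynomial.X - Polynomial.C ξ)
  have hζ : ζ ≠ 0 := by
    intro h0
    exact Polynomial.X_sub_C_ne_zero ξ (hφ (by rw [map_zero]; exact h0))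
  have hu0 : φ u = (θ u).coeff 0 := by
    have := RingHom.congr_fun hθ0 u
    rw [← this]; rfl
  rw [Ideal.map_pow, ha, Ideal.span_singleton_pow, Ideal.mem_span_singleton, hu0]
  have hpow : a ^ n = a * a ^ (n - 1) := by rw [← pow_succ']; congr 1; omega
  -- Either `a` or `ζ` divides out of `ζ + a s`, leaving `s + b` or `1 + b s`; neither is a zero
  -- divisor modulo powers of `a`.
  rcases ValuationRing.dvd_total a ζ with ⟨b, hb⟩ | ⟨b, hb⟩
  · have ha0 : a ≠ 0 := by rintro h0; rw [h0, zero_mul] at hb; exact hζ hb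
    have h5 : Polynomial.C (a ^ (n - 1)) ∣ (Polynomial.X + Polynomial.C b) * θ u := by
      have e : θ (Polynomial.X - Polynomial.C ξ) * θ u =
          Polynomial.C a * ((Polynomial.X + Polynomial.C b) * θ u) := by
        rw [h4, hb, Polynomial.C_mul]; ring
      rw [e, hpow, Polynomial.C_mul] at h3
      exact (mul_dvd_mul_iff_left (by simpa using ha0)).1 h3
    have h6 := linear_dvd h5
    rw [Polynomial.C_dvd_iff_dvd_coeff] at h6
    exact h6 0
  · have h5 : Polynomial.C (a ^ (n - 1)) ∣ (1 + Polynomial.C b * Polynomial.X) * θ u := by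
      have e : θ (Polynomial.X - Polynomial.C ξ) * θ u =
          Polynomial.C ζ * ((1 + Polynomial.C b * Polynomial.X) * θ u) := by
        rw [h4, hb, Polynomial.C_mul]; ring
      rw [e, hpow] at h3
      have h7 : Polynomial.C ζ * Polynomial.C (a ^ (n-1)) ∣ Polynomial.C (a * a ^ (n - 1)) := by
        rw [← Polynomial.C_mul]
        refine map_dvd _ (mul_dvd_mul_right ⟨b, hb⟩ _)
      exact (mul_dvd_mul_iff_left (by simpa using hζ)).1 (h7.trans h3)
    rw [Polynomial.C_dvd_iff_dvd_coeff] at h5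
    simpa [add_mul, mul_assoc, Polynomial.coeff_C_mul] using h5 0

theorem uar_ker_eval_one {E : Type u} [CommRing E] [IsDomain E] [IsNoetherianRing E]
    (h : UBS (Polynomial E)) (ξ : E) : UAR (RingHom.ker (Polynomial.evalRingHom ξ)) := by
  obtain ⟨k, hk⟩ := h
  refine ⟨1 + k, fun I n v hv => ?_⟩
  have h1 : v.IsRoot ξ := hv.2
  obtain ⟨u, rfl⟩ := Polynomial.dvd_iff_isRoot.2 h1
  have h2 := hk I _ u (isInt_of_linear_mul ξ I n u hv.1)
  rw [Nat.sub_sub] at h2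
  rw [mul_comm (Polynomial.X - _)]
  exact Ideal.mul_mem_mul h2 (by simp [RingHom.mem_ker])

/-- The proof is by induction on the number of variables, with one evaluation at a time. -/
theorem uar_ker_eval {E : Type u} [CommRing E] [IsDomain E] [IsNoetherianRing E]
    (h : PUBS E) : ∀ (N : ℕ) (ξ : Fin N → E), UAR (RingHom.ker (MvPolynomial.eval ξ)) := by
  intro N
  induction N with
  | zero =>
    intro ξ
    refine ⟨0, fun I n v hv => ?_⟩
    have : v = 0 := by
      have h1 : MvPolynomial.eval ξ v = 0 := hv.2
      rw [MvPolynomial.eq_C_of_isEmpty v] at h1 ⊢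
      rw [MvPolynomial.eval_C] at h1
      rw [h1, map_zero]
    rw [this]; exact zero_mem _
  | succ N ih =>
    intro ξ
    let e := MvPolynomial.finSuccEquiv E N
    let ev : MvPolynomial (Fin (N+1)) E →+* MvPolynomial (Fin N) E :=
      (Polynomial.evalRingHom (MvPolynomial.C (ξ 0))).comp (e : _ →+* _)
    have hev : Function.Surjective ev := fun x =>
      ⟨e.symm (Polynomial.C x), by simp [ev]⟩
    have h1 : UAR (RingHom.ker ev) := by
      have h2 : UBS (Polynomial (MvPolynomial (Fin N) E)) := (h (N+1)).of_equiv e.toRingEquiv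
      have h3 := uar_ker_eval_one h2 (MvPolynomial.C (ξ 0))
      refine UAR.of_comap (e.symm.toRingEquiv.toRingHom) e.symm.surjective ?_
      convert h3 using 1
      ext x
      simp [RingHom.mem_ker, ev]
    have h4 := UAR.comp ev hev h1 (ih (fun i => ξ i.succ))
    convert h4 using 1
    rw [RingHom.comap_ker]
    congr 1
    apply MvPolynomial.ringHom_ext
    · intro r
      have h5 : e (MvPolynomial.C r) = Polynomial.C (MvPolynomial.C r) :=
        (MvPolynomial.finSuccEquiv_apply E N _).trans (MvPolynomial.eval₂Hom_C _ _ _)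
      simp [ev, h5]
    · intro i
      refine Fin.cases ?_ (fun i => ?_) i
      · simp [ev, e, MvPolynomial.finSuccEquiv_X_zero]
      · simp [ev, e, MvPolynomial.finSuccEquiv_X_succ]

theorem mem_map_mul_exists {R F : Type*} [CommRing R] [CommRing F] [Algebra R F] (N : Ideal R)
    (K : Ideal F) (x : F) (hx : x ∈ N.map (algebraMap R F) * K) :
    ∃ (ι : Type) (_ : Fintype ι) (a : ι → R) (κ : ι → F), (∀ i, a i ∈ N) ∧ (∀ i, κ i ∈ K) ∧
      x = ∑ i, a i • κ i := by
  have hadd : ∀ x y : F, (∃ (ι : Type) (_ : Fintype ι) (a : ι → R) (κ : ι → F), (∀ i, a i ∈ N) ∧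
      (∀ i, κ i ∈ K) ∧ x = ∑ i, a i • κ i) → (∃ (ι : Type) (_ : Fintype ι) (a : ι → R) (κ : ι → F),
      (∀ i, a i ∈ N) ∧ (∀ i, κ i ∈ K) ∧ y = ∑ i, a i • κ i) →
      (∃ (ι : Type) (_ : Fintype ι) (a : ι → R) (κ : ι → F), (∀ i, a i ∈ N) ∧ (∀ i, κ i ∈ K) ∧
      x + y = ∑ i, a i • κ i) := by
    rintro x y ⟨ι, _, a, κ, ha, hκ, rfl⟩ ⟨ι', _, a', κ', ha', hκ', rfl⟩
    exact ⟨ι ⊕ ι', inferInstance, Sum.elim a a', Sum.elim κ κ', by simpa using ⟨ha, ha'⟩,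
      by simpa using ⟨hκ, hκ'⟩, by simp⟩
  refine Submodule.mul_induction_on hx (fun m hm n hn => ?_) hadd
  refine Submodule.span_induction (fun y hy => ?_) ?_ (fun y z _ _ hy hz => ?_)
    (fun c y _ hy => ?_) hm
  · obtain ⟨r, hr, rfl⟩ := hy
    exact ⟨Unit, inferInstance, fun _ => r, fun _ => n, fun _ => hr, fun _ => hn,
      by simp [Algebra.smul_def]⟩
  · exact ⟨Empty, inferInstance, fun i => i.elim, fun i => i.elim, fun i => i.elim,
      fun i => i.elim, by simp⟩
  · rw [add_mul]; exact hadd _ _ hy hz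
  · obtain ⟨ι, _, a, κ, ha, hκ, he⟩ := hy
    refine ⟨ι, inferInstance, a, fun i => c * κ i, ha, fun i => K.mul_mem_left _ (hκ i), ?_⟩
    rw [smul_eq_mul, mul_assoc, he, Finset.mul_sum]
    exact Finset.sum_congr rfl fun i _ => by rw [mul_smul_comm]

/-- Descent of memberships along a flat ring map that has a partial retraction, by the
equational criterion for flatness. -/
theorem flat_descent {R F E : Type*} [CommRing R] [CommRing F] [CommRing E] [Algebra R F]
    [Module.Flat R F] (π : F →+* E) (hπ : Function.Surjective (π.comp (algebraMap R F)))
    (N : Ideal R) (u : R) (hu : u ∈ N)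
    (h : algebraMap R F u ∈ N.map (algebraMap R F) * RingHom.ker π) :
    u ∈ N * RingHom.ker (π.comp (algebraMap R F)) := by
  obtain ⟨ι, _, a, κ, ha, hκ, he⟩ := mem_map_mul_exists _ _ _ h
  have hrel : ∑ i : Option ι, (Option.elim i u (fun j => - a j)) •
      (Option.elim i (1 : F) κ) = 0 := by
    rw [Fintype.sum_option]
    simp only [Option.elim_none, Option.elim_some, neg_smul, Finset.sum_neg_distrib, ← he]
    rw [Algebra.smul_def, mul_one, add_neg_cancel]
  obtain ⟨k, c, y, h1, h2⟩ := Module.Flat.isTrivialRelation_of_sum_smul_eq_zero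
    (R := R) (M := F) hrel
  choose η hη using fun j => hπ (π (y j))
  have hQ : ∀ i, π (Option.elim i (1 : F) κ) =
      (π.comp (algebraMap R F)) (∑ j, c i j * η j) := by
    intro i
    rw [show i.elim 1 κ = _ from h1 i, map_sum, map_sum]
    refine Finset.sum_congr rfl fun j _ => ?_
    rw [Algebra.smul_def, map_mul, map_mul, hη]; rfl
  have e : u = u * (1 - ∑ j, c none j * η j) + ∑ i, a i * ∑ j, c (some i) j * η j := by
    have : u * ∑ j, c none j * η j = ∑ i, a i * ∑ j, c (some i) j * η j := by
      simp only [Finset.mul_sum]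
      rw [Finset.sum_comm]
      refine Finset.sum_congr rfl fun j _ => ?_
      have := h2 j
      rw [Fintype.sum_option] at this
      simp only [Option.elim_none, Option.elim_some, neg_mul, Finset.sum_neg_distrib] at this
      rw [← mul_assoc, eq_of_sub_eq_zero ((sub_eq_add_neg _ _).trans this), Finset.sum_mul]
      exact Finset.sum_congr rfl fun i _ => by ring
    rw [← this]; ring
  rw [e]
  refine add_mem (Ideal.mul_mem_mul hu ?_) (sum_mem fun i _ => Ideal.mul_mem_mul (ha i) ?_)
  · rw [RingHom.mem_ker, map_sub, ← hQ none]
    simp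
  · rw [RingHom.mem_ker, ← hQ (some i)]
    exact hκ i

attribute [local instance] MvPolynomial.algebraMvPolynomial

theorem flat_mvPolynomial {Λ E σ : Type*} [CommRing Λ] [CommRing E] [Algebra Λ E]
    [Module.Flat Λ E] : Module.Flat (MvPolynomial σ Λ) (MvPolynomial σ E) := by
  have h : Algebra.IsPushout Λ (MvPolynomial σ Λ) E (MvPolynomial σ E) := inferInstance
  exact Module.Flat.isBaseChange (R := Λ) (S := MvPolynomial σ Λ) (M := E) _ h.out

/-- The kernel of a presentation of a flat algebra by polynomials. -/
theorem uar_ker_aeval {Λ : Type*} {E : Type u} [CommRing Λ] [CommRing E] [IsDomain E]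
    [IsNoetherianRing E] [Algebra Λ E] [Module.Flat Λ E] (h : PUBS E) (N : ℕ) (ξ : Fin N → E)
    (hξ : Function.Surjective (MvPolynomial.aeval (R := Λ) ξ)) :
    UAR (RingHom.ker (MvPolynomial.aeval (R := Λ) ξ)) := by
  obtain ⟨k, hk⟩ := uar_ker_eval h N ξ
  refine ⟨k, fun I n u hu => ?_⟩
  have := flat_mvPolynomial (Λ := Λ) (E := E) (σ := Fin N)
  have hcomp : (MvPolynomial.eval ξ).comp (algebraMap (MvPolynomial (Fin N) Λ)
      (MvPolynomial (Fin N) E)) = (MvPolynomial.aeval (R := Λ) ξ : _ →+* E) := by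
    apply MvPolynomial.ringHom_ext
    · intro r
      change MvPolynomial.eval ξ (MvPolynomial.map (algebraMap Λ E) (MvPolynomial.C r)) =
        MvPolynomial.aeval (R := Λ) ξ (MvPolynomial.C r)
      rw [MvPolynomial.map_C, MvPolynomial.eval_C, MvPolynomial.aeval_C]
    · intro i
      change MvPolynomial.eval ξ (MvPolynomial.map (algebraMap Λ E) (MvPolynomial.X i)) =
        MvPolynomial.aeval (R := Λ) ξ (MvPolynomial.X i)
      rw [MvPolynomial.map_X, MvPolynomial.eval_X, MvPolynomial.aeval_X]
  have hcomp' : RingHom.ker ((MvPolynomial.eval ξ).comp (algebraMap (MvPolynomial (Fin N) Λ)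
      (MvPolynomial (Fin N) E))) = RingHom.ker (MvPolynomial.aeval (R := Λ) ξ) := by
    rw [hcomp]; rfl
  rw [← hcomp'] at hu ⊢
  refine flat_descent _ (by rw [hcomp]; exact hξ) _ _ (Ideal.pow_le_pow_right (by omega) hu.1) ?_
  rw [Ideal.map_pow]
  refine hk _ n ⟨?_, hu.2⟩
  rw [← Ideal.map_pow]
  exact Ideal.mem_map_of_mem _ hu.1

end ArtinRees

/-! ### Bounded reductions -/

section Reduction

theorem dim_quot_poly {T T' : Type*} [CommRing T] [IsDomain T] [IsNoetherianRing T] [CommRing T']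
    (d : ℕ) (hT : ringKrullDim T ≤ d) (φ : Polynomial T →+* T') (hφ : Function.Surjective φ)
    (f : Polynomial T) (hf : f ≠ 0) (hf0 : φ f = 0) : ringKrullDim T' ≤ d := by
  have h1 := ringKrullDim_succ_le_of_surjective φ hφ (mem_nonZeroDivisors_of_ne_zero hf) hf0
  rw [Polynomial.ringKrullDim_of_isNoetherianRing] at h1
  have h2 : ringKrullDim T' + 1 ≤ (d : WithBot ℕ∞) + 1 := h1.trans (by gcongr)
  generalize ringKrullDim T' = a at h2
  cases a with
  | bot => exact bot_le
  | coe a =>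
    cases a with
    | top => exfalso; revert h2; norm_cast; simp
    | coe a =>
      have h3 : a + 1 ≤ d + 1 := by exact_mod_cast h2
      have h4 : a ≤ d := by omega
      exact_mod_cast h4

/-- Adjoining finitely many algebraic elements to a noetherian subring of a domain does not
increase the dimension. -/
theorem dim_adjoin_algebraic {L : Type*} [CommRing L] [IsDomain L] (S : Subring L)
    [IsNoetherianRing S] (d : ℕ) (hd : ringKrullDim S ≤ d) (s : Finset L)
    (hs : ∀ b ∈ s, ∃ f : Polynomial L, f ≠ 0 ∧ (∀ n, f.coeff n ∈ S) ∧ f.eval b = 0) :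
    IsNoetherianRing (S ⊔ Subring.closure (s : Set L) : Subring L) ∧
      ringKrullDim (S ⊔ Subring.closure (s : Set L) : Subring L) ≤ d := by
  classical
  induction s using Finset.induction_on with
  | empty =>
    have : S ⊔ Subring.closure ((∅ : Finset L) : Set L) = S := by
      rw [Finset.coe_empty, Subring.closure_empty]; exact sup_bot_eq _
    rw [this]; exact ⟨inferInstance, hd⟩
  | insert b s hb ih =>
    obtain ⟨h1, h2⟩ := ih fun b hb => hs b (Finset.mem_insert_of_mem hb)
    set T := S ⊔ Subring.closure (s : Set L) with hT
    obtain ⟨f, hf0, hfS, hfb⟩ := hs b (Finset.mem_insert_self _ _)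
    let φ : Polynomial T →+* L := Polynomial.eval₂RingHom T.subtype b
    have hr : φ.range = S ⊔ Subring.closure ((insert b s : Finset L) : Set L) := by
      apply le_antisymm
      · rintro _ ⟨g, rfl⟩
        change Polynomial.eval₂ _ _ _ ∈ _
        rw [Polynomial.eval₂_eq_sum_range]
        refine sum_mem fun i _ => mul_mem ?_ (pow_mem ?_ _)
        · refine (sup_le_sup_left (Subring.closure_mono ?_) S : T ≤ _) (g.coeff i).2
          simp
        · exact (le_sup_right : _ ≤ S ⊔ _) (Subring.subset_closure (by simp))
      · have hTφ : T ≤ φ.range := fun t ht => ⟨Polynomial.C ⟨t, ht⟩, by simp [φ]⟩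
        refine sup_le (le_sup_left.trans hTφ) ?_
        rw [Subring.closure_le, Finset.coe_insert, Set.insert_subset_iff]
        refine ⟨⟨Polynomial.X, by simp [φ]⟩, ?_⟩
        exact (Subring.subset_closure.trans (SetLike.coe_subset_coe.2 le_sup_right)).trans
          (SetLike.coe_subset_coe.2 hTφ)
    rw [← hr]
    have hfT : (↑f.coeffs : Set L) ⊆ T := by
      intro c hc
      obtain ⟨n, _, rfl⟩ := Polynomial.mem_coeffs_iff.1 hc
      exact (le_sup_left : S ≤ T) (hfS n)
    refine ⟨isNoetherianRing_of_surjective _ _ φ.rangeRestrict φ.rangeRestrict_surjective, ?_⟩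
    refine dim_quot_poly d h2 φ.rangeRestrict φ.rangeRestrict_surjective (f.toSubring T hfT) ?_ ?_
    · intro h0
      apply hf0
      have := Polynomial.map_toSubring f T hfT
      rw [h0, Polynomial.map_zero] at this
      exact this.symm
    · apply Subtype.ext
      change Polynomial.eval₂ T.subtype b (f.toSubring T hfT) = 0
      rw [← Polynomial.eval_map, Polynomial.map_toSubring f T hfT, hfb]

theorem reesAlgebra_dim {A : Type*} [CommRing A] [IsDomain A] [IsNoetherianRing A] (d : ℕ)
    (hd : ringKrullDim A ≤ d) (I : Ideal A) :
    ringKrullDim (reesAlgebra I) ≤ (d + 1 : ℕ) := by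
  classical
  obtain ⟨s, hs⟩ : I.FG := IsNoetherian.noetherian I
  have hpoly : ringKrullDim (Polynomial A) ≤ (d + 1 : ℕ) := by
    rw [Polynomial.ringKrullDim_of_isNoetherianRing]; push_cast; gcongr
  -- an element `a` of `I` such that `a` divides zero only if `I = 0`
  obtain ⟨a, haI, ha⟩ : ∃ a ∈ I, a = 0 → I = ⊥ := by
    by_cases h : I = ⊥
    · exact ⟨0, zero_mem _, fun _ => h⟩
    · obtain ⟨a, h1, h2⟩ := Submodule.exists_mem_ne_zero_of_ne_bot h
      exact ⟨a, h1, fun h => absurd h h2⟩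
  let φ : Polynomial A →+* Polynomial A :=
    Polynomial.eval₂RingHom Polynomial.C (Polynomial.C a * Polynomial.X)
  have hn : IsNoetherianRing φ.range :=
    isNoetherianRing_of_surjective _ _ φ.rangeRestrict φ.rangeRestrict_surjective
  have hdim : ringKrullDim φ.range ≤ (d + 1 : ℕ) :=
    (ringKrullDim_le_of_surjective φ.rangeRestrict φ.rangeRestrict_surjective).trans hpoly
  have hC : ∀ r, Polynomial.C r ∈ φ.range := fun r => ⟨Polynomial.C r, by simp [φ]⟩
  have hX : Polynomial.C a * Polynomial.X ∈ φ.range := ⟨Polynomial.X, by simp [φ]⟩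
  let s' : Finset (Polynomial A) := s.image (fun b => Polynomial.C b * Polynomial.X)
  have key := dim_adjoin_algebraic φ.range (d + 1) hdim s' (by
    intro f hf
    obtain ⟨b, hb, rfl⟩ := Finset.mem_image.1 hf
    by_cases ha0 : a = 0
    · have hI := ha ha0
      have hb : b ∈ I := by rw [← hs]; exact Ideal.subset_span hb
      rw [hI] at hb
      refine ⟨Polynomial.X, Polynomial.X_ne_zero, fun n => ?_, ?_⟩
      · rw [Polynomial.coeff_X]; split_ifs
        · exact one_mem _
        · exact zero_mem _
      · simp [(Submodule.mem_bot A).1 hb]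
    · refine ⟨Polynomial.C (Polynomial.C a) * Polynomial.X -
        Polynomial.C (Polynomial.C b * (Polynomial.C a * Polynomial.X)), ?_, fun n => ?_, ?_⟩
      · intro h0
        have := congrArg (fun f => f.coeff 1) h0
        simp [Polynomial.coeff_C] at this
        exact ha0 this
      · rw [Polynomial.coeff_sub, Polynomial.coeff_C_mul, Polynomial.coeff_X, Polynomial.coeff_C]
        refine sub_mem (mul_mem (hC a) ?_) ?_
        · split_ifs
          · exact one_mem _
          · exact zero_mem _
        · split_ifs
          · exact mul_mem (hC b) hX
          · exact zero_mem _
      · simp; ring)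
  have hle : (φ.range ⊔ Subring.closure (s' : Set (Polynomial A)) : Subring (Polynomial A)) =
      (reesAlgebra I).toSubring := by
    apply le_antisymm
    · apply sup_le
      · rintro _ ⟨g, rfl⟩
        change Polynomial.eval₂ _ _ _ ∈ reesAlgebra I
        rw [Polynomial.eval₂_eq_sum_range]
        refine sum_mem fun i _ => mul_mem ((reesAlgebra I).algebraMap_mem _) (pow_mem ?_ _)
        rw [Polynomial.C_mul_X_eq_monomial]
        exact reesAlgebra.monomial_mem.2 (by simpa using haI)
      · rw [Subring.closure_le]
        intro f hf
        obtain ⟨b, hb, rfl⟩ := Finset.mem_image.1 hf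
        change _ ∈ reesAlgebra I
        simp only [Polynomial.C_mul_X_eq_monomial]
        exact reesAlgebra.monomial_mem.2 (by
          rw [pow_one, ← hs]; exact Ideal.subset_span hb)
    · set W := (φ.range ⊔ Subring.closure (s' : Set (Polynomial A)) : Subring (Polynomial A))
      have hCW : ∀ r, Polynomial.C r ∈ W := fun r => (le_sup_left : φ.range ≤ W) (hC r)
      have hmon : ∀ b ∈ I, Polynomial.C b * Polynomial.X ∈ W := by
        intro b hb
        rw [← hs] at hb
        induction hb using Submodule.span_induction with
        | mem b hb =>
          exact (le_sup_right : _ ≤ W) (Subring.subset_closure (Finset.mem_image_of_mem _ hb))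
        | zero => simp
        | add x y _ _ hx hy => rw [map_add, add_mul]; exact add_mem hx hy
        | smul r x _ hx => rw [smul_eq_mul, map_mul, mul_assoc]; exact mul_mem (hCW r) hx
      intro f hf0
      have hf : f ∈ reesAlgebra I := hf0
      clear hf0
      rw [← adjoin_monomial_eq_reesAlgebra] at hf
      induction hf using Algebra.adjoin_induction with
      | mem f hf =>
        obtain ⟨b, hb, rfl⟩ := hf
        rw [← Polynomial.C_mul_X_eq_monomial]; exact hmon b hb
      | algebraMap r => exact hCW r
      | add x y _ _ hx hy => exact add_mem hx hy
      | mul x y _ _ hx hy => exact mul_mem hx hy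
  rw [hle] at key
  exact key.2

/-- Prime avoidance inside `I`, by means of elements `e i` with pairwise unit differences; the
ideals to be avoided need not be prime. -/
theorem exists_avoid {A : Type*} [CommRing A] (e : ℕ → A)
    (he : ∀ i j, i ≠ j → IsUnit (e i - e j)) (I : Ideal A) (s : Finset (Ideal A))
    (hs : ∀ P ∈ s, ¬ I ≤ P) : ∃ a ∈ I, ∀ P ∈ s, a ∉ P := by
  classical
  induction s using Finset.induction_on with
  | empty => exact ⟨0, zero_mem _, by simp⟩
  | insert P s hP ih =>
    obtain ⟨c, hcI, hc⟩ := ih fun Q hQ => hs Q (Finset.mem_insert_of_mem hQ)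
    by_cases hcP : c ∈ P
    swap
    · exact ⟨c, hcI, by simpa [hcP] using hc⟩
    obtain ⟨a, haI, haP⟩ := Set.not_subset.1 (hs P (Finset.mem_insert_self _ _))
    have key : ∃ k : ℕ, ∀ Q ∈ insert P s, a + e k * c ∉ Q := by
      by_contra hcon
      push Not at hcon
      choose Q hQ hQ' using hcon
      obtain ⟨i, j, hij, hQij⟩ := Finite.exists_ne_map_eq_of_infinite
        (fun k => (⟨Q k, hQ k⟩ : (insert P s : Finset (Ideal A))))
      have hQij : Q i = Q j := congrArg Subtype.val hQij
      have h1 : (e i - e j) * c ∈ Q i := by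
        have := sub_mem (hQ' i) (hQij ▸ hQ' j : a + e j * c ∈ Q i)
        have e : (e i - e j) * c = a + e i * c - (a + e j * c) := by ring
        rw [e]; exact this
      have h2 : c ∈ Q i := (Ideal.unit_mul_mem_iff_mem _ (he i j hij)).1 h1
      rcases Finset.mem_insert.1 (hQ i) with h | h
      · have := hQ' i
        rw [h] at this h2
        exact haP ((Ideal.add_mem_iff_left _ (Ideal.mul_mem_left _ _ h2)).1 this)
      · exact hc _ h h2
    obtain ⟨k, hk⟩ := key
    exact ⟨_, add_mem haI (Ideal.mul_mem_left _ _ hcI), hk⟩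

/-- Over an infinite supply of elements with pairwise unit differences, an ideal of a noetherian
domain of dimension at most `d` has a reduction generated by `d + 2` elements. -/
theorem bounded_reduction {A : Type u} [CommRing A] [IsDomain A] [IsNoetherianRing A] (d : ℕ)
    (hd : ringKrullDim A ≤ d) (e : ℕ → A) (he : ∀ i j, i ≠ j → IsUnit (e i - e j)) (I : Ideal A) :
    ∃ y : Fin (d + 2) → A, (∀ i, y i ∈ I) ∧ ∀ n x, IsIntegralOverIdeal (I ^ n) x →
      IsIntegralOverIdeal (Ideal.span (Set.range y) ^ n) x := by
  classical
  have hRdim := reesAlgebra_dim d hd I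
  have hmon : ∀ a ∈ I, (Polynomial.monomial 1 a : Polynomial A) ∈ reesAlgebra I :=
    fun a ha => reesAlgebra.monomial_mem.2 (by simpa using ha)
  let τ : I → reesAlgebra I := fun a => ⟨Polynomial.monomial 1 a.1, hmon _ a.2⟩
  -- the ideal of `A` cut out in degree one by an ideal of the Rees algebra
  let deg1 : Ideal (reesAlgebra I) → Ideal A := fun P =>
    { carrier := {a | ∃ h : a ∈ I, τ ⟨a, h⟩ ∈ P}
      add_mem' := by
        rintro a b ⟨ha, ha'⟩ ⟨hb, hb'⟩
        refine ⟨add_mem ha hb, ?_⟩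
        convert add_mem ha' hb' using 1
        apply Subtype.ext; simp [τ]
      zero_mem' := ⟨zero_mem _, by
        convert zero_mem P using 1
        apply Subtype.ext; simp [τ]⟩
      smul_mem' := by
        rintro c a ⟨ha, ha'⟩
        refine ⟨Ideal.mul_mem_left _ _ ha, ?_⟩
        convert Ideal.mul_mem_left P (algebraMap A _ c) ha' using 1
        apply Subtype.ext
        change Polynomial.monomial 1 (c * a) = Polynomial.C c * Polynomial.monomial 1 a
        rw [Polynomial.C_mul_monomial] }
  -- Elements of degree one are chosen one at a time so that the primes of the Rees algebra which
  -- contain them, but not all of `I T`, have large height.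
  have claim : ∀ j : ℕ, ∃ y : Fin j → I, ∀ P : Ideal (reesAlgebra I), P.IsPrime →
      (∀ i, τ (y i) ∈ P) → ¬ I ≤ deg1 P → (j : ℕ∞) ≤ P.height := by
    intro j
    induction j with
    | zero => exact ⟨Fin.elim0, fun P _ _ _ => by simp⟩
    | succ j ih =>
      obtain ⟨y, hy⟩ := ih
      let Y : Ideal (reesAlgebra I) := Ideal.span (Set.range fun i => τ (y i))
      have hfin : Y.minimalPrimes.Finite := Ideal.finite_minimalPrimes_of_isNoetherianRing _ Y
      obtain ⟨a, haI, ha⟩ := exists_avoid e he I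
        ((hfin.toFinset.image deg1).filter (fun Q => ¬ I ≤ Q))
        (fun Q hQ => (Finset.mem_filter.1 hQ).2)
      refine ⟨Fin.cons ⟨a, haI⟩ y, fun P hP hyP hIP => ?_⟩
      have hYP : Y ≤ P := by
        rw [Ideal.span_le]
        rintro _ ⟨i, rfl⟩
        simpa using hyP i.succ
      obtain ⟨Q, hQ, hQP⟩ := Ideal.exists_minimalPrimes_le hYP
      have hQI : ¬ I ≤ deg1 Q := by
        intro h
        exact hIP fun b hb => ⟨hb, hQP (h hb).2⟩
      have hQprime : Q.IsPrime := hQ.1.1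
      have haQ := ha (deg1 Q) (Finset.mem_filter.2
        ⟨Finset.mem_image_of_mem _ (hfin.mem_toFinset.2 hQ), hQI⟩)
      have hlt : Q < P := by
        refine lt_of_le_of_ne hQP ?_
        rintro rfl
        exact haQ ⟨haI, by simpa using hyP 0⟩
      have h1 := hy Q hQprime (fun i => hQ.1.2 (Ideal.subset_span ⟨i, rfl⟩)) hQI
      have h2 := Ideal.height_add_one_le_of_lt_of_isPrime hlt
      push_cast
      exact (add_le_add_left h1 1).trans h2
  obtain ⟨y, hy⟩ := claim (d + 2)
  let Y : Ideal (reesAlgebra I) := Ideal.span (Set.range fun i => τ (y i))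
  have hrad : ∀ a (ha : a ∈ I), τ ⟨a, ha⟩ ∈ Y.radical := by
    intro a ha
    rw [Ideal.radical_eq_sInf, Ideal.mem_sInf]
    rintro P ⟨hYP, hP⟩
    by_contra hcon
    have h1 := hy P hP (fun i => hYP (Ideal.subset_span ⟨i, rfl⟩)) (fun h => hcon (h ha).2)
    have h2 := (Ideal.height_le_ringKrullDim_of_isPrime (I := P)).trans hRdim
    have h3 : ((d + 2 : ℕ) : WithBot ℕ∞) ≤ (d + 1 : ℕ) :=
      le_trans (WithBot.coe_le_coe.2 h1) h2
    have h4 : d + 2 ≤ d + 1 := by exact_mod_cast h3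
    omega
  let N : Ideal A := Ideal.span (Set.range fun i => (y i : A))
  have hpow : ∀ a ∈ I, ∃ m : ℕ, 0 < m ∧ a ^ m ∈ N * I ^ (m - 1) := by
    intro a ha
    obtain ⟨m, hm⟩ := hrad a ha
    obtain ⟨c, hc⟩ := (Ideal.mem_span_range_iff_exists_fun).1 hm
    have hc' := congrArg (fun f : reesAlgebra I => f.1.coeff m) hc
    have e1 : ((τ ⟨a, ha⟩) ^ m : reesAlgebra I).1.coeff m = a ^ m := by
      change ((Polynomial.monomial 1 a) ^ m : Polynomial A).coeff m = _
      rw [Polynomial.monomial_pow]; simp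
    have e2 : (∑ i, c i * τ (y i) : reesAlgebra I).1.coeff m =
        ∑ i, (((c i).1 * Polynomial.monomial 1 (y i : A)).coeff m) := by
      rw [← Polynomial.finsetSum_coeff]
      congr 1
      rw [AddSubmonoidClass.coe_finsetSum]
      rfl
    simp only [e1, e2] at hc'
    rcases m with _ | m
    · exfalso
      simp [Polynomial.mul_coeff_zero, Polynomial.coeff_monomial] at hc'
    · refine ⟨m + 1, Nat.succ_pos _, ?_⟩
      rw [← hc']
      refine sum_mem fun i _ => ?_
      rw [← Polynomial.C_mul_X_eq_monomial, ← mul_assoc, Polynomial.coeff_mul_X,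
        Polynomial.coeff_mul_C, mul_comm (Polynomial.coeff _ _), Nat.add_sub_cancel]
      have hyN : (y i : A) ∈ N := Ideal.subset_span ⟨i, rfl⟩
      exact Ideal.mul_mem_mul (Ideal.subset_span ⟨i, rfl⟩) ((c i).2 m)
  refine ⟨fun i => y i, fun i => (y i).2, fun n x hx => isInt_of_valuations ?_⟩
  intro V _ _ _ φ hφ
  have h1 := isInt_valuation_mem φ (IsNoetherian.noetherian _) hx
  obtain ⟨a, haI, ha⟩ := fg_map_principal φ (IsNoetherian.noetherian I)
  rw [Ideal.map_pow] at h1 ⊢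
  refine Ideal.pow_right_mono ?_ n h1
  rw [ha, Ideal.span_singleton_le_iff_mem]
  obtain ⟨m, hm0, hm⟩ := hpow a haI
  have h2 := Ideal.mem_map_of_mem φ hm
  rw [Ideal.map_mul, Ideal.map_pow, ha, map_pow, Ideal.span_singleton_pow] at h2
  obtain ⟨z, hz, hz'⟩ := Ideal.mem_mul_span_singleton.1 h2
  by_cases h0 : φ a = 0
  · rw [h0]; exact zero_mem _
  have : z = φ a := by
    apply mul_right_cancel₀ (pow_ne_zero (m - 1) h0)
    rw [hz', ← pow_succ', Nat.sub_add_cancel hm0]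
  rwa [← this]

end Reduction

/-! ### Polynomials near a maximal ideal -/

section LocalReduction

open Polynomial in
/-- After the extension `B → B[t]` and up to denominators outside `𝔪 B[t]`, every ideal has a
reduction whose number of generators is bounded by the dimension. -/
theorem local_reduction {B : Type u} [CommRing B] [IsDomain B] [IsNoetherianRing B] (d : ℕ)
    (hd : ringKrullDim B ≤ d) (𝔪 : Ideal B) [h𝔪 : 𝔪.IsMaximal] (I : Ideal B) :
    ∃ y : Fin (d + 3) → B[X], (∀ i, y i ∈ I.map (C : B →+* B[X])) ∧
      ∀ n x, IsIntegralOverIdeal (I ^ n) x → ∃ h, h ∉ 𝔪.map (C : B →+* B[X]) ∧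
        IsIntegralOverIdeal (Ideal.span (Set.range y) ^ n) (h * C x) := by
  let 𝔫 : Ideal B[X] := 𝔪.map (C : B →+* B[X])
  have hp : 𝔫.IsPrime := by
    have := h𝔪.isPrime
    exact Ideal.isPrime_map_C_of_isPrime
  let A := Localization.AtPrime 𝔫
  have hdimA : ringKrullDim A ≤ (d + 1 : ℕ) := by
    rw [IsLocalization.AtPrime.ringKrullDim_eq_height 𝔫 A]
    refine Ideal.height_le_ringKrullDim_of_isPrime.trans ?_
    rw [Polynomial.ringKrullDim_of_isNoetherianRing]; push_cast; gcongr
  have hle : 𝔫.primeCompl ≤ nonZeroDivisors B[X] := Ideal.primeCompl_le_nonZeroDivisors 𝔫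
  have : IsDomain A := IsLocalization.isDomain_of_le_nonZeroDivisors _ hle
  have : IsNoetherianRing A := IsLocalization.isNoetherianRing 𝔫.primeCompl A inferInstance
  have he : ∀ i j : ℕ, i ≠ j → IsUnit (algebraMap B[X] A (X ^ i) - algebraMap B[X] A (X ^ j)) := by
    intro i j hij
    rw [← map_sub]
    refine IsLocalization.map_units A (⟨X ^ i - X ^ j, ?_⟩ : 𝔫.primeCompl)
    intro h
    have := Ideal.mem_map_C_iff.1 h i
    rw [coeff_sub, coeff_X_pow_self, coeff_X_pow, if_neg hij, sub_zero] at this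
    exact h𝔪.ne_top ((Ideal.eq_top_iff_one _).2 this)
  obtain ⟨y, hyI, hy⟩ := bounded_reduction (d + 1) hdimA _ he
    ((I.map (C : B →+* B[X])).map (algebraMap B[X] A))
  have h1 : ∀ i, ∃ z ∈ I.map (C : B →+* B[X]), ∃ s : 𝔫.primeCompl,
      y i * algebraMap B[X] A s = algebraMap B[X] A z := by
    intro i
    obtain ⟨⟨z, s⟩, h⟩ := (IsLocalization.mem_map_algebraMap_iff 𝔫.primeCompl A).1 (hyI i)
    exact ⟨z.1, z.2, s, h⟩
  choose z hz s hs using h1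
  have hspan : Ideal.span (Set.range y) ≤
      (Ideal.span (Set.range z)).map (algebraMap B[X] A) := by
    rw [Ideal.span_le]
    rintro _ ⟨i, rfl⟩
    rw [SetLike.mem_coe, ← Ideal.mul_unit_mem_iff_mem _ (IsLocalization.map_units A (s i)), hs]
    exact Ideal.mem_map_of_mem _ (Ideal.subset_span ⟨i, rfl⟩)
  refine ⟨z, hz, fun n x hx => ?_⟩
  have h2 := isInt_map (algebraMap B[X] A) (isInt_map (C : B →+* B[X]) hx)
  rw [Ideal.map_pow, Ideal.map_pow] at h2
  have h3 := isInt_mono (Ideal.pow_right_mono hspan n) (hy n _ h2)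
  rw [← Ideal.map_pow] at h3
  obtain ⟨h, hh, h4⟩ := isInt_of_localization 𝔫.primeCompl h3
  exact ⟨h, hh, h4⟩

open Polynomial in
/-- Membership in `J` can be checked over `B[t]`, locally at the primes `𝔪 B[t]`. -/
theorem mem_of_poly_local {B : Type*} [CommRing B] (J : Ideal B) (b : B)
    (h : ∀ 𝔪 : Ideal B, 𝔪.IsMaximal → ∃ f, f ∉ 𝔪.map (C : B →+* B[X]) ∧
      f * C b ∈ J.map (C : B →+* B[X])) : b ∈ J := by
  let D : Ideal B := J.colon {b}
  by_contra hb
  have hD : D ≠ ⊤ := by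
    intro h
    have h1 : (1 : B) ∈ D := by rw [h]; trivial
    exact hb (by simpa [D, Submodule.mem_colon_singleton] using h1)
  obtain ⟨𝔪, h𝔪, hle⟩ := Ideal.exists_le_maximal D hD
  obtain ⟨f, hf, hfb⟩ := h 𝔪 h𝔪
  apply hf
  rw [Ideal.mem_map_C_iff]
  intro n
  apply hle
  have := Ideal.mem_map_C_iff.1 hfb n
  rw [coeff_mul_C] at this
  simpa [D, Submodule.mem_colon_singleton] using this

end LocalReduction

/-! ### Frobenius splittings up to a multiplier -/

section Frob

/-- Additive maps that are linear for the inverse of Frobenius. -/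
def PInv (R : Type*) [CommRing R] (p : ℕ) (ψ : R →+ R) : Prop :=
  ∀ a b, ψ (a ^ p * b) = a * ψ b

/-- `R` is, up to the multiplier `c`, finite and split over its subring of `p`-th powers: there are
`p⁻¹`-linear maps `ψ i` serving as coordinates with `c ^ p * w = ∑ i, ψ i w ^ p * e i`, and a
`p⁻¹`-linear map sending `1` to `c`. -/
def HasFrob (R : Type*) [CommRing R] (p : ℕ) (c : R) : Prop :=
  (∃ (m : ℕ) (e : Fin m → R) (ψ : Fin m → R →+ R), (∀ i, PInv R p (ψ i)) ∧
    ∀ w, c ^ p * w = ∑ i, ψ i w ^ p * e i) ∧ ∃ φ : R →+ R, PInv R p φ ∧ φ 1 = c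

theorem HasFrob.of_equiv {R S : Type*} [CommRing R] [CommRing S] (f : R ≃+* S) {p : ℕ} {c : R}
    (h : HasFrob R p c) : HasFrob S p (f c) := by
  obtain ⟨⟨m, e, ψ, hψ, hw⟩, φ, hφ, hφ1⟩ := h
  have conj : ∀ θ : R →+ R, PInv R p θ →
      PInv S p ((f : R →+ S).comp (θ.comp (f.symm : S →+ R))) := by
    intro θ hθ a b
    have := hθ (f.symm a) (f.symm b)
    simp [this]
  refine ⟨⟨m, fun i => f (e i), fun i => (f : R →+ S).comp ((ψ i).comp (f.symm : S →+ R)),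
    fun i => conj _ (hψ i), fun w => ?_⟩, _, conj φ hφ, by simp [hφ1]⟩
  have := congrArg f (hw (f.symm w))
  simpa using this

theorem finite_gens {A B : Type*} [CommRing A] [CommRing B] (f : A →+* B) (hf : f.Finite) :
    ∃ G : Finset B, ∀ x : B, ∃ a : B → A, x = ∑ g ∈ G, f (a g) * g := by
  let := f.toAlgebra
  have hM : Module.Finite A B := hf
  obtain ⟨G, hG⟩ := hM
  refine ⟨G, fun x => ?_⟩
  have hx : x ∈ Submodule.span A (G : Set B) := by rw [hG]; trivial
  obtain ⟨a, ha⟩ := Submodule.mem_span_finset.1 hx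
  exact ⟨a, ha.2.symm⟩

/-- A finite `p⁻¹`-linear structure on a domain which is finite over its `p`-th powers, obtained
from a basis of the fraction field over its subfield of `p`-th powers by clearing denominators. -/
theorem HasFrob.exists {D : Type u} [CommRing D] [IsDomain D] (p : ℕ) [Fact p.Prime] [CharP D p]
    (hfin : (frobenius D p).Finite) : ∃ c : D, c ≠ 0 ∧ HasFrob D p c := by
  classical
  let K := FractionRing D
  have hp : p.Prime := Fact.out
  have hchar : CharP K p := inferInstance
  let k : Subfield K := (frobenius K p).fieldRange
  obtain ⟨G, hG⟩ : ∃ G : Finset D, ∀ x : D, ∃ a : D → D, x = ∑ g ∈ G, a g ^ p * g := by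
    exact finite_gens _ hfin
  let ι : D →+* K := algebraMap D K
  have hι : Function.Injective ι := IsFractionRing.injective D K
  have hspan : Submodule.span k (ι '' (G : Set D)) = ⊤ := by
    rw [eq_top_iff]
    intro x _
    obtain ⟨a, b, hb, rfl⟩ := IsFractionRing.div_surjective (A := D) x
    obtain ⟨r, hr⟩ := hG (a * b ^ (p - 1))
    have hb0 : ι b ≠ 0 := by
      intro h; exact nonZeroDivisors.ne_zero hb (hι (by rw [h, map_zero]))
    have e : algebraMap D K a / algebraMap D K b =
        ∑ g ∈ G, (ι (r g) / ι b) ^ p * ι g := by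
      have h1 := congrArg ι hr
      rw [map_sum] at h1
      have h2 : ∑ g ∈ G, (ι (r g) / ι b) ^ p * ι g = (∑ g ∈ G, ι (r g ^ p * g)) / ι b ^ p := by
        rw [Finset.sum_div]
        refine Finset.sum_congr rfl fun g _ => ?_
        rw [map_mul, map_pow, div_pow]; ring
      rw [h2, ← h1, map_mul, map_pow, div_eq_div_iff hb0 (pow_ne_zero _ hb0)]
      have h3 : ι b ^ p = ι b ^ (p - 1) * ι b := by
        rw [← pow_succ, Nat.sub_add_cancel hp.one_le]
      rw [h3]; change ι a * _ = _; ring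
    rw [e]
    refine sum_mem fun g hg => ?_
    have hk : (ι (r g) / ι b) ^ p ∈ k := ⟨ι (r g) / ι b, rfl⟩
    exact Submodule.smul_mem _ (⟨_, hk⟩ : k) (Submodule.subset_span ⟨g, hg, rfl⟩)
  have hKfin : Module.Finite k K := ⟨⟨G.image ι, by rw [Finset.coe_image]; exact hspan⟩⟩
  let b := Module.finBasis k K
  -- the `p`-th root of elements of `k`
  let root : k ≃+* K := (RingEquiv.ofBijective (frobenius K p).rangeRestrictField
    ⟨(frobenius K p).rangeRestrictField.injective,
      (frobenius K p).rangeRestrictField_bijective.2⟩).symm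
  have hroot : ∀ z : k, root z ^ p = (z : K) := by
    intro z
    obtain ⟨w, hw⟩ := (RingEquiv.ofBijective (frobenius K p).rangeRestrictField
      ⟨(frobenius K p).rangeRestrictField.injective,
      (frobenius K p).rangeRestrictField_bijective.2⟩).surjective z
    have : root z = w := by
      change (RingEquiv.ofBijective _ _).symm z = w
      rw [← hw]; exact RingEquiv.symm_apply_apply _ _
    rw [this, ← hw]
    rfl
  have hrootp : ∀ a : K, ∀ h : a ^ p ∈ k, root ⟨a ^ p, h⟩ = a := by
    intro a h
    apply (frobenius K p).injective
    rw [frobenius_def, frobenius_def, hroot]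
  -- any `k`-linear functional gives a `p⁻¹`-linear map on `K`
  have hlin : ∀ θ : K →ₗ[k] k, ∀ a z : K, root (θ (a ^ p * z)) = a * root (θ z) := by
    intro θ a z
    have hk : a ^ p ∈ k := ⟨a, rfl⟩
    have h1 : a ^ p * z = (⟨a ^ p, hk⟩ : k) • z := rfl
    rw [h1, map_smul, smul_eq_mul, map_mul, hrootp]
  obtain ⟨φK, hφK⟩ := LinearMap.exists_leftInverse_of_injective (Algebra.linearMap k K)
    (LinearMap.ker_eq_bot.2 (algebraMap k K).injective)
  have hφK1 : φK 1 = 1 := by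
    have := LinearMap.congr_fun hφK 1
    simpa using this
  let θ : Option (Fin (Module.finrank k K)) → K →ₗ[k] k := fun o => o.elim φK b.coord
  obtain ⟨t, ht⟩ := IsLocalization.exist_integer_multiples (nonZeroDivisors D)
    ((Finset.univ : Finset (Option (Fin (Module.finrank k K)))) ×ˢ G)
    (fun x => root (θ x.1 (ι x.2)))
  obtain ⟨s, hs⟩ := IsLocalization.exist_integer_multiples (nonZeroDivisors D)
    (Finset.univ : Finset (Fin (Module.finrank k K))) (fun i => b i)
  have ht0 : (t : D) ≠ 0 := nonZeroDivisors.ne_zero t.2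
  have hs0 : (s : D) ≠ 0 := nonZeroDivisors.ne_zero s.2
  have hinteg : ∀ o x, ∃ d : D, ι d = ι t * root (θ o (ι x)) := by
    intro o x
    obtain ⟨a, ha⟩ := hG x
    have h1 : ∀ g, ∃ d : D, g ∈ G → ι d = ι t * root (θ o (ι g)) := by
      intro g
      by_cases hg : g ∈ G
      · obtain ⟨d, hd⟩ := ht (o, g) (by simpa using hg)
        exact ⟨d, fun _ => by rw [show ι d = _ from hd, Algebra.smul_def]⟩
      · exact ⟨0, fun h => absurd h hg⟩
    choose d hd using h1
    refine ⟨∑ g ∈ G, a g * d g, ?_⟩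
    rw [ha, map_sum, map_sum, map_sum, map_sum, Finset.mul_sum]
    refine Finset.sum_congr rfl fun g hg => ?_
    rw [map_mul, hd g hg, map_mul, map_pow, hlin]; ring
  choose Θ hΘ using hinteg
  let Ψ : Option (Fin (Module.finrank k K)) → D →+ D := fun o =>
    { toFun := Θ o
      map_zero' := hι (by rw [hΘ]; simp)
      map_add' := fun x y => hι (by rw [map_add, hΘ, hΘ, hΘ]; simp; ring) }
  have hΨ : ∀ o, PInv D p (Ψ o) := by
    intro o x y
    apply hι
    change ι (Θ o _) = ι (x * Θ o y)
    rw [map_mul, hΘ, hΘ, map_mul, map_pow, hlin]; ring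
  choose E hE using fun i => hs i (Finset.mem_univ i)
  have hE : ∀ i, ι (E i) = ι s * b i := fun i => by
    rw [show ι (E i) = _ from hE i, Algebra.smul_def]
  refine ⟨t * s, mul_ne_zero ht0 hs0, ⟨_, fun i => (s : D) ^ (p - 1) * E i, fun i => Ψ (some i),
    fun i => hΨ _, fun w => ?_⟩, (AddMonoidHom.mulLeft (s : D)).comp (Ψ none), ?_, ?_⟩
  · apply hι
    have h1 := b.sum_repr (ι w)
    rw [map_mul, map_pow, map_mul, ← h1, Finset.mul_sum, map_sum]
    refine Finset.sum_congr rfl fun i _ => ?_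
    have h2 : ι (Ψ (some i) w) = ι t * root (b.repr (ι w) i) := hΘ (some i) w
    have h3 : b.repr (ι w) i • b i = (b.repr (ι w) i : K) * b i := rfl
    have h4 : ι (s : D) ^ p = ι (s : D) ^ (p - 1) * ι (s : D) := by
      rw [← pow_succ, Nat.sub_add_cancel hp.one_le]
    rw [map_mul, map_pow, map_mul, map_pow, h2, hE, h3, ← hroot, mul_pow, mul_pow, h4]
    ring
  · intro x y
    have := hΨ none x y
    simp only [AddMonoidHom.comp_apply, AddMonoidHom.coe_mulLeft, this]; ring
  · apply hι
    have h2 : ι (Ψ none 1) = ι t * root (φK (ι 1)) := hΘ none 1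
    rw [AddMonoidHom.comp_apply, AddMonoidHom.coe_mulLeft, map_mul, h2, map_one, hφK1, map_one,
      map_mul]
    ring

end Frob

/-! ### Frobenius on polynomial rings and tight closure -/

section FrobPoly

open Polynomial

/-- Extension of an additive map `ψ` to polynomials: `s X ^ n ↦ ψ s X ^ (n / p)` if
`n ≡ α mod p`, and `0` otherwise. -/
noncomputable def polyExt {R : Type*} [CommRing R] (p α : ℕ) (ψ : R →+ R) : R[X] →+ R[X] where
  toFun f := f.sum fun n s => if n % p = α then monomial (n / p) (ψ s) else 0
  map_zero' := by simp
  map_add' f g := by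
    rw [Polynomial.sum_add_index]
    · intro i; simp
    · intro i a b
      split_ifs
      · rw [map_add, map_add]
      · rw [add_zero]

theorem polyExt_monomial {R : Type*} [CommRing R] (p α : ℕ) (ψ : R →+ R) (n : ℕ) (s : R) :
    polyExt p α ψ (monomial n s) = if n % p = α then monomial (n / p) (ψ s) else 0 := by
  change (monomial n s).sum (fun n s => if n % p = α then monomial (n / p) (ψ s) else 0) = _
  rw [Polynomial.sum_monomial_index]
  simp

theorem polyExt_pinv {R : Type*} [CommRing R] (p : ℕ) [Fact p.Prime] [CharP R p] (α : ℕ)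
    (ψ : R →+ R) (h : PInv R p ψ) : PInv R[X] p (polyExt p α ψ) := by
  have hp : 0 < p := (Fact.out : p.Prime).pos
  intro a b
  induction a using Polynomial.induction_on' with
  | add f g hf hg => rw [add_pow_char, add_mul, map_add, hf, hg, add_mul]
  | monomial m r =>
    induction b using Polynomial.induction_on' with
    | add f g hf hg => rw [mul_add, map_add, hf, hg, map_add, mul_add]
    | monomial n s =>
      rw [monomial_pow, monomial_mul_monomial, polyExt_monomial, polyExt_monomial, h]
      rw [show m * p + n = n + p * m by ring, Nat.add_mul_mod_self_left, Nat.add_mul_div_left _ _ hp]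
      split_ifs
      · rw [monomial_mul_monomial, add_comm]
      · rw [mul_zero]

/-- The generators are the `e i * X ^ α` with `α < p`. -/
theorem HasFrob.polynomial {R : Type*} [CommRing R] {p : ℕ} [Fact p.Prime] [CharP R p] {c : R}
    (h : HasFrob R p c) : HasFrob R[X] p (C c) := by
  have hp : 0 < p := (Fact.out : p.Prime).pos
  obtain ⟨⟨m, e, ψ, hψ, hw⟩, φ, hφ, hφ1⟩ := h
  refine ⟨⟨m * p, fun i => C (e (finProdFinEquiv.symm i).1) * X ^ (finProdFinEquiv.symm i).2.1,
    fun i => polyExt p (finProdFinEquiv.symm i).2.1 (ψ (finProdFinEquiv.symm i).1),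
    fun i => polyExt_pinv p _ _ (hψ _), fun w => ?_⟩, polyExt p 0 φ, polyExt_pinv p _ _ hφ, ?_⟩
  · rw [Equiv.sum_comp finProdFinEquiv.symm (fun i : Fin m × Fin p =>
      polyExt p i.2.1 (ψ i.1) w ^ p * (C (e i.1) * X ^ i.2.1))]
    induction w using Polynomial.induction_on' with
    | add f g hf hg =>
      rw [mul_add, hf, hg, ← Finset.sum_add_distrib]
      refine Finset.sum_congr rfl fun i _ => ?_
      rw [map_add, add_pow_char, add_mul]
    | monomial n s =>
      rw [Fintype.sum_prod_type, ← C_pow, C_mul_monomial, hw, map_sum]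
      refine Finset.sum_congr rfl fun i _ => ?_
      rw [Finset.sum_eq_single (⟨n % p, Nat.mod_lt _ hp⟩ : Fin p)]
      · rw [polyExt_monomial, if_pos rfl, monomial_pow, ← mul_assoc, monomial_mul_C,
          monomial_mul_X_pow, mul_comm (n / p), Nat.div_add_mod]
      · intro j _ hj
        rw [polyExt_monomial, if_neg, zero_pow hp.ne', zero_mul]
        intro h
        exact hj (Fin.ext h.symm)
      · simp
  · rw [← C_1, ← monomial_zero_left, polyExt_monomial]
    simp [hφ1]

theorem HasFrob.mvPolynomial {R : Type*} [CommRing R] {p : ℕ} [Fact p.Prime] [CharP R p] {c : R}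
    (h : HasFrob R p c) (s : ℕ) : HasFrob (MvPolynomial (Fin s) R) p (MvPolynomial.C c) := by
  induction s with
  | zero =>
    have := h.of_equiv (MvPolynomial.isEmptyAlgEquiv R (Fin 0)).symm.toRingEquiv
    convert this using 1
    exact ((MvPolynomial.isEmptyAlgEquiv R (Fin 0)).symm.commutes c).symm
  | succ s ih =>
    have := (HasFrob.polynomial ih).of_equiv (MvPolynomial.finSuccEquiv R s).symm.toRingEquiv
    convert this using 1
    exact ((MvPolynomial.finSuccEquiv R s).symm.commutes c).symm

end FrobPoly

section TightClosure

/-- A `p⁻¹`-linear map sends the Frobenius power of an ideal into the ideal. -/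
theorem PInv.map_frobenius {A : Type*} [CommRing A] {p : ℕ} [Fact p.Prime] [CharP A p]
    {θ : A →+ A} (hθ : PInv A p θ) (J : Ideal A) {x : A} (hx : x ∈ J.map (frobenius A p)) :
    θ x ∈ J := by
  rw [Ideal.map] at hx
  induction hx using Submodule.span_induction with
  | mem x hx =>
    obtain ⟨j, hj, rfl⟩ := hx
    rw [frobenius_def, ← mul_one (j ^ p), hθ]
    exact Ideal.mul_mem_right _ _ hj
  | zero => simp
  | add x y _ _ hx hy => rw [map_add]; exact add_mem hx hy
  | smul r x hx' _ =>
    have hx' : x ∈ J.map (frobenius A p) := hx'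
    clear * - hx' hθ
    rw [Ideal.map] at hx'
    induction hx' using Submodule.span_induction generalizing r with
    | mem x hx =>
      obtain ⟨j, hj, rfl⟩ := hx
      rw [frobenius_def, smul_eq_mul, mul_comm, hθ]
      exact Ideal.mul_mem_right _ _ hj
    | zero => simp
    | add x y _ _ hx hy => rw [smul_add, map_add]; exact add_mem (hx r) (hy r)
    | smul s x _ hx => rw [smul_smul]; exact hx _

/-- An element of the tight closure of `J` is multiplied into `J` by the cube of the Frobenius
multiplier. -/
theorem tight_closure {A : Type u} [CommRing A] [IsDomain A] [IsNoetherianRing A] {p : ℕ}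
    [Fact p.Prime] [CharP A p] {c : A} (h : HasFrob A p c) (J : Ideal A) (x u : A)
    (hu : u ≠ 0) (hux : ∀ e, u * x ^ p ^ e ∈ J.map (iterateFrobenius A p e)) :
    c ^ 3 * x ∈ J := by
  have hp : p.Prime := Fact.out
  obtain ⟨⟨m, E, ψ, hψ, hw⟩, φ, hφ, hφ1⟩ := h
  -- `U` consists of the multipliers which bring every `x ^ p ^ e` into the Frobenius power of `J`.
  -- It is stable under `p⁻¹`-linear maps, so `c ^ p * w = ∑ i, ψ i w ^ p * E i` gives `c ^ p U ⊆ U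
  -- ^ 2`.
  let U : Ideal A := ⨅ e, (J.map (iterateFrobenius A p e)).colon {x ^ p ^ e}
  have hU : ∀ w, w ∈ U ↔ ∀ e, w * x ^ p ^ e ∈ J.map (iterateFrobenius A p e) := by
    intro w; simp [U, Submodule.mem_colon_singleton]
  have hstable : ∀ θ : A →+ A, PInv A p θ → ∀ w ∈ U, θ w ∈ U := by
    intro θ hθ w hw
    rw [hU] at hw ⊢
    intro e
    have h1 := hw (e + 1)
    rw [add_comm, iterateFrobenius_add, iterateFrobenius_one, ← Ideal.map_map] at h1
    have h2 := hθ.map_frobenius _ h1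
    rwa [add_comm, pow_succ, pow_mul, mul_comm, hθ, mul_comm] at h2
  have hsq : ∀ w ∈ U, c ^ p * w ∈ U * U := by
    intro w hw'
    rw [hw]
    refine sum_mem fun i _ => Ideal.mul_mem_right _ _ ?_
    rw [← pow_two]
    exact Ideal.pow_le_pow_right hp.two_le (Ideal.pow_mem_pow (hstable _ (hψ i) w hw') p)
  -- By Cayley–Hamilton a power of `c` lies in `U`.
  obtain ⟨M, hM⟩ : ∃ M : ℕ, c ^ M ∈ U := by
    have hUfin : Module.Finite A U := Module.Finite.iff_fg.2 (IsNoetherian.noetherian U)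
    obtain ⟨P, hPm, -, hPc, hP0⟩ :=
      LinearMap.exists_monic_and_natDegree_eq_and_coeff_mem_pow_and_aeval_eq_zero (M := U) A
        (c ^ p • LinearMap.id) U (by
          rintro _ ⟨w, rfl⟩
          exact (Submodule.mem_smul_top_iff _ _ _).2 (hsq w w.2))
    have h1 : P.eval (c ^ p) * u = 0 := by
      have h2 : (Polynomial.aeval (c ^ p • (LinearMap.id : U →ₗ[A] U)) P) ⟨u, (hU u).2 hux⟩ = 0 := by
        rw [hP0]; rfl
      have h3 : (c ^ p • (LinearMap.id : U →ₗ[A] U)) = algebraMap A (Module.End A U) (c ^ p) := by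
        rw [Algebra.algebraMap_eq_smul_one]; rfl
      rw [h3, Polynomial.aeval_algebraMap_apply] at h2
      simpa [Polynomial.aeval_def, Module.algebraMap_end_apply] using congrArg Subtype.val h2
    have h2 : P.eval (c ^ p) = 0 := (mul_eq_zero.1 h1).resolve_right hu
    rw [Polynomial.eval_eq_sum_range, Finset.sum_range_succ, hPm.coeff_natDegree, one_mul] at h2
    refine ⟨p * P.natDegree, ?_⟩
    rw [pow_mul, eq_neg_of_add_eq_zero_right h2]
    refine neg_mem (sum_mem fun i hi => Ideal.mul_mem_right _ _ ?_)
    exact Ideal.pow_le_self (by have := Finset.mem_range.1 hi; omega) (hPc i)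
  -- `p⁻ᵉ`-linear maps sending `1` to `c ^ 2`
  have hχ : ∀ e : ℕ, ∃ χ : A →+ A, (∀ a b, χ (a ^ p ^ e * b) = a * χ b) ∧ χ 1 = c ^ 2 := by
    intro e
    induction e with
    | zero => exact ⟨AddMonoidHom.mulLeft (c ^ 2), fun a b => by simp; ring, by simp⟩
    | succ e ih =>
      obtain ⟨χ, h1, h2⟩ := ih
      refine ⟨φ.comp ((AddMonoidHom.mulLeft (c ^ (p - 2))).comp χ), fun a b => ?_, ?_⟩
      · have e1 : a ^ p ^ (e + 1) = (a ^ p) ^ p ^ e := by rw [← pow_mul, pow_succ, mul_comm p]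
        simp only [AddMonoidHom.comp_apply, AddMonoidHom.coe_mulLeft]
        rw [e1, h1, mul_left_comm, hφ]
      · simp only [AddMonoidHom.comp_apply, AddMonoidHom.coe_mulLeft]
        rw [h2, ← pow_add, Nat.sub_add_cancel hp.two_le, ← mul_one (c ^ p), hφ, hφ1, pow_two]
  obtain ⟨χ, h1, h2⟩ := hχ M
  have hMq : M ≤ p ^ M := (Nat.lt_pow_self hp.one_lt).le
  have h3 : c ^ p ^ M * x ^ p ^ M ∈ J.map (iterateFrobenius A p M) := by
    rw [← Nat.sub_add_cancel hMq, pow_add, mul_assoc, Nat.sub_add_cancel hMq]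
    exact Ideal.mul_mem_left _ _ ((hU _).1 hM M)
  have h4 : ∀ z ∈ J.map (iterateFrobenius A p M), χ z ∈ J := by
    intro z hz
    have : ∀ r, χ (r * z) ∈ J := by
      rw [Ideal.map] at hz
      induction hz using Submodule.span_induction with
      | mem x hx =>
        obtain ⟨j, hj, rfl⟩ := hx
        intro r
        rw [iterateFrobenius_def, mul_comm, h1]
        exact Ideal.mul_mem_right _ _ hj
      | zero => simp
      | add x y _ _ hx hy => intro r; rw [mul_add, map_add]; exact add_mem (hx r) (hy r)
      | smul s x _ hx => intro r; rw [smul_eq_mul, ← mul_assoc]; exact hx _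
    simpa using this 1
  have h5 := h4 _ h3
  rw [← mul_pow, ← mul_one ((c * x) ^ p ^ M), h1, h2] at h5
  convert h5 using 1; ring

/-- By the pigeonhole principle, dividing the exponents by `p ^ e` with remainder loses at most one
per generator. -/
theorem span_range_pow_le {A : Type*} [CommRing A] {p : ℕ} [Fact p.Prime] [CharP A p] {l : ℕ}
    (y : Fin l → A) (n e : ℕ) : Ideal.span (Set.range y) ^ (n * p ^ e) ≤
      (Ideal.span (Set.range y) ^ (n - l)).map (iterateFrobenius A p e) := by
  have hq : 0 < p ^ e := pow_pos (Fact.out : p.Prime).pos e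
  rw [Ideal.span_pow_eq_map_homogeneousSubmodule]
  rintro _ ⟨f, hf, rfl⟩
  change MvPolynomial.aeval y f ∈ _
  rw [MvPolynomial.aeval_def, MvPolynomial.eval₂_eq]
  refine sum_mem fun α hα => Ideal.mul_mem_left _ _ ?_
  have hdeg : ∑ i, α i = n * p ^ e := by
    have := hf (MvPolynomial.mem_support_iff.1 hα)
    rw [Finsupp.weight_apply, Finsupp.sum_fintype _ _ (by simp)] at this
    simpa using this
  have hprod : ∏ i ∈ α.support, y i ^ α i = ∏ i, y i ^ α i :=
    Finset.prod_subset (Finset.subset_univ _) (by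
      intro i _ hi; rw [Finsupp.notMem_support_iff.1 hi, pow_zero])
  have hsplit : ∏ i, y i ^ α i = iterateFrobenius A p e (∏ i, y i ^ (α i / p ^ e)) *
      ∏ i, y i ^ (α i % p ^ e) := by
    rw [iterateFrobenius_def, ← Finset.prod_pow, ← Finset.prod_mul_distrib]
    refine Finset.prod_congr rfl fun i _ => ?_
    rw [← pow_mul, ← pow_add, Nat.div_add_mod']
  rw [hprod, hsplit]
  refine Ideal.mul_mem_right _ _ (Ideal.mem_map_of_mem _ ?_)
  have hmem : ∏ i, y i ^ (α i / p ^ e) ∈ Ideal.span (Set.range y) ^ (∑ i, α i / p ^ e) := by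
    rw [← Finset.prod_pow_eq_pow_sum]
    refine Ideal.prod_mem_prod (I := fun i => Ideal.span (Set.range y) ^ (α i / p ^ e))
      (x := fun i => y i ^ (α i / p ^ e)) fun i _ => ?_
    exact Ideal.pow_mem_pow (Ideal.subset_span (Set.mem_range_self i)) _
  refine Ideal.pow_le_pow_right ?_ hmem
  have h1 : n * p ^ e ≤ (∑ i, α i / p ^ e + l) * p ^ e := by
    rw [← hdeg, add_mul, Finset.sum_mul]
    calc ∑ i, α i ≤ ∑ i, (α i / p ^ e * p ^ e + p ^ e) := by
          refine Finset.sum_le_sum fun i _ => ?_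
          have := Nat.div_add_mod' (α i) (p ^ e)
          have := Nat.mod_lt (α i) hq
          omega
      _ = _ := by rw [Finset.sum_add_distrib]; simp
  have := Nat.le_of_mul_le_mul_right h1 hq
  omega

theorem isInt_bot {A : Type*} [CommRing A] [IsDomain A] {x : A}
    (h : IsIntegralOverIdeal (⊥ : Ideal A) x) : x = 0 := by
  obtain ⟨n, hn, a, ha, he⟩ := h
  have : ∑ i ∈ Finset.Icc 1 n, a i * x ^ (n - i) = 0 := by
    refine Finset.sum_eq_zero fun i hi => ?_
    have hi := Finset.mem_Icc.1 hi
    have := ha i hi.1 hi.2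
    rw [Ideal.bot_pow (by omega), Submodule.mem_bot] at this
    rw [this, zero_mul]
  rw [this, add_zero] at he
  exact pow_eq_zero_iff (by omega) |>.1 he

/-- Uniform multipliers for integral closures in the `F`-finite case. -/
theorem frob_multiplier {B : Type u} [CommRing B] [IsDomain B] [IsNoetherianRing B] {p : ℕ}
    [Fact p.Prime] [CharP B p] (d : ℕ) (hd : ringKrullDim B ≤ d) {c : B} (h : HasFrob B p c)
    (I : Ideal B) (n : ℕ) (x : B) (hx : IsIntegralOverIdeal (I ^ n) x) :
    c ^ 3 * x ∈ I ^ (n - (d + 3)) := by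
  apply mem_of_poly_local
  intro 𝔪 h𝔪
  obtain ⟨y, hyI, hy⟩ := local_reduction d hd 𝔪 I
  obtain ⟨g, hg, hgx⟩ := hy n x hx
  refine ⟨g, hg, ?_⟩
  set Y := Ideal.span (Set.range y) with hY
  have hYI : Y ≤ I.map (Polynomial.C : B →+* Polynomial B) := by
    rw [hY, Ideal.span_le]; rintro _ ⟨i, rfl⟩; exact hyI i
  have hmem : Polynomial.C c ^ 3 * (g * Polynomial.C x) ∈ Y ^ (n - (d + 3)) := by
    by_cases hbot : Y ^ n = ⊥
    · rw [hbot] at hgx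
      rw [isInt_bot hgx, mul_zero]; exact zero_mem _
    obtain ⟨v, hv, hv0⟩ := Submodule.exists_mem_ne_zero_of_ne_bot hbot
    obtain ⟨m, hm⟩ := isInt_pow_mem hgx
    refine tight_closure h.polynomial _ _ (v ^ m) (pow_ne_zero _ hv0) fun e => ?_
    have h1 := hm (p ^ e) (v ^ m) (Ideal.pow_mem_pow hv m)
    rw [← pow_mul] at h1
    exact span_range_pow_le y n e h1
  have := Ideal.pow_right_mono hYI _ hmem
  rw [← Ideal.map_pow] at this
  convert this using 1
  rw [map_mul, map_pow]; ring

end TightClosure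

/-! ### Uniform Artin–Rees for rings finite over their `p`-th powers -/

section FFiniteDescent

attribute [local instance] MvPolynomial.algebraMvPolynomial in
/-- Flat descent over the field `κ`. -/
theorem flat_descent_field {κ E' : Type*} [Field κ] [CommRing E'] (σ : κ →+* E') {N : ℕ}
    (ξ : Fin N → E') (hs : Function.Surjective (MvPolynomial.eval₂Hom σ ξ))
    (J : Ideal (MvPolynomial (Fin N) κ)) (w : MvPolynomial (Fin N) κ) (hw : w ∈ J)
    (h : MvPolynomial.map σ w ∈
      J.map (MvPolynomial.map σ) * RingHom.ker (MvPolynomial.eval ξ)) :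
    w ∈ J * RingHom.ker (MvPolynomial.eval₂Hom σ ξ) := by
  let := σ.toAlgebra
  have := flat_mvPolynomial (Λ := κ) (E := E') (σ := Fin N)
  have hcomp : (MvPolynomial.eval ξ).comp (algebraMap (MvPolynomial (Fin N) κ)
      (MvPolynomial (Fin N) E')) = MvPolynomial.eval₂Hom σ ξ := by
    apply MvPolynomial.ringHom_ext
    · intro r
      change MvPolynomial.eval ξ (MvPolynomial.map σ (MvPolynomial.C r)) =
        MvPolynomial.eval₂Hom σ ξ (MvPolynomial.C r)
      rw [MvPolynomial.map_C, MvPolynomial.eval_C, MvPolynomial.eval₂Hom_C]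
    · intro i
      change MvPolynomial.eval ξ (MvPolynomial.map σ (MvPolynomial.X i)) =
        MvPolynomial.eval₂Hom σ ξ (MvPolynomial.X i)
      rw [MvPolynomial.map_X, MvPolynomial.eval_X, MvPolynomial.eval₂Hom_X']
  have := flat_descent (R := MvPolynomial (Fin N) κ) (MvPolynomial.eval ξ)
    (by rw [hcomp]; exact hs) J w hw h
  rwa [hcomp] at this

theorem exists_residue {B : Type u} [CommRing B] (𝔪 : Ideal B) [𝔪.IsMaximal] :
    ∃ (κ : Type u) (_ : Field κ) (g : B →+* κ), Function.Surjective g ∧ RingHom.ker g = 𝔪 ∧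
      ∀ {E' : Type u} [CommRing E'] (f : B →+* E'), 𝔪 ≤ RingHom.ker f →
        ∃ σ : κ →+* E', σ.comp g = f :=
  ⟨B ⧸ 𝔪, Ideal.Quotient.field 𝔪, Ideal.Quotient.mk 𝔪, Ideal.Quotient.mk_surjective,
    Ideal.mk_ker, fun f hf => ⟨Ideal.Quotient.lift 𝔪 f hf, Ideal.Quotient.lift_comp_mk 𝔪 f hf⟩⟩

/-- The ring is generated over its `p`-th powers by finitely many elements. -/
def FGen (B : Type*) [CommRing B] (p : ℕ) : Prop :=
  ∃ G : Finset B, Subring.closure (Set.range (fun b : B => b ^ p) ∪ G) = ⊤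

theorem FGen.of_finite {B : Type*} [CommRing B] (p : ℕ) [Fact p.Prime] [CharP B p]
    (h : (frobenius B p).Finite) : FGen B p := by
  obtain ⟨G, hG⟩ := finite_gens _ h
  refine ⟨G, ?_⟩
  rw [eq_top_iff]
  intro x _
  obtain ⟨a, ha⟩ := hG x
  rw [ha]
  exact sum_mem fun g hg => mul_mem (Subring.subset_closure (Or.inl ⟨_, rfl⟩))
    (Subring.subset_closure (Or.inr hg))

theorem FGen.of_surjective {B B' : Type*} [CommRing B] [CommRing B'] {p : ℕ} (f : B →+* B')
    (hf : Function.Surjective f) (h : FGen B p) : FGen B' p := by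
  classical
  obtain ⟨G, hG⟩ := h
  refine ⟨G.image f, ?_⟩
  rw [eq_top_iff]
  intro x _
  obtain ⟨b, rfl⟩ := hf x
  have hb : b ∈ Subring.closure (Set.range (fun b : B => b ^ p) ∪ G) := by rw [hG]; trivial
  have := (Subring.mem_map (f := f)).2 ⟨b, hb, rfl⟩
  rw [RingHom.map_closure] at this
  refine Subring.closure_mono ?_ this
  rw [Set.image_union]
  refine Set.union_subset_union ?_ (by simp)
  rintro _ ⟨_, ⟨c, rfl⟩, rfl⟩
  exact ⟨f c, (map_pow f c p).symm⟩

theorem FGen.mvPolynomial {B : Type*} [CommRing B] {p : ℕ} (h : FGen B p) (s : ℕ) :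
    FGen (MvPolynomial (Fin s) B) p := by
  classical
  obtain ⟨G, hG⟩ := h
  refine ⟨G.image MvPolynomial.C ∪ Finset.univ.image MvPolynomial.X, ?_⟩
  rw [eq_top_iff]
  intro x _
  induction x using MvPolynomial.induction_on with
  | C b =>
    have hb : b ∈ Subring.closure (Set.range (fun b : B => b ^ p) ∪ G) := by rw [hG]; trivial
    have := (Subring.mem_map (f := (MvPolynomial.C : B →+* MvPolynomial (Fin s) B))).2
      ⟨b, hb, rfl⟩
    rw [RingHom.map_closure] at this
    refine Subring.closure_mono ?_ this
    rw [Set.image_union]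
    refine Set.union_subset_union ?_ (by simp)
    rintro _ ⟨_, ⟨c, rfl⟩, rfl⟩
    exact ⟨MvPolynomial.C c, (map_pow _ c p).symm⟩
  | add x y hx hy => exact add_mem (hx trivial) (hy trivial)
  | mul_X x i hx => exact mul_mem (hx trivial) (Subring.subset_closure (Or.inr (by simp)))

/-- The same elements generate over every iterate of the Frobenius. -/
theorem FGen.surjective {B : Type*} [CommRing B] {p : ℕ} [Fact p.Prime] [CharP B p]
    (h : FGen B p) : ∃ (N : ℕ) (ξ : Fin N → B), ∀ e : ℕ,
      Function.Surjective (MvPolynomial.eval₂Hom (iterateFrobenius B p e) ξ) := by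
  obtain ⟨G, hG⟩ := h
  refine ⟨G.card, fun i => G.equivFin.symm i, fun e => ?_⟩
  set ξ : Fin G.card → B := fun i => G.equivFin.symm i
  induction e with
  | zero => exact fun b => ⟨MvPolynomial.C b, by simp⟩
  | succ e ih =>
    have hp : ∀ g, ∃ g', MvPolynomial.eval₂Hom (iterateFrobenius B p (e + 1)) ξ g' =
        (MvPolynomial.eval₂Hom (iterateFrobenius B p e) ξ g) ^ p := by
      intro g
      induction g using MvPolynomial.induction_on with
      | C b =>
        refine ⟨MvPolynomial.C b, ?_⟩
        rw [MvPolynomial.eval₂Hom_C, MvPolynomial.eval₂Hom_C, iterateFrobenius_def,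
          iterateFrobenius_def, pow_succ, pow_mul]
      | add x y hx hy =>
        obtain ⟨x', hx'⟩ := hx
        obtain ⟨y', hy'⟩ := hy
        exact ⟨x' + y', by rw [map_add, map_add, add_pow_char, hx', hy']⟩
      | mul_X x i hx =>
        obtain ⟨x', hx'⟩ := hx
        exact ⟨x' * MvPolynomial.X i ^ p, by
          rw [map_mul, map_mul, mul_pow, hx', map_pow, MvPolynomial.eval₂Hom_X',
            MvPolynomial.eval₂Hom_X']⟩
    rw [← RingHom.range_eq_top, eq_top_iff, ← hG, Subring.closure_le]
    rintro x (⟨b, rfl⟩ | hx)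
    · obtain ⟨g, rfl⟩ := ih b
      exact hp g
    · exact ⟨MvPolynomial.X (G.equivFin ⟨x, hx⟩), by simp [ξ]⟩

/-- The uniform Artin–Rees property for `F`-finite rings. The ring is written, for each `e`, as a
quotient of a polynomial ring over itself via the `e`-th Frobenius; modulo powers of a maximal
ideal this becomes an algebra over the residue field, hence flat. -/
theorem FGen.uar {B E : Type u} [CommRing B] [IsNoetherianRing B] [CommRing E] [IsDomain E]
    {p : ℕ} [Fact p.Prime] [CharP B p] (hB : FGen B p) (π : B →+* E)
    (hπ : Function.Surjective π) (hE : PUBS E) : UAR (RingHom.ker π) := by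
  have hp : p.Prime := Fact.out
  have : IsNoetherianRing E := isNoetherianRing_of_surjective _ _ π hπ
  obtain ⟨N, ξ, hξ⟩ := hB.surjective
  obtain ⟨k, hk⟩ := uar_ker_eval hE N (fun i => π (ξ i))
  refine ⟨k, fun I n u hu => mem_of_forall_near _ _ fun 𝔪 h𝔪 t => ?_⟩
  obtain ⟨hu1, hu2⟩ := hu
  let F : B →+* B := iterateFrobenius B p t
  let ρ : MvPolynomial (Fin N) B →+* B := MvPolynomial.eval₂Hom F ξ
  have hρ : Function.Surjective ρ := hξ t
  let I' := I.comap ρ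
  have hI' : I'.map ρ = I := Ideal.map_comap_of_surjective ρ hρ I
  obtain ⟨u', hu', rfl⟩ : ∃ u' ∈ I' ^ n, ρ u' = u := by
    rw [← Ideal.mem_map_iff_of_surjective ρ hρ, Ideal.map_pow, hI']; exact hu1
  -- base change to polynomials over `E`
  let μ : MvPolynomial (Fin N) B →+* MvPolynomial (Fin N) E := MvPolynomial.map (π.comp F)
  have hμ : (MvPolynomial.eval fun i => π (ξ i)).comp μ = π.comp ρ := by
    apply MvPolynomial.ringHom_ext
    · intro r; simp [μ, ρ]
    · intro i; simp [μ, ρ]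
  have h1 : μ u' ∈ (I'.map μ) ^ (n - k) * RingHom.ker (MvPolynomial.eval fun i => π (ξ i)) := by
    refine hk _ n ⟨?_, ?_⟩
    · rw [← Ideal.map_pow]; exact Ideal.mem_map_of_mem _ hu'
    · have := RingHom.congr_fun hμ u'
      exact this.trans hu2
  -- reduction modulo `𝔪 ^ t`
  let Q := RingHom.ker π ⊔ 𝔪 ^ t
  obtain ⟨κ, _, g, hg, hgker, hlift⟩ := exists_residue 𝔪
  have hF𝔪 : ∀ j ∈ 𝔪, F j ∈ 𝔪 ^ t := by
    intro j hj
    rw [iterateFrobenius_def]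
    exact Ideal.pow_le_pow_right (Nat.lt_pow_self hp.one_lt).le (Ideal.pow_mem_pow hj _)
  obtain ⟨σ, hσ⟩ := hlift ((Ideal.Quotient.mk Q).comp F) (fun j hj => by
    rw [RingHom.mem_ker, RingHom.comp_apply, Ideal.Quotient.eq_zero_iff_mem]
    exact Ideal.mem_sup_right (hF𝔪 j hj))
  let ε : E →+* B ⧸ Q := π.liftOfSurjective hπ ⟨Ideal.Quotient.mk Q, by
    rw [Ideal.mk_ker]; exact le_sup_left⟩
  have hε : ε.comp π = Ideal.Quotient.mk Q := RingHom.liftOfRightInverse_comp _ _ _ _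
  let ζ : Fin N → B ⧸ Q := fun i => Ideal.Quotient.mk Q (ξ i)
  let γ : MvPolynomial (Fin N) B →+* MvPolynomial (Fin N) κ := MvPolynomial.map g
  have hγ : Function.Surjective γ := MvPolynomial.map_surjective g hg
  have hsq : (MvPolynomial.map ε).comp μ = (MvPolynomial.map σ).comp γ := by
    apply MvPolynomial.ringHom_ext
    · intro r
      have e1 : ε (π (F r)) = Ideal.Quotient.mk Q (F r) := RingHom.congr_fun hε (F r)
      have e2 : σ (g r) = Ideal.Quotient.mk Q (F r) := RingHom.congr_fun hσ r
      simp only [μ, γ, RingHom.comp_apply, MvPolynomial.map_C, e1, e2]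
    · intro i; simp [μ, γ]
  have hev : (MvPolynomial.eval₂Hom σ ζ).comp γ = (Ideal.Quotient.mk Q).comp ρ := by
    apply MvPolynomial.ringHom_ext
    · intro r
      have e2 : σ (g r) = Ideal.Quotient.mk Q (F r) := RingHom.congr_fun hσ r
      simp [γ, ρ, e2]
    · intro i; simp [γ, ρ, ζ]
  have hker : (RingHom.ker (MvPolynomial.eval fun i => π (ξ i))).map (MvPolynomial.map ε) ≤
      RingHom.ker (MvPolynomial.eval ζ) := by
    rw [Ideal.map_le_iff_le_comap]
    intro f hf
    have e1 : ∀ i, ε (π (ξ i)) = ζ i := fun i => RingHom.congr_fun hε (ξ i)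
    have e2 : (MvPolynomial.eval ζ).comp (MvPolynomial.map ε) =
        ε.comp (MvPolynomial.eval fun i => π (ξ i)) := by
      apply MvPolynomial.ringHom_ext
      · intro r; simp
      · intro i; simp [e1]
    have := RingHom.congr_fun e2 f
    rw [Ideal.mem_comap, RingHom.mem_ker]
    refine this.trans ?_
    rw [RingHom.comp_apply, (RingHom.mem_ker).1 hf, map_zero]
  have h2 := Ideal.mem_map_of_mem (MvPolynomial.map ε) h1
  rw [Ideal.map_mul, ← Ideal.map_pow, Ideal.map_map, hsq, ← Ideal.map_map] at h2
  have h3 := flat_descent_field σ ζ (fun z => by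
      obtain ⟨b, rfl⟩ := Ideal.Quotient.mk_surjective z
      obtain ⟨w, rfl⟩ := hρ b
      exact ⟨γ w, RingHom.congr_fun hev w⟩) ((I' ^ (n - k)).map γ) (γ u')
      (Ideal.mem_map_of_mem _ (Ideal.pow_le_pow_right (Nat.sub_le _ _) hu'))
      (by
        have e := RingHom.congr_fun hsq u'
        rw [RingHom.comp_apply, RingHom.comp_apply] at e
        rw [← e]
        exact Ideal.mul_mono_right hker h2)
  have h4 : RingHom.ker (MvPolynomial.eval₂Hom σ ζ) = (Q.comap ρ).map γ := by
    have : Q.comap ρ = (RingHom.ker (MvPolynomial.eval₂Hom σ ζ)).comap γ := by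
      rw [RingHom.comap_ker, hev, ← RingHom.comap_ker, Ideal.mk_ker]
    rw [this, Ideal.map_comap_of_surjective γ hγ]
  rw [h4, ← Ideal.map_mul] at h3
  obtain ⟨w, hw, hwu⟩ := (Ideal.mem_map_iff_of_surjective γ hγ).1 h3
  have h5 : ρ w ∈ I ^ (n - k) * Q := by
    have := Ideal.mem_map_of_mem ρ hw
    rw [Ideal.map_mul, Ideal.map_pow, hI', Ideal.map_comap_of_surjective ρ hρ] at this
    exact this
  have h6 : ρ (u' - w) ∈ 𝔪 ^ t := by
    have h7 : u' - w ∈ 𝔪.map (MvPolynomial.C : B →+* MvPolynomial (Fin N) B) := by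
      rw [← hgker, ← MvPolynomial.ker_map, RingHom.mem_ker, map_sub]
      exact sub_eq_zero.2 hwu.symm
    have h8 := Ideal.mem_map_of_mem ρ h7
    rw [Ideal.map_map] at h8
    refine (Ideal.map_le_iff_le_comap.2 fun j hj => ?_) h8
    rw [Ideal.mem_comap]
    have : (ρ.comp MvPolynomial.C) j = F j := by simp [ρ]
    rw [this]; exact hF𝔪 j hj
  have : ρ u' = ρ w + ρ (u' - w) := by rw [map_sub]; ring
  rw [this]
  refine add_mem ?_ (Ideal.mem_sup_right h6)
  refine (?_ : I ^ (n - k) * Q ≤ _) h5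
  rw [Ideal.mul_sup]
  exact sup_le_sup_left (fun x hx => mem_right_of_mem_mul hx) _

end FFiniteDescent

/-! ### Noetherian induction over the prime quotients -/

theorem PUBS.mvPolynomial {E : Type*} [CommRing E] (h : PUBS E) (s : ℕ) :
    PUBS (MvPolynomial (Fin s) E) := fun t =>
  UBS.of_equiv (((MvPolynomial.renameEquiv E finSumFinEquiv.symm).trans
    (MvPolynomial.sumAlgEquiv E (Fin t) (Fin s))).toRingEquiv) (h (t + s))

theorem PUBS.ubs {E : Type*} [CommRing E] (h : PUBS E) : UBS E :=
  UBS.of_equiv (MvPolynomial.isEmptyAlgEquiv E (Fin 0)).toRingEquiv (h 0)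

/-- A nonzero uniform multiplier `c`, together with the uniform Artin–Rees property for the primes
containing `c`, gives the uniform Briançon–Skoda property: if `c * x ∈ I ^ n` then
`c * x ∈ I ^ (n - k) * (c)`, and `c` can be cancelled. -/
theorem PUBS.of_multiplier {D : Type*} [CommRing D] [IsDomain D] [IsNoetherianRing D] (c : D)
    (hc : c ≠ 0)
    (h : ∀ s : ℕ, ∃ k : ℕ, ∀ (I : Ideal (MvPolynomial (Fin s) D)) (n : ℕ)
      (x : MvPolynomial (Fin s) D), IsIntegralOverIdeal (I ^ n) x →
        MvPolynomial.C c * x ∈ I ^ (n - k))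
    (hU : ∀ P : Ideal D, P.IsPrime → c ∈ P → ∀ s : ℕ,
      UAR (P.map (MvPolynomial.C : D →+* MvPolynomial (Fin s) D))) : PUBS D := by
  intro s
  obtain ⟨k, hk⟩ := h s
  obtain ⟨l, hl⟩ := UAR.of_primes (MvPolynomial.C : D →+* MvPolynomial (Fin s) D)
    colon_mvPolynomial (Ideal.span {c}) (fun P hP hcP => hU P hP
      (hcP (Ideal.mem_span_singleton_self c)) s) _ le_rfl
  refine ⟨k + l, fun I n x hx => ?_⟩
  have h1 := hl I (n - k) ⟨hk I n x hx, by
    rw [Ideal.map_span, Set.image_singleton]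
    exact Ideal.mul_mem_right _ _ (Ideal.mem_span_singleton_self _)⟩
  rw [Ideal.map_span, Set.image_singleton, mul_comm, Ideal.mem_span_singleton_mul] at h1
  obtain ⟨z, hz, hzx⟩ := h1
  have hc' : (MvPolynomial.C c : MvPolynomial (Fin s) D) ≠ 0 := by
    rwa [Ne, MvPolynomial.C_eq_zero]
  rw [← mul_left_cancel₀ hc' hzx, ← Nat.sub_sub]
  exact hz

/-- Noetherian induction over the prime quotients of a fixed ring. -/
theorem PUBS.induct {R : Type v} [CommRing R] [IsNoetherianRing R]
    (hmul : ∀ (D : Type u) [CommRing D] [IsDomain D] (π : R →+* D), Function.Surjective π →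
      ∃ c : D, c ≠ 0 ∧ ∀ s : ℕ, ∃ k : ℕ, ∀ (I : Ideal (MvPolynomial (Fin s) D)) (n : ℕ)
      (x : MvPolynomial (Fin s) D), IsIntegralOverIdeal (I ^ n) x →
        MvPolynomial.C c * x ∈ I ^ (n - k))
    (huar : ∀ (D E : Type u) [CommRing D] [IsDomain D] [CommRing E] [IsDomain E] (π : R →+* D)
      (ρ : D →+* E), Function.Surjective π → Function.Surjective ρ → PUBS E → ∀ s : ℕ,
      UAR (RingHom.ker (MvPolynomial.map ρ : MvPolynomial (Fin s) D →+* MvPolynomial (Fin s) E)))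
    (E : Type u) [CommRing E] [IsDomain E] (π : R →+* E) (hπ : Function.Surjective π) :
    PUBS E := by
  obtain ⟨P, hP⟩ : ∃ P : Ideal R, RingHom.ker π = P := ⟨_, rfl⟩
  induction P using WellFoundedGT.induction generalizing E with
  | _ P ih =>
  have : IsNoetherianRing E := isNoetherianRing_of_surjective _ _ π hπ
  obtain ⟨c, hc, h⟩ := hmul E π hπ
  refine PUBS.of_multiplier c hc h fun Q hQ hcQ s => ?_
  have hmk : Function.Surjective (Ideal.Quotient.mk Q) := Ideal.Quotient.mk_surjective
  have hQ' : PUBS (E ⧸ Q) := by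
    refine ih (RingHom.ker ((Ideal.Quotient.mk Q).comp π)) ?_ (E ⧸ Q)
      ((Ideal.Quotient.mk Q).comp π) (hmk.comp hπ) rfl
    obtain ⟨r, rfl⟩ := hπ c
    rw [← hP]
    refine lt_of_le_of_ne (fun x hx => ?_) fun heq => hc ?_
    · rw [RingHom.mem_ker] at hx ⊢
      rw [RingHom.comp_apply, hx, map_zero]
    · have : r ∈ RingHom.ker ((Ideal.Quotient.mk Q).comp π) := by
        rw [RingHom.mem_ker, RingHom.comp_apply, Ideal.Quotient.eq_zero_iff_mem]
        exact hcQ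
      rwa [← heq, RingHom.mem_ker] at this
  have := huar E (E ⧸ Q) π (Ideal.Quotient.mk Q) hπ hmk hQ' s
  rwa [MvPolynomial.ker_map, Ideal.mk_ker] at this

theorem frobenius_finite_of_surjective {R E : Type*} [CommRing R] [CommRing E] (p : ℕ)
    [Fact p.Prime] [CharP R p] [CharP E p] (π : R →+* E) (hπ : Function.Surjective π)
    (h : (frobenius R p).Finite) : (frobenius E p).Finite := by
  have h1 : (π.comp (frobenius R p)).Finite := (RingHom.Finite.of_surjective π hπ).comp h
  have h2 : π.comp (frobenius R p) = (frobenius E p).comp π := by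
    ext x; simp [frobenius_def]
  rw [h2] at h1
  exact RingHom.Finite.of_comp_finite h1

theorem charP_of_surjective {R E : Type*} [CommRing R] [CommRing E] [Nontrivial E] (p : ℕ)
    [Fact p.Prime] [CharP R p] (π : R →+* E) : CharP E p := by
  have h0 : (p : E) = 0 := by rw [← map_natCast π, CharP.cast_eq_zero, map_zero]
  exact (CharP.charP_iff_prime_eq_zero Fact.out).2 h0

/-- Domains which are quotients of an `F`-finite ring of finite dimension. -/
theorem PUBS.of_ffinite {R : Type v} [CommRing R] [IsNoetherianRing R] (p : ℕ) [Fact p.Prime]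
    [CharP R p] (hfin : (frobenius R p).Finite) (d : ℕ) (hd : ringKrullDim R ≤ d)
    (E : Type u) [CommRing E] [IsDomain E] (π : R →+* E) (hπ : Function.Surjective π) :
    PUBS E := by
  refine PUBS.induct (R := R) ?_ ?_ E π hπ
  · intro D _ _ π hπ
    have : IsNoetherianRing D := isNoetherianRing_of_surjective _ _ π hπ
    have := charP_of_surjective p π
    obtain ⟨c, hc, hF⟩ := HasFrob.exists p (frobenius_finite_of_surjective p π hπ hfin)
    have hdD := (ringKrullDim_le_of_surjective π hπ).trans hd
    refine ⟨c ^ 3, pow_ne_zero 3 hc, fun s => ⟨d + s + 3, fun I n x hx => ?_⟩⟩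
    rw [map_pow]
    refine frob_multiplier (p := p) (d + s) ?_ (hF.mvPolynomial s) I n x hx
    rw [MvPolynomial.ringKrullDim_of_isNoetherianRing]
    push_cast
    simp only [Nat.card_eq_fintype_card, Fintype.card_fin]
    gcongr
  · intro D E _ _ _ _ π ρ hπ hρ hE s
    have : IsNoetherianRing D := isNoetherianRing_of_surjective _ _ π hπ
    have := charP_of_surjective p π
    exact ((FGen.of_finite p (frobenius_finite_of_surjective p π hπ hfin)).mvPolynomial s).uar _
      (MvPolynomial.map_surjective ρ hρ) (hE.mvPolynomial s)

/-- The uniform Briançon–Skoda property for reduced rings that are finite over their `p`-th powers.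
-/
theorem UBS.of_ffinite {R : Type u} [CommRing R] [IsNoetherianRing R] [IsReduced R]
    (hdim : ∃ d : ℕ, ringKrullDim R ≤ d) (h : ModuleFiniteOverPthPowers R) : UBS R := by
  obtain ⟨d, hd⟩ := hdim
  obtain ⟨p, hp, hchar, f, hf, hfin⟩ := h
  have : Fact p.Prime := ⟨hp⟩
  have hff : f = frobenius R p := by ext x; rw [hf, frobenius_def]
  rw [hff] at hfin
  have key : ∀ P : Ideal R, P.IsPrime → PUBS (R ⧸ P) := fun P hP =>
    PUBS.of_ffinite p hfin d hd _ (Ideal.Quotient.mk P) Ideal.Quotient.mk_surjective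
  refine UBS.of_reduced (fun P hP => (key P hP).ubs) fun P hP => ?_
  have := (FGen.of_finite p hfin).uar (Ideal.Quotient.mk P) Ideal.Quotient.mk_surjective (key P hP)
  rwa [Ideal.mk_ker] at this

/-! ### Jacobians and traces -/

section Jacobian

open TensorProduct

/-- First-order Taylor expansion: the coefficients `H j` become the partial derivatives on the
diagonal. -/
theorem taylor {A T S ι : Type*} [CommRing A] [CommRing T] [CommRing S] [Algebra A T] [Algebra A S]
    [Fintype ι] [DecidableEq ι] (x y : ι → T) (μ : T →ₐ[A] S) (hμ : ∀ i, μ (x i) = μ (y i))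
    (G : MvPolynomial ι A) :
    ∃ H : ι → T, MvPolynomial.aeval x G - MvPolynomial.aeval y G = ∑ j, H j * (x j - y j) ∧
      ∀ j, μ (H j) = MvPolynomial.aeval (fun i => μ (x i)) (MvPolynomial.pderiv j G) := by
  induction G using MvPolynomial.induction_on with
  | C a => exact ⟨0, by simp, fun j => by simp⟩
  | add f g hf hg =>
    obtain ⟨H, h1, h2⟩ := hf
    obtain ⟨H', h1', h2'⟩ := hg
    refine ⟨H + H', ?_, fun j => ?_⟩
    · rw [map_add, map_add, add_sub_add_comm, h1, h1', ← Finset.sum_add_distrib]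
      exact Finset.sum_congr rfl fun j _ => by rw [Pi.add_apply]; ring
    · rw [Pi.add_apply, map_add, map_add, map_add, h2, h2']
  | mul_X f i hf =>
    obtain ⟨H, h1, h2⟩ := hf
    refine ⟨fun j => H j * x i + if j = i then MvPolynomial.aeval y f else 0, ?_, fun j => ?_⟩
    · have : ∀ j, (H j * x i + if j = i then MvPolynomial.aeval y f else 0) * (x j - y j) =
          x i * (H j * (x j - y j)) + if j = i then MvPolynomial.aeval y f * (x j - y j) else 0 := by
        intro j
        split_ifs <;> ring
      simp_rw [this]
      rw [Finset.sum_add_distrib, ← Finset.mul_sum, ← h1, Finset.sum_ite_eq' Finset.univ i]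
      simp only [map_mul, MvPolynomial.aeval_X, Finset.mem_univ, if_true]
      ring
    · rw [map_add, map_mul, h2, MvPolynomial.pderiv_mul, map_add, map_mul, map_mul,
        MvPolynomial.aeval_X, MvPolynomial.pderiv_X]
      congr 1
      by_cases hji : j = i
      · subst hji
        have : μ (MvPolynomial.aeval y f) = MvPolynomial.aeval (fun i => μ (x i)) f := by
          simp_rw [hμ]
          exact (MvPolynomial.comp_aeval_apply y μ f).symm ▸ rfl
        rw [if_pos rfl, this]
        simp
      · rw [if_neg hji]
        simp [Ne.symm hji]

theorem lmul_tmul {F K : Type*} [CommRing F] [CommRing K] [Algebra F K] (a b : K) :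
    Algebra.TensorProduct.lmul'' F (a ⊗ₜ[F] b) = a * b := rfl

/-- If both `K`-structures of `K ⊗ K` agree on `θ`, the trace over the left factor of multiplication
by `θ` is the image of `θ` under the multiplication `μ : K ⊗ K → K`, since multiplication by `θ` is
the map `z ↦ μ z • θ` of rank one. -/
theorem trace_contraction {F K : Type*} [Field F] [Field K] [Algebra F K] [FiniteDimensional F K]
    (θ : K ⊗[F] K) (hθ : ∀ k : K, (k ⊗ₜ[F] (1 : K)) * θ = ((1 : K) ⊗ₜ[F] k) * θ) :
    Algebra.trace K (K ⊗[F] K) θ = Algebra.TensorProduct.lmul'' F θ := by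
  have h : (Algebra.lmul K (K ⊗[F] K) θ : K ⊗[F] K →ₗ[K] K ⊗[F] K) =
      (Algebra.TensorProduct.lmul'' F : K ⊗[F] K →ₐ[K] K).toLinearMap.smulRight θ := by
    ext z
    change θ * (1 ⊗ₜ z) = Algebra.TensorProduct.lmul'' F (1 ⊗ₜ z) • θ
    rw [mul_comm, ← hθ, lmul_tmul, one_mul, Algebra.smul_def]
    rfl
  rw [Algebra.trace_apply, h, LinearMap.trace_smulRight]
  rfl

theorem trace_tmul {F K : Type*} [Field F] [Field K] [Algebra F K] [FiniteDimensional F K]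
    (b a : K) :
    Algebra.trace K (K ⊗[F] K) (b ⊗ₜ a) = b * algebraMap F K (Algebra.trace F K a) := by
  have : (b ⊗ₜ[F] a : K ⊗[F] K) = b • (1 ⊗ₜ a) := by
    rw [TensorProduct.smul_tmul', smul_eq_mul, mul_one]
  rw [this, map_smul, smul_eq_mul, Algebra.trace_apply, ← Algebra.baseChange_lmul,
    LinearMap.trace_baseChange, ← Algebra.trace_apply]

/-- If every element of `S` becomes integral over `A` after multiplication by a power of `g`, so
does every element of `K` which is integral over `S`. -/
theorem isIntegral_pow_mul {A S K : Type*} [CommRing A] [CommRing S] [Field K] [Algebra A S]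
    [Algebra S K] [Algebra A K] [IsScalarTower A S K] (g : S)
    (hg1 : IsIntegral A g) (hg : ∀ a : S, ∃ m : ℕ, IsIntegral A (g ^ m * a)) (s : K)
    (hs : IsIntegral S s) : ∃ m : ℕ, IsIntegral A (algebraMap S K g ^ m * s) := by
  obtain ⟨P, hP, hPs⟩ := hs
  choose m hm using hg
  have hm' : ∀ a n, m a ≤ n → IsIntegral A (g ^ n * a) := by
    intro a n hn
    obtain ⟨l, rfl⟩ := Nat.exists_eq_add_of_le hn
    rw [pow_add, mul_right_comm]
    exact (hm a).mul (hg1.pow l)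
  let M := ∑ i ∈ Finset.range P.natDegree, m (P.coeff i)
  refine ⟨M, ?_⟩
  have hroot : Polynomial.eval₂ (algebraMap S K) (algebraMap S K (g ^ M) * s)
      (P.scaleRoots (g ^ M)) = 0 := Polynomial.scaleRoots_eval₂_eq_zero _ hPs
  have hmon : ((P.scaleRoots (g ^ M)).map (algebraMap S K)).Monic :=
    ((Polynomial.monic_scaleRoots_iff _).2 hP).map _
  by_cases hd : P.natDegree = 0
  · rw [Polynomial.eq_one_of_monic_natDegree_zero hP hd] at hPs
    simp at hPs
  rw [← map_pow]
  refine IsIntegral.of_aeval_monic_of_isIntegral_coeff hmon ?_ ?_ ?_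
  · rwa [((Polynomial.monic_scaleRoots_iff _).2 hP).natDegree_map, Polynomial.natDegree_scaleRoots]
  · rw [Polynomial.eval_map, hroot]
    exact isIntegral_zero
  · intro i
    rw [Polynomial.coeff_map]
    refine IsIntegral.algebraMap ?_
    rw [Polynomial.coeff_scaleRoots]
    rcases lt_trichotomy i P.natDegree with hi | hi | hi
    · rw [← pow_mul, mul_comm]
      apply hm'
      have h1 : m (P.coeff i) ≤ M :=
        Finset.single_le_sum (f := fun i => m (P.coeff i)) (fun _ _ => Nat.zero_le _)
          (Finset.mem_range.2 hi)
      exact h1.trans (Nat.le_mul_of_pos_right _ (by omega))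
    · subst hi
      rw [hP.coeff_natDegree, Nat.sub_self, pow_zero, mul_one]
      exact isIntegral_one
    · rw [Polynomial.coeff_eq_zero_of_natDegree_lt hi, zero_mul]
      exact isIntegral_zero

/-- The Jacobian multiplies integral elements into `S`, locally where `S` is quasi-finite over the
normal domain `A`. The Jacobian is the image of `Δ ∈ S ⊗ S` annihilated by all
`x ⊗ 1 - 1 ⊗ x`, and the traces of integral elements lie in `A`. -/
theorem jacobian_mul {A S F K ι : Type*} [CommRing A] [CommRing S] [IsDomain S]
    [IsIntegrallyClosed A] [Field F] [Field K]
    [Algebra A S] [Algebra A F] [IsFractionRing A F] [Algebra S K] [IsFractionRing S K]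
    [Algebra F K] [Algebra A K] [IsScalarTower A S K] [IsScalarTower A F K]
    [Fintype ι] [DecidableEq ι] (x : ι → S) (hx : Algebra.adjoin A (Set.range x) = ⊤)
    (G : ι → MvPolynomial ι A) (hG : ∀ i, MvPolynomial.aeval x (G i) = 0) (g : S) (hg0 : g ≠ 0)
    (hg1 : IsIntegral A g) (hg : ∀ a : S, ∃ m : ℕ, IsIntegral A (g ^ m * a)) (s : K)
    (hs : IsIntegral S s) : ∃ (m : ℕ) (r : S), algebraMap S K r =
      algebraMap S K (g ^ m * (Matrix.of fun i j =>
        MvPolynomial.aeval x (MvPolynomial.pderiv j (G i))).det) * s := by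
  have hgK : algebraMap S K g ≠ 0 := by
    rwa [Ne, IsFractionRing.to_map_eq_zero_iff]
  have halgF : ∀ a : S, IsAlgebraic F (algebraMap S K a) := by
    intro a
    obtain ⟨m, hm⟩ := hg a
    have h1 : IsIntegral F (algebraMap S K g ^ m * algebraMap S K a) := by
      rw [← map_pow, ← map_mul]
      exact (hm.algebraMap (B := K)).tower_top
    have h2 : IsIntegral F (algebraMap S K g ^ m) := by
      rw [← map_pow]
      exact ((hg1.pow m).algebraMap (B := K)).tower_top
    have h3 := h2.isAlgebraic.inv.mul h1.isAlgebraic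
    rwa [← mul_assoc, inv_mul_cancel₀ (pow_ne_zero m hgK), one_mul] at h3
  let xK : ι → K := fun i => algebraMap S K (x i)
  have hSadj : ∀ a : S, algebraMap S K a ∈ Algebra.adjoin F (Set.range xK) := by
    intro a
    have ha : a ∈ Algebra.adjoin A (Set.range x) := by rw [hx]; trivial
    induction ha using Algebra.adjoin_induction with
    | mem y hy =>
      obtain ⟨i, rfl⟩ := hy
      exact Algebra.subset_adjoin ⟨i, rfl⟩
    | algebraMap r =>
      rw [← IsScalarTower.algebraMap_apply, IsScalarTower.algebraMap_apply A F K]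
      exact Subalgebra.algebraMap_mem _ _
    | add y z _ _ hy hz => rw [map_add]; exact add_mem hy hz
    | mul y z _ _ hy hz => rw [map_mul]; exact mul_mem hy hz
  have hadj : Algebra.adjoin F (Set.range xK) = ⊤ := by
    rw [eq_top_iff]
    intro y _
    obtain ⟨a, b, _, rfl⟩ := IsFractionRing.div_surjective S y
    rw [div_eq_mul_inv]
    exact mul_mem (hSadj a) (Subalgebra.inv_mem_of_algebraic _ (x := ⟨_, hSadj b⟩) (halgF b))
  have : FiniteDimensional F K := by
    have h1 := fg_adjoin_of_finite (R := F) (Set.finite_range xK) (by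
      rintro _ ⟨i, rfl⟩
      exact (halgF (x i)).isIntegral)
    rw [hadj, Algebra.top_toSubmodule] at h1
    exact ⟨h1⟩
  -- the element `Δ`
  let x₁ : ι → S ⊗[A] S := fun i => x i ⊗ₜ 1
  let x₂ : ι → S ⊗[A] S := fun i => 1 ⊗ₜ x i
  let μ : S ⊗[A] S →ₐ[A] S := Algebra.TensorProduct.lmul' A
  have hμ₁ : ∀ i, μ (x₁ i) = x i := fun i => by simp [μ, x₁]
  have hμ₂ : ∀ i, μ (x₂ i) = x i := fun i => by simp [μ, x₂]
  have hμ : ∀ i, μ (x₁ i) = μ (x₂ i) := fun i => by rw [hμ₁, hμ₂]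
  choose H hH1 hH2 using fun i => taylor x₁ x₂ μ hμ (G i)
  have hz1 : ∀ i, MvPolynomial.aeval x₁ (G i) = 0 := by
    intro i
    have := MvPolynomial.comp_aeval_apply x (Algebra.TensorProduct.includeLeft : S →ₐ[A] S ⊗[A] S)
      (G i)
    rw [hG, map_zero] at this
    exact this.symm
  have hz2 : ∀ i, MvPolynomial.aeval x₂ (G i) = 0 := by
    intro i
    have := MvPolynomial.comp_aeval_apply x (Algebra.TensorProduct.includeRight : S →ₐ[A] S ⊗[A] S)
      (G i)
    rw [hG, map_zero] at this
    exact this.symm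
  let HM : Matrix ι ι (S ⊗[A] S) := Matrix.of H
  have hker : ∀ j, HM.det * (x₁ j - x₂ j) = 0 := by
    have h0 : HM.mulVec (fun j => x₁ j - x₂ j) = 0 := by
      ext i
      have := hH1 i
      rw [hz1, hz2, sub_zero] at this
      exact this.symm
    have h1 : (HM.adjugate * HM).mulVec (fun j => x₁ j - x₂ j) = 0 := by
      rw [← Matrix.mulVec_mulVec, h0, Matrix.mulVec_zero]
    rw [Matrix.adjugate_mul, Matrix.smul_mulVec, Matrix.one_mulVec] at h1
    exact fun j => congrFun h1 j
  set J := (Matrix.of fun i j => MvPolynomial.aeval x (MvPolynomial.pderiv j (G i))).det with hJ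
  have hdet : μ HM.det = J := by
    rw [AlgHom.map_det, hJ]
    congr 1
    ext i j
    change μ (H i j) = _
    rw [hH2]
    simp_rw [hμ₁]
    rfl
  -- transfer to `K ⊗ K`
  let aSK : S →ₐ[A] K := IsScalarTower.toAlgHom A S K
  let i₁ : S →ₐ[A] K ⊗[F] K :=
    ((Algebra.TensorProduct.includeLeft : K →ₐ[F] K ⊗[F] K).restrictScalars A).comp aSK
  let i₂ : S →ₐ[A] K ⊗[F] K :=
    ((Algebra.TensorProduct.includeRight : K →ₐ[F] K ⊗[F] K).restrictScalars A).comp aSK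
  let h : S ⊗[A] S →ₐ[A] K ⊗[F] K := Algebra.TensorProduct.lift i₁ i₂ fun _ _ => .all _ _
  have h_tmul : ∀ a b : S, h (a ⊗ₜ b) = algebraMap S K a ⊗ₜ algebraMap S K b := by
    intro a b
    simp [h, i₁, i₂, aSK]
  have hθ : ∀ k : K, (k ⊗ₜ[F] (1 : K)) * h HM.det = ((1 : K) ⊗ₜ[F] k) * h HM.det := by
    intro k
    have hk : k ∈ Algebra.adjoin F (Set.range xK) := by rw [hadj]; trivial
    induction hk using Algebra.adjoin_induction with
    | mem y hy =>
      obtain ⟨j, rfl⟩ := hy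
      have h1 := congrArg h (hker j)
      rw [map_mul, map_sub, map_zero, h_tmul, h_tmul, map_one, mul_comm, sub_mul, sub_eq_zero] at h1
      exact h1
    | algebraMap r =>
      rw [Algebra.algebraMap_eq_smul_one, TensorProduct.smul_tmul]
    | add y z _ _ hy hz =>
      rw [TensorProduct.add_tmul, TensorProduct.tmul_add, add_mul, add_mul, hy, hz]
    | mul y z _ _ hy hz =>
      have e1 : ((y * z) ⊗ₜ[F] (1 : K)) = (y ⊗ₜ[F] (1 : K)) * (z ⊗ₜ[F] (1 : K)) := by simp
      have e2 : ((1 : K) ⊗ₜ[F] (y * z)) = ((1 : K) ⊗ₜ[F] y) * ((1 : K) ⊗ₜ[F] z) := by simp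
      rw [e1, e2, mul_assoc, hz, mul_left_comm, hy, mul_left_comm, ← mul_assoc]
  have hlmul : ∀ θ, Algebra.TensorProduct.lmul'' F (h θ) = algebraMap S K (μ θ) := by
    intro θ
    induction θ using TensorProduct.induction_on with
    | zero => simp
    | tmul a b => rw [h_tmul, lmul_tmul, Algebra.TensorProduct.lmul'_apply_tmul, map_mul]
    | add y z hy hz => rw [map_add, map_add, hy, hz, map_add, map_add]
  have hinteg : ∀ θ : S ⊗[A] S, ∃ m, ∀ n, m ≤ n → ∃ r : S, algebraMap S K r =
      Algebra.trace K (K ⊗[F] K) ((1 : K) ⊗ₜ[F] (algebraMap S K g ^ n * s) * h θ) := by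
    intro θ
    induction θ using TensorProduct.induction_on with
    | zero => exact ⟨0, fun n _ => ⟨0, by simp⟩⟩
    | tmul b a =>
      obtain ⟨m, hm⟩ := isIntegral_pow_mul (K := K) g hg1 hg (s * algebraMap S K a)
        (hs.mul isIntegral_algebraMap)
      refine ⟨m, fun n hn => ?_⟩
      obtain ⟨l, rfl⟩ := Nat.exists_eq_add_of_le hn
      have h1 : IsIntegral A (algebraMap S K g ^ (m + l) * s * algebraMap S K a) := by
        have := ((hg1.pow l).algebraMap (B := K)).mul hm
        rwa [map_pow, ← mul_assoc, ← pow_add, add_comm l m, ← mul_assoc] at this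
      have h2 := Algebra.isIntegral_trace (L := F) h1
      obtain ⟨y, hy⟩ := IsIntegrallyClosed.isIntegral_iff.1 h2
      refine ⟨b * algebraMap A S y, ?_⟩
      rw [h_tmul, Algebra.TensorProduct.tmul_mul_tmul, one_mul, trace_tmul, ← hy, map_mul,
        ← IsScalarTower.algebraMap_apply, ← IsScalarTower.algebraMap_apply]
    | add y z hy hz =>
      obtain ⟨m, hm⟩ := hy
      obtain ⟨m', hm'⟩ := hz
      refine ⟨max m m', fun n hn => ?_⟩
      obtain ⟨r, hr⟩ := hm n (le_of_max_le_left hn)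
      obtain ⟨r', hr'⟩ := hm' n (le_of_max_le_right hn)
      exact ⟨r + r', by rw [map_add, map_add, mul_add, map_add, hr, hr']⟩
  obtain ⟨m, hm⟩ := hinteg HM.det
  obtain ⟨r, hr⟩ := hm m le_rfl
  refine ⟨m, r, ?_⟩
  rw [hr, trace_contraction, map_mul, hlmul, lmul_tmul, hdet, map_mul, map_pow]
  · ring
  · intro k
    rw [mul_left_comm, hθ, mul_left_comm]

end Jacobian

/-! ### Zariski's main theorem and perturbed parameters -/

/-- Some translate `b + w` with `w ∈ Q ^ M` avoids finitely many given primes strictly below `Q`. -/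
theorem exists_avoid_pow {S : Type*} [CommRing S] (Q : Ideal S) [hQ : Q.IsPrime] (b : S) (M : ℕ)
    (hM : 0 < M) (s : Finset (Ideal S)) (hs : ∀ P ∈ s, P.IsPrime ∧ P < Q) :
    ∃ w ∈ Q ^ M, ∀ P ∈ s, b + w ∉ P := by
  obtain ⟨w, hw, hwP⟩ : ∃ w ∈ Q ^ M, ∀ P ∈ s, w ∉ P := by
    by_contra hcon
    push Not at hcon
    have h1 : ((Q ^ M : Ideal S) : Set S) ⊆ ⋃ P ∈ (↑s : Set (Ideal S)), (P : Set S) := by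
      intro w hw
      obtain ⟨P, hP, hwP⟩ := hcon w hw
      exact Set.mem_biUnion hP hwP
    rw [Ideal.subset_union_prime (f := fun P : Ideal S => P) ⊥ ⊥ (fun P hP _ _ => (hs P hP).1)] at h1
    obtain ⟨P, hP, hle⟩ := h1
    have := (hs P hP).1
    exact ((hs P hP).2).not_ge (this.le_of_pow_le hle)
  have hwQ : w ∈ Q := Ideal.pow_le_self hM.ne' hw
  have key : ∃ k : ℕ, ∀ P ∈ s, b + w ^ (k + 1) ∉ P := by
    by_contra hcon
    push Not at hcon
    choose P hP hP' using hcon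
    obtain ⟨i, j, hij, hPij⟩ := Finite.exists_ne_map_eq_of_infinite
      (fun k => (⟨P k, hP k⟩ : s))
    have hPij : P i = P j := congrArg Subtype.val hPij
    wlog hlt : i < j generalizing i j
    · exact this j i hij.symm (Subtype.ext hPij.symm) hPij.symm (by omega)
    obtain ⟨l, rfl⟩ := Nat.exists_eq_add_of_lt hlt
    have hprime := (hs _ (hP i)).1
    have h1 : w ^ (i + 1) * (1 - w ^ (l + 1)) ∈ P i := by
      have := sub_mem (hP' i) (hPij ▸ hP' (i + l + 1) : b + w ^ (i + l + 1 + 1) ∈ P i)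
      have e : w ^ (i + 1) * (1 - w ^ (l + 1)) =
          b + w ^ (i + 1) - (b + w ^ (i + l + 1 + 1)) := by ring
      rw [e]; exact this
    rcases hprime.mem_or_mem h1 with h | h
    · exact hwP _ (hP i) (hprime.mem_of_pow_mem _ h)
    · have h2 := (hs _ (hP i)).2.le h
      have h3 : w ^ (l + 1) ∈ Q := Ideal.pow_mem_of_mem Q hwQ _ (by omega)
      exact hQ.ne_top ((Ideal.eq_top_iff_one _).2 (by simpa using add_mem h2 h3))
  obtain ⟨k, hk⟩ := key
  exact ⟨w ^ (k + 1), Ideal.pow_mem_of_mem _ hw _ (by omega), hk⟩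

/-- Perturbing the given elements of `Q` by elements of a high power of `Q`, the primes strictly
below `Q` that contain `q` and the perturbed elements have large height. -/
theorem exists_perturb {S ι : Type*} [CommRing S] [IsDomain S] [IsNoetherianRing S]
    (Q : Ideal S) [hQ : Q.IsPrime] (q : S) (hq : q ≠ 0) (b : ι → S)
    (M : ℕ) (hM : 0 < M) (s : Finset ι) :
    ∃ w : ι → S, (∀ i, w i ∈ Q ^ M) ∧ ∀ P : Ideal S, P.IsPrime → P < Q → q ∈ P →
      (∀ i ∈ s, b i + w i ∈ P) → (s.card + 1 : ℕ) ≤ P.height := by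
  classical
  induction s using Finset.induction_on with
  | empty =>
    refine ⟨0, fun i => zero_mem _, fun P hP _ hqP _ => ?_⟩
    have : (⊥ : Ideal S) < P := bot_lt_iff_ne_bot.2 fun h => hq (by simpa [h] using hqP)
    have := Ideal.height_add_one_le_of_lt_of_isPrime this
    simpa using le_of_add_le_right this
  | insert i s hi ih =>
    obtain ⟨w, hw, hP⟩ := ih
    let J : Ideal S := Ideal.span (insert q ((fun i => b i + w i) '' s))
    have hfin := Ideal.finite_minimalPrimes_of_isNoetherianRing S J
    obtain ⟨z, hz, hzP⟩ := exists_avoid_pow Q (b i) M hM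
      (hfin.toFinset.filter (fun P => P < Q)) (fun P hP => by
        rw [Finset.mem_filter, Set.Finite.mem_toFinset] at hP
        exact ⟨hP.1.1.1, hP.2⟩)
    refine ⟨Function.update w i z, fun j => ?_, fun P hPp hPQ hqP hPs => ?_⟩
    · by_cases hj : j = i
      · subst hj; simpa using hz
      · rw [Function.update_of_ne hj]; exact hw j
    have hJP : J ≤ P := by
      rw [Ideal.span_le]
      rintro x (rfl | ⟨j, hj, rfl⟩)
      · exact hqP
      · have := hPs j (Finset.mem_insert_of_mem hj)
        rwa [Function.update_of_ne (ne_of_mem_of_not_mem hj hi)] at this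
    obtain ⟨P', hP', hP'P⟩ := Ideal.exists_minimalPrimes_le hJP
    have hP'p : P'.IsPrime := hP'.1.1
    have h1 : (s.card + 1 : ℕ) ≤ P'.height :=
      hP P' hP'.1.1 (hP'P.trans_lt hPQ) (hP'.1.2 (Ideal.subset_span (Set.mem_insert _ _)))
        fun j hj => hP'.1.2 (Ideal.subset_span (Set.mem_insert_of_mem _ ⟨j, hj, rfl⟩))
    have hlt : P' < P := by
      refine lt_of_le_of_ne hP'P fun h => ?_
      subst h
      refine hzP P' ?_ ?_
      · rw [Finset.mem_filter, Set.Finite.mem_toFinset]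
        exact ⟨hP', hPQ⟩
      · have := hPs i (Finset.mem_insert_self _ _)
        rwa [Function.update_self] at this
    have h2 := Ideal.height_add_one_le_of_lt_of_isPrime hlt
    rw [Finset.card_insert_of_notMem hi]
    refine le_trans ?_ h2
    push_cast
    push_cast at h1
    gcongr

/-- Zariski's main theorem at a prime `Q` which is minimal over an ideal contained in the extension
of its contraction, with `S / Q` integral over `A`, so that `Q` is isolated in its fibre. -/
theorem zmt {A S : Type*} [CommRing A] [CommRing S] [IsNoetherianRing S] [Algebra A S]
    [Algebra.FiniteType A S] (Q : Ideal S) [hQ : Q.IsPrime] (I : Ideal S)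
    (hI : I ≤ (Q.comap (algebraMap A S)).map (algebraMap A S)) (hmin : Q ∈ I.minimalPrimes)
    (hinteg : ∀ x : S, ∃ P : Polynomial A, P.Monic ∧ Polynomial.aeval x P ∈ Q) :
    ∃ g ∉ Q, IsIntegral A g ∧ ∀ a : S, ∃ m : ℕ, IsIntegral A (g ^ m * a) := by
  classical
  have hfin := Ideal.finite_minimalPrimes_of_isNoetherianRing S I
  obtain ⟨f, hfQ, hf⟩ : ∃ f ∉ Q, ∀ P ∈ I.minimalPrimes, P ≠ Q → f ∈ P := by
    have : ∀ P ∈ hfin.toFinset.erase Q, ∃ f ∈ P, f ∉ Q := by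
      intro P hP
      rw [Finset.mem_erase, Set.Finite.mem_toFinset] at hP
      refine Set.not_subset.1 fun hle => hP.1 ?_
      exact le_antisymm hle (hmin.2 hP.2.1 hle)
    choose! f hf1 hf2 using this
    refine ⟨∏ P ∈ hfin.toFinset.erase Q, f P, ?_, ?_⟩
    · rw [Ideal.IsPrime.prod_mem_iff]
      rintro ⟨P, hP, h⟩
      exact hf2 P hP h
    · intro P hP hPQ
      have : P ∈ hfin.toFinset.erase Q := by
        rw [Finset.mem_erase, Set.Finite.mem_toFinset]; exact ⟨hPQ, hP⟩
      exact Ideal.mem_of_dvd P (Finset.dvd_prod_of_mem f this) (hf1 P this)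
  have hqf : Algebra.QuasiFiniteAt A Q := by
    refine Algebra.QuasiFiniteAt.of_isOpen_singleton_fiber (R := A) ⟨Q, hQ⟩ ?_
    rw [isOpen_induced_iff]
    refine ⟨PrimeSpectrum.basicOpen f, (PrimeSpectrum.basicOpen f).2, ?_⟩
    ext ⟨⟨Q', hQ'⟩, h⟩
    have hcomap : Q'.comap (algebraMap A S) = Q.comap (algebraMap A S) :=
      congrArg PrimeSpectrum.asIdeal h
    simp only [Set.mem_preimage, Set.mem_singleton_iff, SetLike.mem_coe,
      PrimeSpectrum.mem_basicOpen]
    refine ⟨fun hfQ' => ?_, fun h => ?_⟩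
    swap
    · have hQQ : Q' = Q := congrArg (fun z => z.1.asIdeal) h
      exact hQQ ▸ hfQ
    suffices hQQ : Q' = Q from Subtype.ext (PrimeSpectrum.ext hQQ)
    have hIQ' : I ≤ Q' := by
      refine hI.trans ?_
      rw [← hcomap]
      exact Ideal.map_comap_le
    obtain ⟨P, hP, hPQ'⟩ := Ideal.exists_minimalPrimes_le hIQ'
    have hPQ : P = Q := by
      by_contra hne
      exact hfQ' (hPQ' (hf P hP hne))
    subst hPQ
    by_contra hne
    obtain ⟨x, hxQ', hxP⟩ := SetLike.exists_of_lt (lt_of_le_of_ne hPQ' (Ne.symm hne))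
    obtain ⟨p, hp, hpx⟩ := hinteg x
    have := Ideal.comap_lt_comap_of_root_mem_sdiff (f := algebraMap A S) (I := P) (J := Q') hPQ'
      (r := x) ⟨hxQ', hxP⟩ (p := p) (by
        have : Nontrivial (A ⧸ P.comap (algebraMap A S)) :=
          Ideal.Quotient.nontrivial_iff.2 (Ideal.IsPrime.ne_top inferInstance)
        exact Polynomial.map_monic_ne_zero hp) hpx
    exact this.ne hcomap.symm
  have := Algebra.ZariskisMainProperty.of_finiteType (R := A) Q
  exact Algebra.zariskisMainProperty_iff.1 this

/-! ### Jacobian minors conduct the integral closure locally -/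

theorem derivation_mem_pow {R A : Type*} [CommRing R] [CommRing A] [Algebra R A]
    (D : Derivation R A A) (I : Ideal A) (M : ℕ) : ∀ a ∈ I ^ (M + 1), D a ∈ I ^ M := by
  induction M with
  | zero => intro a _; simp
  | succ M ih =>
    intro a ha
    rw [pow_succ'] at ha
    refine Submodule.mul_induction_on ha (fun b hb c hc => ?_) (fun b c hb hc => ?_)
    · rw [D.leibniz, smul_eq_mul, smul_eq_mul]
      refine add_mem ?_ ?_
      · rw [pow_succ']
        exact Ideal.mul_mem_mul hb (ih c hc)
      · exact Ideal.mul_mem_right _ _ hc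
    · rw [map_add]; exact add_mem hb hc

/-- If the generators of `S` satisfy `x ^ q = x` modulo `Q`, every element of `S` is integral
modulo `Q` over any intermediate algebra. -/
theorem exists_monic_aeval_mem {Λ A S ι : Type*} [CommRing Λ] [CommRing A] [CommRing S]
    [Nontrivial A] [Algebra Λ A] [Algebra A S] [Algebra Λ S] [IsScalarTower Λ A S] (x : ι → S)
    (hx : Algebra.adjoin Λ (Set.range x) = ⊤) (Q : Ideal S) (q : ℕ) (hq : 1 < q)
    (hxq : ∀ i, x i ^ q - x i ∈ Q) (a : S) :
    ∃ P : Polynomial A, P.Monic ∧ Polynomial.aeval a P ∈ Q := by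
  have key : IsIntegral A (Ideal.Quotient.mkₐ A Q a) := by
    have ha : a ∈ Algebra.adjoin Λ (Set.range x) := hx ▸ Algebra.mem_top
    induction ha using Algebra.adjoin_induction with
    | mem b hb =>
      obtain ⟨i, rfl⟩ := hb
      refine ⟨Polynomial.X ^ q - Polynomial.X, Polynomial.monic_X_pow_sub (by
        rw [Polynomial.degree_X]; exact_mod_cast hq), ?_⟩
      rw [Polynomial.eval₂_sub, Polynomial.eval₂_X_pow, Polynomial.eval₂_X, ← map_pow, ← map_sub]
      exact Ideal.Quotient.eq_zero_iff_mem.2 (hxq i)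
    | algebraMap r =>
      rw [IsScalarTower.algebraMap_apply Λ A S, AlgHom.commutes]
      exact isIntegral_algebraMap
    | add b c _ _ hb hc => rw [map_add]; exact hb.add hc
    | mul b c _ _ hb hc => rw [map_mul]; exact hb.mul hc
  obtain ⟨P, hP, h⟩ := key
  refine ⟨P, hP, ?_⟩
  rw [← Polynomial.aeval_def, Polynomial.aeval_algHom_apply] at h
  exact Ideal.Quotient.eq_zero_iff_mem.1 h

/-- As many elements as the transcendence degree, over which the ring is generically integral,
are algebraically independent. -/
theorem algebraicIndependent_of_integral {Λ S β : Type*} [CommRing Λ] [IsDomain Λ] [CommRing S]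
    [IsDomain S] [Algebra Λ S] [FaithfulSMul Λ S] [Finite β] (x₀ : β → S)
    (hx₀ : IsTranscendenceBasis Λ x₀) (u : β → S) (g : S) (hg0 : g ≠ 0)
    (hg1 : (MvPolynomial.aeval (R := Λ) u).toRingHom.IsIntegralElem g)
    (hg : ∀ a : S, ∃ m : ℕ, (MvPolynomial.aeval (R := Λ) u).toRingHom.IsIntegralElem (g ^ m * a)) :
    AlgebraicIndependent Λ u := by
  have key : ∀ a : S, (MvPolynomial.aeval (R := Λ) u).toRingHom.IsIntegralElem a →
      IsIntegral (Algebra.adjoin Λ (Set.range u)) a := by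
    rintro a ⟨P, hP, h⟩
    have hmem : ∀ p, MvPolynomial.aeval (R := Λ) u p ∈ Algebra.adjoin Λ (Set.range u) := by
      intro p
      rw [Algebra.adjoin_range_eq_range_aeval]
      exact ⟨p, rfl⟩
    refine ⟨P.map ((MvPolynomial.aeval (R := Λ) u).codRestrict _ hmem).toRingHom, hP.map _, ?_⟩
    rw [Polynomial.eval₂_map]
    exact h
  have : Algebra.IsAlgebraic (Algebra.adjoin Λ (Set.range u)) S := by
    refine ⟨fun a => ?_⟩
    obtain ⟨m, hm⟩ := hg a
    exact IsAlgebraic.of_mul (mem_nonZeroDivisors_of_ne_zero (pow_ne_zero m hg0))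
      ((key _ hg1).pow m).isAlgebraic (key _ hm).isAlgebraic
  exact (Algebra.IsAlgebraic.isTranscendenceBasis_of_lift_le_trdeg_of_finite Λ u
    hx₀.lift_cardinalMk_eq_trdeg.le).1

theorem det_diagonal_block {T β γ : Type*} [CommRing T] [Fintype β] [Fintype γ] [DecidableEq β]
    [DecidableEq γ] (d : β → T) (N : β ⊕ γ → β ⊕ γ → T)
    (h1 : ∀ i j, N (.inl i) (.inl j) = if j = i then d i else 0)
    (h2 : ∀ i j, N (.inl i) (.inr j) = 0) :
    (Matrix.of N).det = (∏ i, d i) * (Matrix.of fun i j => N (.inr i) (.inr j)).det := by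
  have : Matrix.of N = Matrix.fromBlocks (Matrix.diagonal d) 0
      (Matrix.of fun i j => N (.inr i) (.inl j)) (Matrix.of fun i j => N (.inr i) (.inr j)) := by
    ext i j
    rcases i with i | i <;> rcases j with j | j
    · rw [Matrix.fromBlocks_apply₁₁, Matrix.diagonal_apply, Matrix.of_apply, h1]
      simp [eq_comm]
    · rw [Matrix.fromBlocks_apply₁₂, Matrix.of_apply, h2]; rfl
    · rfl
    · rfl
  rw [this, Matrix.det_fromBlocks_zero₁₂, Matrix.det_diagonal]

section Main

variable {Λ S β γ : Type*} [CommRing Λ] [IsDomain Λ] [CommRing S] [IsDomain S]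
  [IsNoetherianRing S] [Algebra Λ S] [FaithfulSMul Λ S] [Fintype β] [Fintype γ]
  [DecidableEq β] [DecidableEq γ]

/-- Modulo `Q ^ M` the Jacobian of the `x i ^ q - x i + w i - a i` together with `G` is block
triangular, with diagonal entries `q * x i ^ (q - 1) - 1` in the first block. -/
theorem main_det {A : Type*} [CommRing A] [Algebra Λ A] [Algebra A S] [IsScalarTower Λ A S]
    (x : β ⊕ γ → S) (G : γ → MvPolynomial (β ⊕ γ) Λ) (Q : Ideal S) (q M : ℕ) (w : β → MvPolynomial (β ⊕ γ) Λ)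
    (hw : ∀ i, w i ∈ (Q.comap (MvPolynomial.aeval (R := Λ) x)) ^ (M + 1)) (a : β → A)
    (F : β ⊕ γ → MvPolynomial (β ⊕ γ) A)
    (hF1 : ∀ i, F (.inl i) = MvPolynomial.X (.inl i) ^ q - MvPolynomial.X (.inl i) +
      MvPolynomial.map (algebraMap Λ A) (w i) - MvPolynomial.C (a i))
    (hF2 : ∀ j, F (.inr j) = MvPolynomial.map (algebraMap Λ A) (G j)) :
    (Matrix.of fun i j => MvPolynomial.aeval x (MvPolynomial.pderiv j (F i))).det -
      (∏ i : β, ((q : S) * x (.inl i) ^ (q - 1) - 1)) *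
        (Matrix.of fun i j : γ => MvPolynomial.aeval x (MvPolynomial.pderiv (.inr j) (G i))).det
      ∈ Q ^ M := by
  have hmapQ : ∀ p ∈ (Q.comap (MvPolynomial.aeval (R := Λ) x)) ^ M,
      MvPolynomial.aeval (R := Λ) x p ∈ Q ^ M := by
    intro p hp
    have h1 := Ideal.mem_map_of_mem (MvPolynomial.aeval (R := Λ) x) hp
    rw [Ideal.map_pow] at h1
    exact Ideal.pow_right_mono Ideal.map_comap_le M h1
  have hpm : ∀ (j : β ⊕ γ) (p : MvPolynomial (β ⊕ γ) Λ),
      MvPolynomial.aeval x (MvPolynomial.pderiv j (MvPolynomial.map (algebraMap Λ A) p)) =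
      MvPolynomial.aeval x (MvPolynomial.pderiv j p) := by
    intro j p
    rw [MvPolynomial.pderiv_map, MvPolynomial.aeval_map_algebraMap]
  rw [← Ideal.Quotient.eq, map_mul, RingHom.map_det, RingHom.map_det, map_prod]
  have e1 : (Ideal.Quotient.mk (Q ^ M)).mapMatrix
      (Matrix.of fun i j => MvPolynomial.aeval x (MvPolynomial.pderiv j (F i))) =
      Matrix.of fun i j => Ideal.Quotient.mk (Q ^ M)
        (MvPolynomial.aeval x (MvPolynomial.pderiv j (F i))) := rfl
  have hinl : ∀ i j, Ideal.Quotient.mk (Q ^ M)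
      (MvPolynomial.aeval x (MvPolynomial.pderiv j (F (.inl i)))) =
      if j = .inl i then Ideal.Quotient.mk (Q ^ M) ((q : S) * x (.inl i) ^ (q - 1) - 1) else 0 := by
    intro i j
    have hz : Ideal.Quotient.mk (Q ^ M)
        (MvPolynomial.aeval x (MvPolynomial.pderiv j (w i))) = 0 :=
      Ideal.Quotient.eq_zero_iff_mem.2 (hmapQ _ (derivation_mem_pow _ _ M _ (hw i)))
    simp only [hF1, map_sub, map_add, MvPolynomial.pderiv_C, sub_zero, hpm, hz,
      add_zero, Derivation.leibniz_pow]
    split_ifs with h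
    · subst h
      rw [MvPolynomial.pderiv_X_self]
      simp [nsmul_eq_mul]
    · rw [MvPolynomial.pderiv_X_of_ne (Ne.symm h)]
      simp
  rw [e1, det_diagonal_block (fun i => Ideal.Quotient.mk (Q ^ M) ((q : S) * x (.inl i) ^ (q - 1) - 1))]
  · congr 2
    ext i j
    simp only [Matrix.of_apply, RingHom.mapMatrix_apply, Matrix.map_apply]
    rw [hF2, hpm]
  · intro i j
    rw [hinl]
    simp only [Sum.inl.injEq]
  · intro i j
    rw [hinl, if_neg (by simp)]

/-- The elements `x i ^ q - x i + w i` generate a polynomial, hence normal, subring over which `S`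
is quasi-finite at `Q` by `zmt`. By `jacobian_mul` this gives a multiplier which is congruent modulo
`Q ^ M` to the product of the `q * x i ^ (q - 1) - 1` and the Jacobian minor. -/
theorem main_step [IsIntegrallyClosed (MvPolynomial β Λ)]
    (x : β ⊕ γ → S) (hx : Algebra.adjoin Λ (Set.range x) = ⊤)
    (htb : IsTranscendenceBasis Λ (x ∘ Sum.inl))
    (G : γ → MvPolynomial (β ⊕ γ) Λ) (hG : ∀ j, MvPolynomial.aeval x (G j) = 0)
    (Q : Ideal S) [hQ : Q.IsPrime] (q : ℕ) (hq : 1 < q) (hxq : ∀ i, x i ^ q - x i ∈ Q)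
    (M : ℕ) (w : β → S) (hw : ∀ i, w i ∈ Q ^ (M + 1))
    (hmin : Q ∈ (Ideal.span (insert (q : S)
      (Set.range fun i => x (.inl i) ^ q - x (.inl i) + w i))).minimalPrimes)
    (e f : S) (hf : f ≠ 0)
    (hef : IsIntegral S (algebraMap S (FractionRing S) e / algebraMap S (FractionRing S) f)) :
    ∃ g ∉ Q, ∃ c, c - (∏ i : β, ((q : S) * x (.inl i) ^ (q - 1) - 1)) *
        (Matrix.of fun i j : γ => MvPolynomial.aeval x (MvPolynomial.pderiv (.inr j) (G i))).det
        ∈ Q ^ M ∧ f ∣ g * c * e := by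
  classical
  let u : β → S := fun i => x (.inl i) ^ q - x (.inl i) + w i
  let _ : Algebra (MvPolynomial β Λ) S := (MvPolynomial.aeval (R := Λ) u).toAlgebra
  have halg : ∀ p, algebraMap (MvPolynomial β Λ) S p = MvPolynomial.aeval (R := Λ) u p := fun _ => rfl
  have : IsScalarTower Λ (MvPolynomial β Λ) S := by
    refine IsScalarTower.of_algebraMap_eq fun r => ?_
    rw [halg, AlgHom.commutes]
  have hx' : Algebra.adjoin (MvPolynomial β Λ) (Set.range x) = ⊤ := by
    rw [eq_top_iff]
    intro a _
    have ha : a ∈ Algebra.adjoin Λ (Set.range x) := hx ▸ Algebra.mem_top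
    induction ha using Algebra.adjoin_induction with
    | mem b hb => exact Algebra.subset_adjoin hb
    | algebraMap r =>
      rw [IsScalarTower.algebraMap_apply Λ (MvPolynomial β Λ) S]
      exact Subalgebra.algebraMap_mem _ _
    | add b c _ _ hb hc => exact add_mem (hb trivial) (hc trivial)
    | mul b c _ _ hb hc => exact mul_mem (hb trivial) (hc trivial)
  have hft : Algebra.FiniteType (MvPolynomial β Λ) S := ⟨⟨(Set.finite_range x).toFinset, by
    rw [Set.Finite.coe_toFinset]; exact hx'⟩⟩
  have hqQ : (q : S) ∈ Q := hmin.1.2 (Ideal.subset_span (Set.mem_insert _ _))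
  obtain ⟨g, hgQ, hg1, hg⟩ := zmt (A := MvPolynomial β Λ) Q _ (by
    rw [Ideal.span_le]
    rintro a (rfl | ⟨i, rfl⟩)
    · have : (q : S) = algebraMap (MvPolynomial β Λ) S (q : MvPolynomial β Λ) := by simp
      rw [this]
      refine Ideal.mem_map_of_mem _ ?_
      rw [Ideal.mem_comap, ← this]
      exact hqQ
    · have : x (.inl i) ^ q - x (.inl i) + w i =
          algebraMap (MvPolynomial β Λ) S (MvPolynomial.X i) := by
        rw [halg, MvPolynomial.aeval_X]
      simp only [SetLike.mem_coe]
      rw [this]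
      refine Ideal.mem_map_of_mem _ ?_
      rw [Ideal.mem_comap, ← this]
      exact hmin.1.2 (Ideal.subset_span (Set.mem_insert_of_mem _ ⟨i, rfl⟩)))
    hmin (exists_monic_aeval_mem x hx Q q hq hxq)
  have hg0 : g ≠ 0 := fun h => hgQ (h ▸ zero_mem _)
  have hind : AlgebraicIndependent Λ u :=
    algebraicIndependent_of_integral (x ∘ Sum.inl) htb u g hg0 hg1 hg
  have hinj : Function.Injective (algebraMap (MvPolynomial β Λ) S) := hind
  have hfs : FaithfulSMul (MvPolynomial β Λ) S := (faithfulSMul_iff_algebraMap_injective _ _).2 hinj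
  have hfs' : FaithfulSMul (MvPolynomial β Λ) (FractionRing S) := by
    rw [faithfulSMul_iff_algebraMap_injective,
      IsScalarTower.algebraMap_eq (MvPolynomial β Λ) S (FractionRing S)]
    exact (IsFractionRing.injective S (FractionRing S)).comp hinj
  let _ : Algebra (FractionRing (MvPolynomial β Λ)) (FractionRing S) :=
    FractionRing.liftAlgebra (MvPolynomial β Λ) (FractionRing S)
  have : IsScalarTower (MvPolynomial β Λ) (FractionRing (MvPolynomial β Λ)) (FractionRing S) :=
    FractionRing.isScalarTower_liftAlgebra (MvPolynomial β Λ) (FractionRing S)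
  -- lifts of the perturbations to polynomials
  have hlift : ∀ i, ∃ W ∈ (Q.comap (MvPolynomial.aeval (R := Λ) x)) ^ (M + 1),
      MvPolynomial.aeval (R := Λ) x W = w i := by
    have hsurj : Function.Surjective (MvPolynomial.aeval (R := Λ) x) := by
      rw [← AlgHom.range_eq_top, ← Algebra.adjoin_range_eq_range_aeval, hx]
    intro i
    have h1 := hw i
    rw [← Ideal.map_comap_of_surjective (MvPolynomial.aeval (R := Λ) x) hsurj Q,
      ← Ideal.map_pow] at h1
    exact (Ideal.mem_map_iff_of_surjective _ hsurj).1 h1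
  choose W hW hWw using hlift
  let F : β ⊕ γ → MvPolynomial (β ⊕ γ) (MvPolynomial β Λ) := Sum.elim
    (fun i => MvPolynomial.X (.inl i) ^ q - MvPolynomial.X (.inl i) +
      MvPolynomial.map (algebraMap Λ (MvPolynomial β Λ)) (W i) - MvPolynomial.C (MvPolynomial.X i))
    (fun j => MvPolynomial.map (algebraMap Λ (MvPolynomial β Λ)) (G j))
  have hF : ∀ i, MvPolynomial.aeval x (F i) = 0 := by
    rintro (i | j)
    · simp only [F, Sum.elim_inl]
      rw [map_sub, map_add, map_sub, map_pow, MvPolynomial.aeval_X,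
        MvPolynomial.aeval_map_algebraMap, hWw, MvPolynomial.aeval_C, halg, MvPolynomial.aeval_X]
      exact sub_self _
    · simp only [F, Sum.elim_inr]
      rw [MvPolynomial.aeval_map_algebraMap, hG]
  obtain ⟨m, r, hr⟩ := jacobian_mul (F := FractionRing (MvPolynomial β Λ)) (K := FractionRing S)
    x hx' F hF g hg0 hg1 hg _ hef
  refine ⟨g ^ m, fun h => hgQ (hQ.mem_of_pow_mem _ h), _,
    main_det (A := MvPolynomial β Λ) x G Q q M W hW (fun i => MvPolynomial.X i) F (fun i => rfl)
      (fun j => rfl), r, ?_⟩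
  apply IsFractionRing.injective S (FractionRing S)
  have hf' : algebraMap S (FractionRing S) f ≠ 0 := by
    rwa [Ne, IsFractionRing.to_map_eq_zero_iff]
  rw [map_mul _ f r, hr, map_mul _ _ e, mul_div_assoc', mul_div_cancel₀ _ hf']

/-- The Jacobian minor of the relations `G` multiplies the elements `e / f` that are integral over
`S` into `S`, locally at a prime `Q` which contains `q` and all `x ^ q - x` for the generators `x`.
As `Q` lies strictly below another prime `Q₁`, its height is at most `|β| + 1`. -/
theorem main_local [IsIntegrallyClosed (MvPolynomial β Λ)]
    (x : β ⊕ γ → S) (hx : Algebra.adjoin Λ (Set.range x) = ⊤)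
    (htb : IsTranscendenceBasis Λ (x ∘ Sum.inl))
    (G : γ → MvPolynomial (β ⊕ γ) Λ) (hG : ∀ j, MvPolynomial.aeval x (G j) = 0)
    (Q Q₁ : Ideal S) [hQ : Q.IsPrime] [hQ₁ : Q₁.IsPrime] (hQQ₁ : Q < Q₁)
    (hdim : ringKrullDim S ≤ (Fintype.card β + 2 : ℕ)) (q : ℕ) (hq : 1 < q)
    (hq0 : (q : S) ≠ 0) (hqQ : (q : S) ∈ Q) (hxq : ∀ i, x i ^ q - x i ∈ Q)
    (e f : S) (hf : f ≠ 0)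
    (hef : IsIntegral S (algebraMap S (FractionRing S) e / algebraMap S (FractionRing S) f)) :
    ∃ g ∉ Q, f ∣ g *
      (Matrix.of fun i j : γ => MvPolynomial.aeval x (MvPolynomial.pderiv (.inr j) (G i))).det *
      e := by
  set cc := (Matrix.of fun i j : γ => MvPolynomial.aeval x
    (MvPolynomial.pderiv (.inr j) (G i))).det with hcc
  set p := ∏ i : β, ((q : S) * x (.inl i) ^ (q - 1) - 1) with hp
  have hpQ : p ∉ Q := by
    rw [hp, Ideal.IsPrime.prod_mem_iff]
    rintro ⟨i, -, hi⟩
    refine hQ.ne_top ((Ideal.eq_top_iff_one _).2 ?_)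
    have := sub_mem (Ideal.mul_mem_right (x (.inl i) ^ (q - 1)) Q hqQ) hi
    simpa using this
  -- For a general perturbation `Q` is minimal over the parameters, as otherwise its height would
  -- exceed the bound given by the dimension.
  have hstep : ∀ M : ℕ, ∃ g ∉ Q, ∃ c, c - p * cc ∈ Q ^ M ∧ f ∣ g * c * e := by
    intro M
    obtain ⟨w, hw, hwP⟩ := exists_perturb Q (q : S) hq0
      (fun i : β => x (.inl i) ^ q - x (.inl i)) (M + 1) (Nat.succ_pos M) Finset.univ
    refine main_step x hx htb G hG Q q hq hxq M w hw ?_ e f hf hef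
    have hle : Ideal.span (insert (q : S)
        (Set.range fun i => x (.inl i) ^ q - x (.inl i) + w i)) ≤ Q := by
      rw [Ideal.span_le]
      rintro a (rfl | ⟨i, rfl⟩)
      · exact hqQ
      · exact add_mem (hxq _) (Ideal.pow_le_self (Nat.succ_ne_zero M) (hw i))
    obtain ⟨P, hP, hPQ⟩ := Ideal.exists_minimalPrimes_le hle
    rcases hPQ.eq_or_lt with rfl | hlt
    · exact hP
    exfalso
    have hPp : P.IsPrime := hP.1.1
    have h1 := hwP P hPp hlt (hP.1.2 (Ideal.subset_span (Set.mem_insert _ _)))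
      (fun i _ => hP.1.2 (Ideal.subset_span (Set.mem_insert_of_mem _ ⟨i, rfl⟩)))
    have h2 := Ideal.height_add_one_le_of_lt_of_isPrime hlt
    have h3 := Ideal.height_add_one_le_of_lt_of_isPrime hQQ₁
    have h4 : ((Fintype.card β + 3 : ℕ) : ℕ∞) ≤ Q₁.height := by
      refine le_trans ?_ h3
      refine le_trans ?_ (add_le_add_left h2 1)
      refine le_trans ?_ (add_le_add_left (add_le_add_left h1 1) 1)
      rw [Finset.card_univ]
      push_cast
      rw [add_assoc, add_assoc]
      norm_num
    have h5 := (Ideal.height_le_ringKrullDim_of_ne_top hQ₁.ne_top).trans hdim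
    have h6 : Q₁.height ≤ ((Fintype.card β + 2 : ℕ) : ℕ∞) := WithBot.coe_le_coe.1 h5
    have h7 := h4.trans h6
    have : Fintype.card β + 3 ≤ Fintype.card β + 2 := by exact_mod_cast h7
    omega
  -- By Krull's intersection theorem the error terms in `Q ^ M` disappear.
  let L := Localization.AtPrime Q
  have hL : algebraMap S L (p * cc * e) ∈ (Ideal.span {f}).map (algebraMap S L) := by
    refine mem_of_forall_near _ _ fun 𝔪 h𝔪 t => ?_
    obtain ⟨g, hg, c, hc, r, hr⟩ := hstep t
    have h𝔪' : 𝔪 = Q.map (algebraMap S L) := by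
      rw [IsLocalRing.eq_maximalIdeal h𝔪, Localization.AtPrime.map_eq_maximalIdeal]
    have e1 : p * cc * e = c * e - (c - p * cc) * e := by ring
    rw [e1, map_sub]
    refine sub_mem (Ideal.mem_sup_left ?_) (Ideal.mem_sup_right ?_)
    · have hu : IsUnit (algebraMap S L g) := IsLocalization.map_units L (⟨g, hg⟩ : Q.primeCompl)
      rw [← Ideal.unit_mul_mem_iff_mem _ hu, ← map_mul, ← mul_assoc, hr]
      exact Ideal.mem_map_of_mem _ (Ideal.mul_mem_right _ _ (Ideal.mem_span_singleton_self f))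
    · rw [h𝔪', ← Ideal.map_pow]
      exact Ideal.mem_map_of_mem _ (Ideal.mul_mem_right _ _ hc)
  rw [IsLocalization.algebraMap_mem_map_algebraMap_iff Q.primeCompl] at hL
  obtain ⟨g, hg, h⟩ := hL
  refine ⟨g * p, hQ.mul_notMem hg hpQ, ?_⟩
  rw [Ideal.mem_span_singleton] at h
  convert h using 1
  ring

end Main

/-! ### Extended Rees algebras -/

/-- A generically algebraic extension does not increase dimension more than its transcendence
basis does. -/
theorem dim_le_of_generators {Λ S β γ : Type*} [CommRing Λ] [IsDomain Λ] [IsNoetherianRing Λ]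
    [CommRing S] [IsDomain S] [Algebra Λ S] [Fintype β] [Fintype γ] (δ : ℕ)
    (hδ : ringKrullDim Λ ≤ δ) (x : β ⊕ γ → S) (hx : Algebra.adjoin Λ (Set.range x) = ⊤)
    (halg : Algebra.IsAlgebraic (Algebra.adjoin Λ (Set.range (x ∘ Sum.inl))) S) :
    ringKrullDim S ≤ (δ + Fintype.card β : ℕ) := by
  classical
  let U := Algebra.adjoin Λ (Set.range (x ∘ Sum.inl))
  have hmem : ∀ p, MvPolynomial.aeval (R := Λ) (x ∘ Sum.inl) p ∈ U := by
    intro p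
    change _ ∈ Algebra.adjoin Λ (Set.range (x ∘ Sum.inl))
    rw [Algebra.adjoin_range_eq_range_aeval]
    exact ⟨p, rfl⟩
  let φ : MvPolynomial β Λ →+* U.toSubring :=
    ((MvPolynomial.aeval (R := Λ) (x ∘ Sum.inl)).codRestrict U hmem).toRingHom
  have hφ : Function.Surjective φ := by
    rintro ⟨a, ha⟩
    have ha' : a ∈ U := ha
    change a ∈ Algebra.adjoin Λ (Set.range (x ∘ Sum.inl)) at ha'
    rw [Algebra.adjoin_range_eq_range_aeval] at ha'
    obtain ⟨p, hp⟩ := ha'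
    exact ⟨p, Subtype.ext hp⟩
  have hnoeth : IsNoetherianRing U.toSubring := isNoetherianRing_of_surjective _ _ φ hφ
  have hdimU : ringKrullDim U.toSubring ≤ (δ + Fintype.card β : ℕ) := by
    refine (ringKrullDim_le_of_surjective φ hφ).trans ?_
    rw [MvPolynomial.ringKrullDim_of_isNoetherianRing, Nat.card_eq_fintype_card]
    push_cast
    gcongr
  obtain ⟨-, h2⟩ := dim_adjoin_algebraic U.toSubring _ hdimU
    (Finset.univ.image (x ∘ Sum.inr)) (by
      intro b _
      obtain ⟨p, hp, hpb⟩ := halg.isAlgebraic b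
      refine ⟨p.map (algebraMap U S), ?_, fun n => ?_, ?_⟩
      · rwa [Ne, Polynomial.map_eq_zero_iff Subtype.val_injective]
      · rw [Polynomial.coeff_map]; exact (p.coeff n).2
      · rw [Polynomial.eval_map_algebraMap, hpb])
  have htop : (U.toSubring ⊔ Subring.closure ((Finset.univ.image (x ∘ Sum.inr) : Finset S) : Set S))
      = ⊤ := by
    rw [eq_top_iff]
    intro a _
    have ha : a ∈ Algebra.adjoin Λ (Set.range x) := hx ▸ Algebra.mem_top
    induction ha using Algebra.adjoin_induction with
    | mem b hb =>
      obtain ⟨i | j, rfl⟩ := hb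
      · exact (le_sup_left : U.toSubring ≤ _) (Algebra.subset_adjoin ⟨i, rfl⟩)
      · exact (le_sup_right : Subring.closure _ ≤ U.toSubring ⊔ _) (Subring.subset_closure (by simp))
    | algebraMap r => exact (le_sup_left : U.toSubring ≤ _) (U.algebraMap_mem r)
    | add b c _ _ hb hc => exact add_mem (hb trivial) (hc trivial)
    | mul b c _ _ hb hc => exact mul_mem (hb trivial) (hc trivial)
  rw [htop, ringKrullDim_eq_of_ringEquiv Subring.topEquiv] at h2
  exact h2

/-- A clearing of denominators in an equation of integral dependence. -/
theorem isIntegral_div {S K : Type*} [CommRing S] [Field K] [Algebra S K] (e f : S)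
    (hf : algebraMap S K f ≠ 0) (m : ℕ) (_hm : 0 < m) (α : ℕ → S)
    (h : e ^ m + ∑ i ∈ Finset.Icc 1 m, α i * f ^ i * e ^ (m - i) = 0) :
    IsIntegral S (algebraMap S K e / algebraMap S K f) := by
  refine ⟨Polynomial.X ^ m + ∑ i ∈ Finset.Icc 1 m, Polynomial.C (α i) * Polynomial.X ^ (m - i),
    Polynomial.monic_X_pow_add ?_, ?_⟩
  · refine lt_of_le_of_lt (Polynomial.degree_sum_le _ _) ?_
    rw [Finset.sup_lt_iff (by exact WithBot.bot_lt_coe m)]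
    intro i hi
    rw [Finset.mem_Icc] at hi
    refine lt_of_le_of_lt (Polynomial.degree_C_mul_X_pow_le _ _) ?_
    exact_mod_cast (by omega : m - i < m)
  · rw [Polynomial.eval₂_add, Polynomial.eval₂_X_pow, Polynomial.eval₂_finsetSum]
    simp only [Polynomial.eval₂_mul, Polynomial.eval₂_C, Polynomial.eval₂_X_pow]
    have h1 := congrArg (algebraMap S K) h
    rw [map_add, map_pow, map_sum, map_zero] at h1
    simp only [map_mul, map_pow] at h1
    have h2 : (algebraMap S K f) ^ m ≠ 0 := pow_ne_zero m hf
    refine (mul_right_inj' h2).1 ?_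
    rw [mul_zero, ← h1, mul_add, Finset.mul_sum]
    congr 1
    · rw [div_pow, mul_div_cancel₀ _ h2]
    · refine Finset.sum_congr rfl fun i hi => ?_
      rw [Finset.mem_Icc] at hi
      have h3 : (algebraMap S K f) ^ (m - i) ≠ 0 := pow_ne_zero _ hf
      have h4 : (algebraMap S K f) ^ m = (algebraMap S K f) ^ i * (algebraMap S K f) ^ (m - i) := by
        rw [← pow_add]; congr 1; omega
      rw [h4, div_pow]
      field_simp

section Rees

open LaurentPolynomial

variable {C : Type*} [CommRing C]

/-- The extended Rees algebra of `Y` as a subalgebra of the Laurent polynomials: the coefficient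
of `T ^ (-j)` lies in `Y ^ j`. -/
def extRees (Λ : Type*) [CommRing Λ] [Algebra Λ C] (Y : Ideal C) :
    Subalgebra Λ (LaurentPolynomial C) where
  carrier := {p | ∀ k : ℤ, p.coeff k ∈ Y ^ (-k).toNat}
  add_mem' := by
    intro p q hp hq k
    rw [AddMonoidAlgebra.coeff_add, Finsupp.add_apply]
    exact add_mem (hp k) (hq k)
  mul_mem' := by
    intro p q hp hq k
    rw [AddMonoidAlgebra.coeff_mul]
    refine Ideal.sum_mem _ fun i _ => Ideal.sum_mem _ fun j _ => ?_
    dsimp only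
    split_ifs with h
    · have h1 := Ideal.mul_mem_mul (hp i) (hq j)
      rw [← pow_add] at h1
      exact Ideal.pow_le_pow_right (by omega) h1
    · exact zero_mem _
  algebraMap_mem' := by
    intro r k
    rw [LaurentPolynomial.algebraMap_apply]
    change (AddMonoidAlgebra.single (0 : ℤ) (algebraMap Λ C r)).coeff k ∈ _
    rw [AddMonoidAlgebra.coeff_single, Finsupp.single_apply]
    split_ifs with h
    · subst h; simp
    · exact zero_mem _

/-- The constant coefficient modulo an ideal containing `Y`. -/
noncomputable def extReesZero (Λ : Type*) [CommRing Λ] [Algebra Λ C] (Y 𝔫 : Ideal C) (hY : Y ≤ 𝔫) :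
    extRees Λ Y →+* C ⧸ 𝔫 where
  toFun p := Ideal.Quotient.mk 𝔫 (p.1.coeff 0)
  map_zero' := by simp
  map_one' := by
    have : (1 : LaurentPolynomial C).coeff 0 = 1 := by
      rw [AddMonoidAlgebra.one_def, AddMonoidAlgebra.coeff_single, Finsupp.single_eq_same]
    simp [this]
  map_add' p q := by simp
  map_mul' p q := by
    have h0 : ∀ a b : ℤ, Ideal.Quotient.mk 𝔫 (if a + b = 0 then p.1.coeff a * q.1.coeff b else 0) =
        if b = 0 then (if a = 0 then
          Ideal.Quotient.mk 𝔫 (p.1.coeff a * q.1.coeff b) else 0) else 0 := by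
      intro a b
      by_cases hab : a + b = 0
      · rw [if_pos hab]
        by_cases hb : b = 0
        · rw [if_pos hb, if_pos (by omega)]
        · rw [if_neg hb, Ideal.Quotient.eq_zero_iff_mem]
          rcases lt_or_gt_of_ne hb with hb | hb
          · refine Ideal.mul_mem_left _ _ (hY (Ideal.pow_le_self ?_ (q.2 b)))
            omega
          · refine Ideal.mul_mem_right _ _ (hY (Ideal.pow_le_self ?_ (p.2 a)))
            omega
      · rw [if_neg hab, map_zero]
        split_ifs with hb ha
        · omega
        · rfl
        · rfl
    change Ideal.Quotient.mk 𝔫 ((p.1 * q.1).coeff 0) = _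
    rw [AddMonoidAlgebra.coeff_mul]
    simp only [Finsupp.sum, map_sum, h0, Finset.sum_ite_eq', Finsupp.mem_support_iff]
    rw [← map_mul]
    by_cases hp : p.1.coeff 0 = 0
    · by_cases hq : q.1.coeff 0 = 0 <;> simp [hp, hq]
    · by_cases hq : q.1.coeff 0 = 0 <;> simp [hp, hq]

end Rees

/-! ### Generators and relations of the extended Rees algebra -/

section ReesLemma

open LaurentPolynomial

variable {Λ C β₀ γ₀ : Type*} [CommRing Λ] [CommRing C] [Algebra Λ C] {l : ℕ}

/-- Generators of the extended Rees algebra of the ideal generated by the `y i`, for a ring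
generated by the `ξ i`: the variable `T`, the `ξ i` and the `y i * T⁻¹`. -/
noncomputable def reesGen (ξ : β₀ ⊕ γ₀ → C) (y : Fin l → C) :
    (Unit ⊕ β₀) ⊕ (γ₀ ⊕ Fin l) → C[T;T⁻¹]
  | .inl (.inl _) => T 1
  | .inl (.inr i) => LaurentPolynomial.C (ξ (.inl i))
  | .inr (.inl j) => LaurentPolynomial.C (ξ (.inr j))
  | .inr (.inr i) => LaurentPolynomial.C (y i) * T (-1)

variable (Λ) in
/-- The extended Rees algebra as the subalgebra generated by `reesGen`. -/
noncomputable abbrev reesAlg (ξ : β₀ ⊕ γ₀ → C) (y : Fin l → C) : Subalgebra Λ C[T;T⁻¹] :=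
  Algebra.adjoin Λ (Set.range (reesGen ξ y))

theorem coeff_C_mul_T (a : C) (n k : ℤ) :
    (LaurentPolynomial.C a * T n).coeff k = if n = k then a else 0 := by
  rw [← LaurentPolynomial.single_eq_C_mul_T, AddMonoidAlgebra.coeff_single, Finsupp.single_apply]

theorem coeff_mul_T (p : C[T;T⁻¹]) (n k : ℤ) : (p * T n).coeff k = p.coeff (k - n) := by
  change (p * AddMonoidAlgebra.single n (1 : C)).coeff k = _
  rw [AddMonoidAlgebra.coeff_mul_single_apply, mul_one, sub_eq_add_neg]

theorem coeff_mul_C (p : C[T;T⁻¹]) (a : C) (k : ℤ) :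
    (p * LaurentPolynomial.C a).coeff k = p.coeff k * a := by
  change (p * AddMonoidAlgebra.single 0 a).coeff k = _
  rw [AddMonoidAlgebra.coeff_mul_single_apply, neg_zero, add_zero]

variable (ξ : β₀ ⊕ γ₀ → C) (y : Fin l → C)

theorem reesGen_mul (i) : reesGen ξ y (.inl (.inl ())) * reesGen ξ y (.inr (.inr i)) =
    LaurentPolynomial.C (y i) := by
  change T 1 * (LaurentPolynomial.C (y i) * T (-1)) = _
  rw [mul_left_comm, ← T_add]
  simp

theorem reesGen_mem (i) : reesGen ξ y i ∈ reesAlg Λ ξ y :=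
  Algebra.subset_adjoin ⟨i, rfl⟩

theorem C_mem_reesAlg (hξ : Algebra.adjoin Λ (Set.range ξ) = ⊤) (a : C) :
    LaurentPolynomial.C a ∈ reesAlg Λ ξ y := by
  have ha : a ∈ Algebra.adjoin Λ (Set.range ξ) := hξ ▸ Algebra.mem_top
  induction ha using Algebra.adjoin_induction with
  | mem b hb =>
    obtain ⟨i | j, rfl⟩ := hb
    · exact reesGen_mem ξ y (.inl (.inr i))
    · exact reesGen_mem ξ y (.inr (.inl j))
  | algebraMap r =>
    rw [← LaurentPolynomial.algebraMap_apply]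
    exact (reesAlg Λ ξ y).algebraMap_mem r
  | add b c _ _ hb hc => rw [map_add]; exact add_mem hb hc
  | mul b c _ _ hb hc => rw [map_mul]; exact mul_mem hb hc

theorem C_mul_T_mem_reesAlg (hξ : Algebra.adjoin Λ (Set.range ξ) = ⊤) (j : ℕ) :
    ∀ a ∈ Ideal.span (Set.range y) ^ j, LaurentPolynomial.C a * T (-j : ℤ) ∈ reesAlg Λ ξ y := by
  induction j with
  | zero =>
    intro a _
    simpa using C_mem_reesAlg ξ y hξ a
  | succ j ih =>
    intro a ha
    rw [pow_succ] at ha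
    refine Submodule.mul_induction_on ha (fun b hb d hd => ?_) (fun b d hb hd => ?_)
    · have h1 : LaurentPolynomial.C (b * d) * T (-((j + 1 : ℕ) : ℤ)) =
          (LaurentPolynomial.C b * T (-j : ℤ)) * (LaurentPolynomial.C d * T (-1)) := by
        have : T (-((j + 1 : ℕ) : ℤ)) = (T (-j : ℤ) * T (-1) : C[T;T⁻¹]) := by
          rw [← T_add]; congr 1; push_cast; ring
        rw [this, map_mul]; ring
      rw [h1]
      refine mul_mem (ih b hb) ?_
      refine Submodule.span_induction (p := fun d _ => LaurentPolynomial.C d * T (-1) ∈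
        reesAlg Λ ξ y) ?_ ?_ ?_ ?_ hd
      · rintro _ ⟨i, rfl⟩
        exact reesGen_mem ξ y (.inr (.inr i))
      · rw [map_zero, zero_mul]; exact zero_mem _
      · intro u v _ _ hu hv
        rw [map_add, add_mul]; exact add_mem hu hv
      · intro r u _ hu
        rw [smul_eq_mul, map_mul, mul_assoc]
        exact mul_mem (C_mem_reesAlg ξ y hξ r) hu
    · rw [map_add, add_mul]; exact add_mem hb hd

theorem reesAlg_le : reesAlg Λ ξ y ≤ extRees Λ (Ideal.span (Set.range y)) := by
  refine Algebra.adjoin_le ?_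
  rintro _ ⟨(_ | i) | (j | i), rfl⟩ k
  · change (T 1 : C[T;T⁻¹]).coeff k ∈ _
    rw [← one_mul (T 1), ← map_one LaurentPolynomial.C, coeff_C_mul_T]
    split_ifs with h
    · subst h; simp
    · exact zero_mem _
  · change (LaurentPolynomial.C (ξ (.inl i))).coeff k ∈ _
    rw [← mul_one (LaurentPolynomial.C _), ← T_zero, coeff_C_mul_T]
    split_ifs with h
    · subst h; simp
    · exact zero_mem _
  · change (LaurentPolynomial.C (ξ (.inr j))).coeff k ∈ _
    rw [← mul_one (LaurentPolynomial.C _), ← T_zero, coeff_C_mul_T]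
    split_ifs with h
    · subst h; simp
    · exact zero_mem _
  · change (LaurentPolynomial.C (y i) * T (-1)).coeff k ∈ _
    rw [coeff_C_mul_T]
    split_ifs with h
    · subst h
      have h1 : y i ∈ Ideal.span (Set.range y) := Ideal.subset_span ⟨i, rfl⟩
      simpa using h1
    · exact zero_mem _

/-- The generators of the extended Rees algebra inside it. -/
noncomputable def reesX (i : (Unit ⊕ β₀) ⊕ (γ₀ ⊕ Fin l)) : reesAlg Λ ξ y :=
  ⟨reesGen ξ y i, reesGen_mem ξ y i⟩

theorem adjoin_reesX : Algebra.adjoin Λ (Set.range (reesX (Λ := Λ) ξ y)) = ⊤ := by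
  have : (Subtype.val : reesAlg Λ ξ y → C[T;T⁻¹]) ⁻¹' Set.range (reesGen ξ y) =
      Set.range (reesX (Λ := Λ) ξ y) := by
    ext a
    constructor
    · rintro ⟨i, hi⟩; exact ⟨i, Subtype.ext hi⟩
    · rintro ⟨i, rfl⟩; exact ⟨i, rfl⟩
  rw [← this]
  exact Algebra.adjoin_adjoin_coe_preimage

/-- The inclusion of the base ring into the extended Rees algebra. -/
noncomputable def reesC (hξ : Algebra.adjoin Λ (Set.range ξ) = ⊤) : C →ₐ[Λ] reesAlg Λ ξ y :=
  (IsScalarTower.toAlgHom Λ C C[T;T⁻¹]).codRestrict _ fun a => C_mem_reesAlg ξ y hξ a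

theorem reesC_val (hξ : Algebra.adjoin Λ (Set.range ξ) = ⊤) (a : C) :
    (reesC ξ y hξ a : C[T;T⁻¹]) = LaurentPolynomial.C a := rfl

theorem reesC_injective (hξ : Algebra.adjoin Λ (Set.range ξ) = ⊤) :
    Function.Injective (reesC ξ y hξ) := fun a b h => by
  have h1 := congrArg (fun z : reesAlg Λ ξ y => (z : C[T;T⁻¹]).coeff 0) h
  simp only [reesC_val] at h1
  rw [← mul_one (LaurentPolynomial.C a), ← mul_one (LaurentPolynomial.C b), ← T_zero,
    coeff_C_mul_T, coeff_C_mul_T] at h1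
  simpa using h1

theorem algebraicIndependent_T [IsDomain C] :
    AlgebraicIndependent C (fun _ : Unit => (T 1 : C[T;T⁻¹])) := by
  rw [algebraicIndependent_unique_type_iff, transcendental_iff_injective]
  have : (Polynomial.aeval (R := C) (T 1 : C[T;T⁻¹]) : Polynomial C → C[T;T⁻¹]) =
      Polynomial.toLaurent := by
    have : (Polynomial.aeval (R := C) (T 1 : C[T;T⁻¹])) = Polynomial.toLaurentAlg := by
      ext
      simp
    rw [this]; rfl
  rw [this]
  exact Polynomial.toLaurent_injective

/-- The variable `T` and the `ξ (.inl i)` form a transcendence basis of the extended Rees algebra.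
-/
theorem isTranscendenceBasis_reesX [IsDomain C] [IsDomain Λ]
    (hξ : Algebra.adjoin Λ (Set.range ξ) = ⊤) (htb : IsTranscendenceBasis Λ (ξ ∘ Sum.inl)) :
    IsTranscendenceBasis Λ (reesX (Λ := Λ) ξ y ∘ Sum.inl) := by
  have hinj : Function.Injective (algebraMap Λ C) := htb.1.algebraMap_injective
  have : FaithfulSMul Λ C := (faithfulSMul_iff_algebraMap_injective _ _).2 hinj
  have hind : AlgebraicIndependent Λ (reesX (Λ := Λ) ξ y ∘ Sum.inl) := by
    refine AlgebraicIndependent.of_comp (reesAlg Λ ξ y).val ?_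
    have h := htb.1.sumElim_comp (algebraicIndependent_T (C := C))
    convert h using 1
    ext (_ | _) <;> rfl
  have hinjS : Function.Injective (algebraMap Λ (reesAlg Λ ξ y)) := hind.algebraMap_injective
  have : FaithfulSMul Λ (reesAlg Λ ξ y) := (faithfulSMul_iff_algebraMap_injective _ _).2 hinjS
  rw [isTranscendenceBasis_iff_algebraicIndependent_isAlgebraic]
  refine ⟨hind, ?_⟩
  set U := Algebra.adjoin Λ (Set.range (reesX (Λ := Λ) ξ y ∘ Sum.inl)) with hU
  have hUmem : ∀ i, reesX (Λ := Λ) ξ y (.inl i) ∈ U := fun i => Algebra.subset_adjoin ⟨i, rfl⟩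
  have hC : ∀ a : C, IsAlgebraic U (reesC ξ y hξ a) := by
    intro a
    have hle : Algebra.adjoin Λ (Set.range (ξ ∘ Sum.inl)) ≤ U.comap (reesC ξ y hξ) := by
      refine Algebra.adjoin_le ?_
      rintro _ ⟨i, rfl⟩
      exact hUmem (.inr i)
    let f : Algebra.adjoin Λ (Set.range (ξ ∘ Sum.inl)) →+* U :=
      (((reesC ξ y hξ).comp (Algebra.adjoin Λ (Set.range (ξ ∘ Sum.inl))).val).codRestrict U
        fun b => hle b.2).toRingHom
    have h1 := (isTranscendenceBasis_iff_algebraicIndependent_isAlgebraic.1 htb).2.isAlgebraic a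
    refine h1.ringHom_of_comp_eq f (reesC ξ y hξ) (fun b b' h => ?_) (RingHom.ext fun b => rfl)
    exact Subtype.ext (reesC_injective ξ y hξ (congrArg Subtype.val h))
  have hgen : ∀ i, IsAlgebraic U (reesX (Λ := Λ) ξ y i) := by
    rintro ((i | i) | (j | i))
    · exact isAlgebraic_algebraMap (⟨_, hUmem (.inl i)⟩ : U)
    · exact isAlgebraic_algebraMap (⟨_, hUmem (.inr i)⟩ : U)
    · exact hC (ξ (.inr j))
    · refine IsAlgebraic.of_mul (y := reesX (Λ := Λ) ξ y (.inl (.inl ())))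
        (mem_nonZeroDivisors_of_ne_zero (hind.ne_zero (.inl ())))
        (isAlgebraic_algebraMap (⟨_, hUmem (.inl ())⟩ : U)) ?_
      have h1 : reesX (Λ := Λ) ξ y (.inl (.inl ())) * reesX ξ y (.inr (.inr i)) =
          reesC ξ y hξ (y i) := Subtype.ext (reesGen_mul ξ y i)
      rw [h1]
      exact hC _
  constructor
  intro a
  have ha : a ∈ Algebra.adjoin Λ (Set.range (reesX (Λ := Λ) ξ y)) := by
    rw [adjoin_reesX]; exact Algebra.mem_top
  induction ha using Algebra.adjoin_induction with
  | mem b hb => obtain ⟨i, rfl⟩ := hb; exact hgen i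
  | algebraMap r => exact isAlgebraic_algebraMap (⟨_, U.algebraMap_mem r⟩ : U)
  | add b c _ _ hb hc => exact hb.add hc
  | mul b c _ _ hb hc => exact hb.mul hc

/-- The relations among the generators of the extended Rees algebra: those among the `ξ i`, and
`T * (y i * T⁻¹) = y i`. -/
noncomputable def reesRel (H : γ₀ → MvPolynomial (β₀ ⊕ γ₀) Λ)
    (z : Fin l → MvPolynomial (β₀ ⊕ γ₀) Λ) :
    γ₀ ⊕ Fin l → MvPolynomial ((Unit ⊕ β₀) ⊕ (γ₀ ⊕ Fin l)) Λ
  | .inl j => MvPolynomial.rename (Sum.map Sum.inr Sum.inl) (H j)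
  | .inr i => MvPolynomial.X (.inl (.inl ())) * MvPolynomial.X (.inr (.inr i)) -
      MvPolynomial.rename (Sum.map Sum.inr Sum.inl) (z i)

theorem aeval_reesX_rename (hξ : Algebra.adjoin Λ (Set.range ξ) = ⊤)
    (p : MvPolynomial (β₀ ⊕ γ₀) Λ) :
    MvPolynomial.aeval (reesX (Λ := Λ) ξ y) (MvPolynomial.rename (Sum.map Sum.inr Sum.inl) p) =
      reesC ξ y hξ (MvPolynomial.aeval ξ p) := by
  rw [MvPolynomial.aeval_rename, ← AlgHom.comp_apply, MvPolynomial.comp_aeval]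
  congr 1
  refine MvPolynomial.algHom_ext fun i => ?_
  rw [MvPolynomial.aeval_X, MvPolynomial.aeval_X]
  rcases i with i | i <;> rfl

theorem map_sum_injective :
    Function.Injective (Sum.map Sum.inr Sum.inl : β₀ ⊕ γ₀ → (Unit ⊕ β₀) ⊕ (γ₀ ⊕ Fin l)) :=
  Sum.inr_injective.sumMap Sum.inl_injective

theorem reesRel_eq_zero (hξ : Algebra.adjoin Λ (Set.range ξ) = ⊤)
    (H : γ₀ → MvPolynomial (β₀ ⊕ γ₀) Λ) (hH : ∀ j, MvPolynomial.aeval ξ (H j) = 0)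
    (z : Fin l → MvPolynomial (β₀ ⊕ γ₀) Λ) (hz : ∀ i, MvPolynomial.aeval ξ (z i) = y i) (j) :
    MvPolynomial.aeval (reesX (Λ := Λ) ξ y) (reesRel H z j) = 0 := by
  rcases j with j | i
  · rw [reesRel, aeval_reesX_rename ξ y hξ, hH, map_zero]
  · rw [reesRel, map_sub, aeval_reesX_rename ξ y hξ, hz, map_mul, MvPolynomial.aeval_X,
      MvPolynomial.aeval_X, sub_eq_zero]
    exact Subtype.ext (reesGen_mul ξ y i)

theorem pderiv_rename_of_notMem (p : MvPolynomial (β₀ ⊕ γ₀) Λ) (i : Fin l) :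
    MvPolynomial.pderiv (.inr (.inr i) : (Unit ⊕ β₀) ⊕ (γ₀ ⊕ Fin l))
      (MvPolynomial.rename (Sum.map Sum.inr Sum.inl) p) = 0 := by
  classical
  refine MvPolynomial.pderiv_eq_zero_of_notMem_vars fun h => ?_
  have h1 := MvPolynomial.vars_rename _ _ h
  rw [Finset.mem_image] at h1
  obtain ⟨a, -, ha⟩ := h1
  rcases a with a | a <;> simp at ha

/-- The Jacobian minor of the relations of the extended Rees algebra is a power of the Rees variable
times the original one. -/
theorem det_reesRel [Fintype γ₀] [DecidableEq γ₀] (hξ : Algebra.adjoin Λ (Set.range ξ) = ⊤)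
    (H : γ₀ → MvPolynomial (β₀ ⊕ γ₀) Λ) (z : Fin l → MvPolynomial (β₀ ⊕ γ₀) Λ) :
    (Matrix.of fun i j : γ₀ ⊕ Fin l => MvPolynomial.aeval (reesX (Λ := Λ) ξ y)
      (MvPolynomial.pderiv (.inr j) (reesRel H z i))).det =
    reesC ξ y hξ (Matrix.of fun i j : γ₀ =>
      MvPolynomial.aeval ξ (MvPolynomial.pderiv (.inr j) (H i))).det *
      reesX ξ y (.inl (.inl ())) ^ l := by
  classical
  have h : (Matrix.of fun i j : γ₀ ⊕ Fin l => MvPolynomial.aeval (reesX (Λ := Λ) ξ y)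
      (MvPolynomial.pderiv (.inr j) (reesRel H z i))) =
      Matrix.fromBlocks
        ((Matrix.of fun i j : γ₀ =>
          MvPolynomial.aeval ξ (MvPolynomial.pderiv (.inr j) (H i))).map (reesC ξ y hξ)) 0
        (Matrix.of fun i j => MvPolynomial.aeval (reesX (Λ := Λ) ξ y)
          (MvPolynomial.pderiv (.inr (.inl j)) (reesRel H z (.inr i))))
        (Matrix.diagonal fun _ => reesX ξ y (.inl (.inl ()))) := by
    ext1 i j
    rcases i with i | i <;> rcases j with j | j
    · rw [Matrix.fromBlocks_apply₁₁, Matrix.of_apply, Matrix.map_apply, Matrix.of_apply, reesRel,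
        ← aeval_reesX_rename ξ y hξ]
      exact congrArg _ (MvPolynomial.pderiv_rename map_sum_injective (.inr j) (H i))
    · rw [Matrix.fromBlocks_apply₁₂, Matrix.of_apply, reesRel, pderiv_rename_of_notMem, map_zero,
        Matrix.zero_apply]
    · rfl
    · have h0 : MvPolynomial.pderiv (.inr (.inr j)) (MvPolynomial.X (.inl (.inl ())) :
          MvPolynomial ((Unit ⊕ β₀) ⊕ (γ₀ ⊕ Fin l)) Λ) = 0 :=
        MvPolynomial.pderiv_X_of_ne (by simp)
      rw [Matrix.fromBlocks_apply₂₂, Matrix.of_apply, reesRel, map_sub, pderiv_rename_of_notMem,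
        sub_zero, Derivation.leibniz, h0, smul_zero, add_zero,
        smul_eq_mul, map_mul, MvPolynomial.aeval_X, Matrix.diagonal_apply]
      split_ifs with hij
      · rw [hij, MvPolynomial.pderiv_X_self, map_one, mul_one]
      · rw [MvPolynomial.pderiv_X_of_ne (by simpa using hij), map_zero, mul_zero]
  rw [h, Matrix.det_fromBlocks_zero₁₂, Matrix.det_diagonal, Finset.prod_const, Finset.card_univ,
    Fintype.card_fin]
  congr 1
  exact ((reesC ξ y hξ).map_det _).symm

/-- The Jacobian element multiplies the integral closure of the powers of an ideal with `l`
generators into these powers with loss `l`, locally at a suitable prime: this is the statement that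
Jacobian elements conduct the integral closure, for the extended Rees algebra. -/
theorem rees_local [IsDomain C] [IsNoetherianRing C] [IsDomain Λ] [IsNoetherianRing Λ]
    [Fintype β₀] [Fintype γ₀] [DecidableEq γ₀]
    [IsIntegrallyClosed (MvPolynomial (Unit ⊕ β₀) Λ)] (hΛ : ringKrullDim Λ ≤ 2)
    (hξ : Algebra.adjoin Λ (Set.range ξ) = ⊤) (htb : IsTranscendenceBasis Λ (ξ ∘ Sum.inl))
    (H : γ₀ → MvPolynomial (β₀ ⊕ γ₀) Λ) (hH : ∀ j, MvPolynomial.aeval ξ (H j) = 0)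
    (𝔫 𝔫₁ : Ideal C) [𝔫.IsPrime] [𝔫₁.IsPrime] (h𝔫 : 𝔫 < 𝔫₁) (hy : ∀ i, y i ∈ 𝔫)
    (q : ℕ) (hq : 1 < q) (hq0 : (q : C) ≠ 0) (hq𝔫 : (q : C) ∈ 𝔫)
    (hξq : ∀ i, ξ i ^ q - ξ i ∈ 𝔫) (n : ℕ) (a : C)
    (ha : IsIntegralOverIdeal (Ideal.span (Set.range y) ^ n) a) :
    ∃ h ∉ 𝔫, h * ((Matrix.of fun i j : γ₀ =>
      MvPolynomial.aeval ξ (MvPolynomial.pderiv (.inr j) (H i))).det * a) ∈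
        Ideal.span (Set.range y) ^ (n - l) := by
  classical
  set Y := Ideal.span (Set.range y) with hYdef
  set c := (Matrix.of fun i j : γ₀ =>
      MvPolynomial.aeval ξ (MvPolynomial.pderiv (.inr j) (H i))).det with hc
  have hY : Y ≤ 𝔫 := by
    rw [hYdef, Ideal.span_le]; rintro _ ⟨i, rfl⟩; exact hy i
  set S := reesAlg Λ ξ y with hS
  have hfg : S.FG := Subalgebra.fg_def.2 ⟨_, Set.finite_range _, rfl⟩
  have hft : Algebra.FiniteType Λ S := S.fg_iff_finiteType.1 hfg
  have hnoeth : IsNoetherianRing S := Algebra.FiniteType.isNoetherianRing Λ S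
  set ι := reesC (Λ := Λ) ξ y hξ with hι
  set x := reesX (Λ := Λ) ξ y with hx
  set v : S := x (.inl (.inl ())) with hv
  have hxtb := isTranscendenceBasis_reesX (Λ := Λ) ξ y hξ htb
  have hfaith : FaithfulSMul Λ S :=
    (faithfulSMul_iff_algebraMap_injective _ _).2 hxtb.1.algebraMap_injective
  have halg := (isTranscendenceBasis_iff_algebraicIndependent_isAlgebraic.1 hxtb).2
  have hdim : ringKrullDim S ≤ (Fintype.card (Unit ⊕ β₀) + 2 : ℕ) := by
    rw [add_comm]
    exact dim_le_of_generators 2 hΛ x (adjoin_reesX ξ y) halg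
  choose z hz using fun i => show ∃ p, MvPolynomial.aeval (R := Λ) ξ p = y i by
    have : y i ∈ Algebra.adjoin Λ (Set.range ξ) := hξ ▸ Algebra.mem_top
    rw [Algebra.adjoin_range_eq_range_aeval] at this
    exact this
  -- the primes of the Rees algebra lying over the given ones
  let ev : ∀ 𝔮 : Ideal C, Y ≤ 𝔮 → S →+* C ⧸ 𝔮 := fun 𝔮 h𝔮 =>
    (extReesZero Λ Y 𝔮 h𝔮).comp (Subalgebra.inclusion (reesAlg_le ξ y)).toRingHom
  have hev : ∀ 𝔮 h𝔮 (s : S), s ∈ RingHom.ker (ev 𝔮 h𝔮) ↔ (s : C[T;T⁻¹]).coeff 0 ∈ 𝔮 :=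
    fun 𝔮 h𝔮 s => by rw [RingHom.mem_ker]; exact Ideal.Quotient.eq_zero_iff_mem
  have hιcoeff : ∀ b : C, (ι b : C[T;T⁻¹]).coeff 0 = b := by
    intro b
    rw [hι, reesC_val, ← mul_one (LaurentPolynomial.C b), ← T_zero, coeff_C_mul_T, if_pos rfl]
  have hlt : RingHom.ker (ev 𝔫 hY) < RingHom.ker (ev 𝔫₁ (hY.trans h𝔫.le)) := by
    refine lt_of_le_of_ne (fun s hs => ?_) fun heq => ?_
    · rw [hev] at hs ⊢; exact h𝔫.le hs
    · obtain ⟨b, hb1, hb⟩ := SetLike.exists_of_lt h𝔫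
      refine hb ?_
      have h1 : ι b ∈ RingHom.ker (ev 𝔫₁ (hY.trans h𝔫.le)) := by rwa [hev, hιcoeff]
      rwa [← heq, hev, hιcoeff] at h1
  have hqS : ∀ m : ℕ, (m : S) = ι m := fun m => (map_natCast ι m).symm
  have hvn : ∀ m : ℕ, ((v ^ m : S) : C[T;T⁻¹]) = T (m : ℤ) := by
    intro m
    rw [SubmonoidClass.coe_pow]
    change (T 1) ^ m = _
    rw [T_pow, mul_one]
  have hv0 : v ^ n ≠ 0 := by
    intro h
    have h1 := congrArg (fun s : S => (s : C[T;T⁻¹]) * T (-n : ℤ)) h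
    simp only [hvn, ← T_add, ZeroMemClass.coe_zero, zero_mul, add_neg_cancel] at h1
    exact one_ne_zero (T_zero.symm.trans h1)
  have hpow0 : ∀ (b : C) (e : ℤ) (m : ℕ), (LaurentPolynomial.C b * T e) ^ m =
      LaurentPolynomial.C (b ^ m) * T (m * e) := by
    intro b e m
    rw [mul_pow, T_pow, map_pow]
  have hp : (RingHom.ker (ev 𝔫 hY)).IsPrime := RingHom.ker_isPrime _
  have hp₁ : (RingHom.ker (ev 𝔫₁ (hY.trans h𝔫.le))).IsPrime := RingHom.ker_isPrime _
  obtain ⟨g, hg, r, hr⟩ := main_local x (adjoin_reesX ξ y) hxtb (reesRel H z)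
    (reesRel_eq_zero ξ y hξ H hH z hz) (RingHom.ker (ev 𝔫 hY))
    (RingHom.ker (ev 𝔫₁ (hY.trans h𝔫.le))) hlt hdim q hq (by
      rw [hqS]
      exact fun h => hq0 (reesC_injective ξ y hξ (h.trans (map_zero _).symm))) (by
      rw [hqS, hev, hιcoeff]; exact hq𝔫) (by
      intro i
      rw [hev]
      change ((reesGen ξ y i) ^ q - reesGen ξ y i).coeff 0 ∈ 𝔫
      have key : ∀ (b : C) (e : ℤ), (e = 0 → b ^ q - b ∈ 𝔫) → reesGen ξ y i =
          LaurentPolynomial.C b * T e → ((reesGen ξ y i) ^ q - reesGen ξ y i).coeff 0 ∈ 𝔫 := by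
        intro b e hbe he
        rw [he, hpow0, AddMonoidAlgebra.coeff_sub, Finsupp.sub_apply, coeff_C_mul_T, coeff_C_mul_T]
        by_cases h0 : e = 0
        · rw [if_pos h0, if_pos (by rw [h0, mul_zero])]
          exact hbe h0
        · rw [if_neg h0, if_neg (mul_ne_zero (by exact_mod_cast (by omega : q ≠ 0)) h0), sub_zero]
          exact zero_mem _
      rcases i with (i | i) | (j | i)
      · exact key 1 1 (fun h => absurd h one_ne_zero) (by rw [map_one, one_mul]; rfl)
      · exact key (ξ (.inl i)) 0 (fun _ => hξq _) (by rw [T_zero, mul_one]; rfl)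
      · exact key (ξ (.inr j)) 0 (fun _ => hξq _) (by rw [T_zero, mul_one]; rfl)
      · exact key (y i) (-1) (fun h => absurd h (by decide)) rfl) (ι a) (v ^ n) hv0 (by
      obtain ⟨m, hm, α, hα, he⟩ := ha
      refine isIntegral_div _ _ ?_ m hm (fun i => if hi : 1 ≤ i ∧ i ≤ m then
        ⟨LaurentPolynomial.C (α i) * T (-(n * i : ℕ) : ℤ), C_mul_T_mem_reesAlg ξ y hξ (n * i) _
          (by rw [pow_mul]; exact hα i hi.1 hi.2)⟩ else 0) ?_
      · rw [Ne, FaithfulSMul.algebraMap_eq_zero_iff]; exact hv0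
      · rw [← map_zero ι, ← he, map_add, map_sum, map_pow]
        congr 1
        refine Finset.sum_congr rfl fun i hi => ?_
        rw [Finset.mem_Icc] at hi
        rw [dif_pos hi, map_mul, map_pow]
        congr 1
        refine Subtype.ext ?_
        have h1 : (((v ^ n) ^ i : S) : C[T;T⁻¹]) = T ((n * i : ℕ) : ℤ) := by rw [← pow_mul, hvn]
        rw [MulMemClass.coe_mul, h1, mul_assoc, ← T_add, neg_add_cancel, T_zero, mul_one]
        rfl)
  rw [det_reesRel ξ y hξ] at hr
  refine ⟨(g : C[T;T⁻¹]).coeff 0, fun h => hg ((hev _ _ _).2 h), ?_⟩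
  have h1 : (r : C[T;T⁻¹]) * T (n : ℤ) =
      (g : C[T;T⁻¹]) * LaurentPolynomial.C (c * a) * T (l : ℤ) := by
    have h2 := congrArg (Subtype.val) hr
    change (g : C[T;T⁻¹]) * (LaurentPolynomial.C c * ((v ^ l : S) : C[T;T⁻¹])) *
      LaurentPolynomial.C a = ((v ^ n : S) : C[T;T⁻¹]) * r at h2
    rw [hvn, hvn] at h2
    rw [mul_comm, ← h2, map_mul]
    ring
  have h3 := congrArg (fun p : C[T;T⁻¹] => p.coeff (l : ℤ)) h1
  simp only [coeff_mul_T, coeff_mul_C, sub_self] at h3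
  rw [← h3]
  have h4 := reesAlg_le ξ y r.2 ((l : ℤ) - n)
  have h5 : (-((l : ℤ) - n)).toNat = n - l := by omega
  rwa [h5] at h4

end ReesLemma

/-! ### The Jacobian multiplier over the integers -/

section PolyBase

open Polynomial

attribute [local instance] Polynomial.algebra

variable {Λ B β γ : Type*} [CommRing Λ] [CommRing B] [Algebra Λ B]

theorem adjoin_C_eq_top {ι : Type*} (ξ : ι → B) (hξ : Algebra.adjoin Λ (Set.range ξ) = ⊤) :
    Algebra.adjoin Λ[X] (Set.range fun i => (C (ξ i) : B[X])) = ⊤ := by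
  rw [eq_top_iff]
  intro p _
  have hX : (X : B[X]) = algebraMap Λ[X] B[X] X := by
    rw [algebraMap_def, coe_mapRingHom, map_X]
  have hC : ∀ b : B, C b ∈ Algebra.adjoin Λ[X] (Set.range fun i => (C (ξ i) : B[X])) := by
    intro b
    have hb : b ∈ Algebra.adjoin Λ (Set.range ξ) := hξ ▸ Algebra.mem_top
    induction hb using Algebra.adjoin_induction with
    | mem b hb => obtain ⟨i, rfl⟩ := hb; exact Algebra.subset_adjoin ⟨i, rfl⟩
    | algebraMap r =>
      have : C (algebraMap Λ B r) = algebraMap Λ[X] B[X] (C r) := by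
        rw [algebraMap_def, coe_mapRingHom, map_C]
      rw [this]
      exact Subalgebra.algebraMap_mem _ _
    | add b c _ _ hb hc => rw [C_add]; exact add_mem hb hc
    | mul b c _ _ hb hc => rw [C_mul]; exact mul_mem hb hc
  induction p using Polynomial.induction_on' with
  | add p q hp hq => exact add_mem (hp trivial) (hq trivial)
  | monomial n a =>
    rw [← C_mul_X_pow_eq_monomial, hX]
    exact mul_mem (hC a) (pow_mem (Subalgebra.algebraMap_mem _ _) _)

theorem isTranscendenceBasis_C [IsDomain Λ] [IsDomain B] (ξ : β ⊕ γ → B) (hξ : Algebra.adjoin Λ (Set.range ξ) = ⊤)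
    (htb : IsTranscendenceBasis Λ (ξ ∘ Sum.inl)) :
    IsTranscendenceBasis Λ[X] ((fun i => (C (ξ i) : B[X])) ∘ Sum.inl) := by
  have hinj : Function.Injective (algebraMap Λ B) := htb.1.algebraMap_injective
  have hinjX : Function.Injective (algebraMap Λ[X] B[X]) := by
    rw [algebraMap_def, coe_mapRingHom]; exact map_injective _ hinj
  have hXind : AlgebraicIndependent B (fun _ : Unit => (X : B[X])) := by
    rw [algebraicIndependent_unique_type_iff, transcendental_iff_injective]
    have : (aeval (R := B) (X : B[X])) = AlgHom.id B B[X] := by ext; simp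
    rw [this]; exact Function.injective_id
  have h1 := (htb.1.sumElim_comp hXind).comp _ Sum.swap_rightInverse.injective
  have h2 : (Sum.elim (fun _ : Unit => (X : B[X])) (algebraMap B B[X] ∘ ξ ∘ Sum.inl)) ∘ Sum.swap =
      Sum.elim ((fun i => (C (ξ i) : B[X])) ∘ Sum.inl) (fun _ : Unit => (X : B[X])) := by
    ext1 (i | i) <;> rfl
  rw [h2, AlgebraicIndependent.sumElim_iff] at h1
  have hind : AlgebraicIndependent Λ[X] ((fun i => (C (ξ i) : B[X])) ∘ Sum.inl) := by
    let U := Algebra.adjoin Λ (Set.range fun _ : Unit => (X : B[X]))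
    have hmem : ∀ p : Λ[X], algebraMap Λ[X] B[X] p ∈ U := by
      intro p
      rw [algebraMap_def, coe_mapRingHom]
      induction p using Polynomial.induction_on' with
      | add p q hp hq => rw [Polynomial.map_add]; exact add_mem hp hq
      | monomial n a =>
        have hX : (X : B[X]) ∈ U := Algebra.subset_adjoin ⟨(), rfl⟩
        rw [map_monomial, ← C_mul_X_pow_eq_monomial]
        exact mul_mem (U.algebraMap_mem a) (pow_mem hX _)
    let f : Λ[X] →+* U := (algebraMap Λ[X] B[X]).codRestrict U hmem
    refine AlgebraicIndependent.of_ringHom_of_comp_eq f (RingHom.id B[X]) (x := _) ?_ ?_ ?_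
    · exact h1.2
    · intro a b h
      exact hinjX (congrArg Subtype.val h)
    · ext <;> rfl
  have hfaith : FaithfulSMul Λ[X] B[X] := (faithfulSMul_iff_algebraMap_injective _ _).2 hinjX
  have hfaith' : FaithfulSMul Λ B := (faithfulSMul_iff_algebraMap_injective _ _).2 hinj
  rw [isTranscendenceBasis_iff_algebraicIndependent_isAlgebraic]
  refine ⟨hind, ?_⟩
  set U := Algebra.adjoin Λ[X] (Set.range ((fun i => (C (ξ i) : B[X])) ∘ Sum.inl)) with hU
  have hC : ∀ a : B, IsAlgebraic U (C a : B[X]) := by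
    intro a
    have hle : ∀ b ∈ Algebra.adjoin Λ (Set.range (ξ ∘ Sum.inl)), (C b : B[X]) ∈ U := by
      intro b hb
      induction hb using Algebra.adjoin_induction with
      | mem b hb => obtain ⟨i, rfl⟩ := hb; exact Algebra.subset_adjoin ⟨i, rfl⟩
      | algebraMap r =>
        have : C (algebraMap Λ B r) = algebraMap Λ[X] B[X] (C r) := by
          rw [algebraMap_def, coe_mapRingHom, map_C]
        rw [this]
        exact Subalgebra.algebraMap_mem _ _
      | add b c _ _ hb hc => rw [C_add]; exact add_mem hb hc
      | mul b c _ _ hb hc => rw [C_mul]; exact mul_mem hb hc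
    let f : Algebra.adjoin Λ (Set.range (ξ ∘ Sum.inl)) →+* U :=
      ((C : B →+* B[X]).comp (Algebra.adjoin Λ (Set.range (ξ ∘ Sum.inl))).val.toRingHom).codRestrict
        U fun b => hle b b.2
    have h1 := (isTranscendenceBasis_iff_algebraicIndependent_isAlgebraic.1 htb).2.isAlgebraic a
    refine h1.ringHom_of_comp_eq f (C : B →+* B[X]) (fun b b' h => ?_) (RingHom.ext fun b => rfl)
    exact Subtype.ext (C_injective (congrArg Subtype.val h))
  constructor
  intro a
  have ha : a ∈ Algebra.adjoin Λ[X] (Set.range fun i => (C (ξ i) : B[X])) := by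
    rw [adjoin_C_eq_top ξ hξ]; exact Algebra.mem_top
  induction ha using Algebra.adjoin_induction with
  | mem b hb => obtain ⟨i, rfl⟩ := hb; exact hC _
  | algebraMap r => exact isAlgebraic_algebraMap (⟨_, U.algebraMap_mem r⟩ : U)
  | add b c _ _ hb hc => exact hb.add hc
  | mul b c _ _ hb hc => exact hb.mul hc

theorem aeval_C_map {ι : Type*} (ξ : ι → B) (p : MvPolynomial ι Λ) :
    MvPolynomial.aeval (fun i => (C (ξ i) : B[X])) (MvPolynomial.map (C : Λ →+* Λ[X]) p) =
      C (MvPolynomial.aeval ξ p) := by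
  induction p using MvPolynomial.induction_on with
  | C a =>
    rw [MvPolynomial.map_C, MvPolynomial.aeval_C, MvPolynomial.aeval_C, algebraMap_def,
      coe_mapRingHom, map_C]
  | add p q hp hq => rw [map_add, map_add, hp, hq, map_add, C_add]
  | mul_X p i hp =>
    rw [map_mul, map_mul, hp, map_mul, C_mul, MvPolynomial.map_X, MvPolynomial.aeval_X,
      MvPolynomial.aeval_X]

end PolyBase

theorem isJacobsonRing_int : IsJacobsonRing ℤ := by
  rw [isJacobsonRing_iff_prime_eq]
  intro P hP
  by_cases h0 : P = ⊥
  · subst h0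
    refine le_antisymm (fun x hx => ?_) Ideal.le_jacobson
    rw [Ideal.mem_jacobson_bot] at hx
    have h1 := Int.isUnit_iff.1 (hx 2)
    rw [Ideal.mem_bot]
    have h2 := Int.isUnit_iff.1 (hx 1)
    omega
  · have := IsPrime.to_maximal_ideal h0
    exact Ideal.jacobson_eq_self_of_isMaximal

/-- Residue fields at maximal ideals of finitely generated `ℤ`-algebras are finite. -/
theorem finite_quotient (B : Type*) [CommRing B] [Algebra.FiniteType ℤ B] (𝔪 : Ideal B)
    [h𝔪 : 𝔪.IsMaximal] : Finite (B ⧸ 𝔪) := by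
  let _ : Field (B ⧸ 𝔪) := Ideal.Quotient.field 𝔪
  have := isJacobsonRing_int
  have h1 : Module.Finite ℤ (B ⧸ 𝔪) := finite_of_finite_type_of_isJacobsonRing ℤ (B ⧸ 𝔪)
  obtain ⟨p, hp⟩ := CharP.exists (B ⧸ 𝔪)
  rcases Nat.eq_zero_or_pos p with h0 | hpos
  · subst h0
    have : CharZero (B ⧸ 𝔪) := CharP.charP_to_charZero _
    have h2 : IsField ℤ := isField_of_isIntegral_of_isField (S := B ⧸ 𝔪)
      (algebraMap ℤ (B ⧸ 𝔪)).injective_int (Field.toIsField _)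
    exact absurd h2 Int.not_isField
  · have : NeZero p := ⟨hpos.ne'⟩
    let _ : Algebra (ZMod p) (B ⧸ 𝔪) := ZMod.algebra _ p
    have : Module.Finite (ZMod p) (B ⧸ 𝔪) := Module.Finite.of_restrictScalars_finite ℤ _ _
    exact Module.finite_of_finite (ZMod p)

theorem dim_int_poly : ringKrullDim (Polynomial ℤ) ≤ 2 := by
  rw [Polynomial.ringKrullDim_of_isNoetherianRing,
    IsPrincipalIdealRing.ringKrullDim_eq_one ℤ Int.not_isField]
  norm_num

open Polynomial in
attribute [local instance] Polynomial.algebra in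
/-- The Jacobian element multiplies the integral closures of the powers of any ideal into these
powers with bounded loss. -/
theorem jacobian_multiplier {B : Type u} [CommRing B] [IsDomain B] [IsNoetherianRing B]
    {β γ : Type*} [Fintype β] [Fintype γ] [DecidableEq γ] (ξ : β ⊕ γ → B)
    (hξ : Algebra.adjoin ℤ (Set.range ξ) = ⊤) (htb : IsTranscendenceBasis ℤ (ξ ∘ Sum.inl))
    (H : γ → MvPolynomial (β ⊕ γ) ℤ) (hH : ∀ j, MvPolynomial.aeval ξ (H j) = 0) :
    ∃ k, ∀ (I : Ideal B) (n : ℕ) (x : B), IsIntegralOverIdeal (I ^ n) x →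
      (Matrix.of fun i j : γ => MvPolynomial.aeval ξ (MvPolynomial.pderiv (.inr j) (H i))).det * x ∈
        I ^ (n - k) := by
  classical
  have hft : Algebra.FiniteType ℤ B := ⟨Subalgebra.fg_def.2 ⟨_, Set.finite_range ξ, hξ⟩⟩
  have hdim : ringKrullDim B ≤ (1 + Fintype.card β : ℕ) := by
    refine dim_le_of_generators 1 ?_ ξ hξ
      (isTranscendenceBasis_iff_algebraicIndependent_isAlgebraic.1 htb).2
    rw [IsPrincipalIdealRing.ringKrullDim_eq_one ℤ Int.not_isField]
    norm_num
  set d := 1 + Fintype.card β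
  refine ⟨d + 3, fun I n x hx => mem_of_poly_local _ _ fun 𝔪 h𝔪 => ?_⟩
  have hp : (𝔪.map (C : B →+* B[X])).IsPrime := by
    have := h𝔪.isPrime
    exact Ideal.isPrime_map_C_of_isPrime
  set D := (Matrix.of fun i j : γ =>
    MvPolynomial.aeval ξ (MvPolynomial.pderiv (.inr j) (H i))).det with hD
  by_cases hI : I ≤ 𝔪
  · obtain ⟨y, hy, hyx⟩ := local_reduction d hdim 𝔪 I
    obtain ⟨h, hh, hinteg⟩ := hyx n x hx
    -- With `q` the order of the residue field, `ξ ^ q - ξ` lies in `𝔪`.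
    have := finite_quotient B 𝔪
    let _ := Fintype.ofFinite (B ⧸ 𝔪)
    let _ : Field (B ⧸ 𝔪) := Ideal.Quotient.field 𝔪
    have hchar : (Fintype.card (B ⧸ 𝔪) : B) ∈ 𝔪 := by
      rw [← Ideal.Quotient.eq_zero_iff_mem, map_natCast]
      exact Nat.cast_card_eq_zero _
    have hB0 : CharZero B :=
      charZero_of_injective_algebraMap htb.1.algebraMap_injective
    have hmax : (𝔪.comap (constantCoeff : B[X] →+* B)).IsPrime :=
      have := h𝔪.isPrime
      Ideal.comap_isPrime _ _
    -- The prime `𝔪 + (X)` lies strictly above `𝔪 B[X]`.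
    have hlt : 𝔪.map (C : B →+* B[X]) < 𝔪.comap (constantCoeff : B[X] →+* B) := by
      refine lt_of_le_of_ne ?_ fun heq => ?_
      · rw [Ideal.map_le_iff_le_comap]
        intro b hb
        rw [Ideal.mem_comap, Ideal.mem_comap]
        simpa using hb
      · have h1 : (X : B[X]) ∈ 𝔪.comap (constantCoeff : B[X] →+* B) := by
          rw [Ideal.mem_comap]; simp
        rw [← heq, Ideal.mem_map_C_iff] at h1
        have h2 := h1 1
        rw [coeff_X_one] at h2
        exact h𝔪.ne_top ((Ideal.eq_top_iff_one _).2 h2)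
    obtain ⟨g, hg, hmem⟩ := rees_local (Λ := ℤ[X]) (C := B[X]) (fun i => C (ξ i)) y dim_int_poly
      (adjoin_C_eq_top ξ hξ) (isTranscendenceBasis_C ξ hξ htb)
      (fun j => MvPolynomial.map (C : ℤ →+* ℤ[X]) (H j))
      (fun j => by rw [aeval_C_map, hH, C_0]) (𝔪.map (C : B →+* B[X]))
      (𝔪.comap (constantCoeff : B[X] →+* B)) hlt (fun i => Ideal.map_mono hI (hy i))
      (Fintype.card (B ⧸ 𝔪)) Fintype.one_lt_card
      (by exact_mod_cast Fintype.card_ne_zero)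
      (by
        have := Ideal.mem_map_of_mem (C : B →+* B[X]) hchar
        rwa [map_natCast] at this)
      (fun i => by
        rw [← C_pow, ← C_sub]
        refine Ideal.mem_map_of_mem _ ?_
        rw [← Ideal.Quotient.eq_zero_iff_mem, map_sub, map_pow, FiniteField.pow_card, sub_self])
      n (h * C x) hinteg
    have hdet : (Matrix.of fun i j : γ => MvPolynomial.aeval (fun i => (C (ξ i) : B[X]))
        (MvPolynomial.pderiv (.inr j) (MvPolynomial.map (C : ℤ →+* ℤ[X]) (H i)))).det = C D := by
      rw [hD, RingHom.map_det]
      congr 1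
      ext1 i j
      rw [Matrix.of_apply, MvPolynomial.pderiv_map, aeval_C_map]
      rfl
    rw [hdet] at hmem
    refine ⟨g * h, fun hgh => (hp.mem_or_mem hgh).elim hg hh, ?_⟩
    rw [Ideal.map_pow]
    have h1 : Ideal.span (Set.range y) ≤ I.map (C : B →+* B[X]) := by
      rw [Ideal.span_le]; rintro _ ⟨i, rfl⟩; exact hy i
    have h2 := Ideal.pow_right_mono h1 _ hmem
    rw [C_mul]
    convert h2 using 1
    ring
  · obtain ⟨a, ha, ha𝔪⟩ := Set.not_subset.1 hI
    refine ⟨C (a ^ (n - (d + 3))), fun h => ?_, ?_⟩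
    · rw [Ideal.mem_map_C_iff] at h
      have h1 := h 0
      rw [coeff_C_zero] at h1
      exact ha𝔪 (h𝔪.isPrime.mem_of_pow_mem _ h1)
    · rw [← C_mul]
      exact Ideal.mem_map_of_mem _ (Ideal.mul_mem_right _ _ (Ideal.pow_mem_pow ha _))

/-! ### Presentations in characteristic zero -/

/-- The chain rule, when `pderiv k` vanishes on the image of `ρ`. -/
theorem pderiv_eval₂ {σ P A : Type*} [CommRing P] [CommRing A] (ρ : P →+* MvPolynomial σ A)
    (k : σ) (hρ : ∀ a, MvPolynomial.pderiv k (ρ a) = 0) (y : MvPolynomial σ A)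
    (q : Polynomial P) :
    MvPolynomial.pderiv k (q.eval₂ ρ y) =
      (Polynomial.derivative q).eval₂ ρ y * MvPolynomial.pderiv k y := by
  induction q using Polynomial.induction_on' with
  | add p q hp hq =>
    rw [Polynomial.eval₂_add, map_add, hp, hq, Polynomial.derivative_add, Polynomial.eval₂_add,
      add_mul]
  | monomial n a =>
    rw [Polynomial.eval₂_monomial, Derivation.leibniz, hρ, smul_zero, add_zero,
      Polynomial.derivative_monomial, Polynomial.eval₂_monomial, Derivation.leibniz_pow, map_mul,
      map_natCast]
    simp only [smul_eq_mul, nsmul_eq_mul]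
    ring

/-- Over a domain of characteristic zero, an algebraic element is a simple root of some
polynomial: take one of least degree. -/
theorem exists_simple_root {P D : Type*} [CommRing P] [CommRing D] [IsDomain D] [CharZero D]
    (φ : P →+* D) (hφ : Function.Injective φ) (y : D) (q : Polynomial P) (hq : q ≠ 0)
    (hy : q.eval₂ φ y = 0) : ∃ q : Polynomial P, q.eval₂ φ y = 0 ∧
      (Polynomial.derivative q).eval₂ φ y ≠ 0 := by
  classical
  induction hn : q.natDegree using Nat.strong_induction_on generalizing q with
  | _ n ih =>
    by_cases h : (Polynomial.derivative q).eval₂ φ y = 0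
    · have hd : q.natDegree ≠ 0 := by
        intro h0
        rw [Polynomial.eq_C_of_natDegree_eq_zero h0, Polynomial.eval₂_C] at hy
        refine hq ?_
        rw [Polynomial.eq_C_of_natDegree_eq_zero h0, hφ (hy.trans (map_zero φ).symm),
          Polynomial.C_0]
      have hder : Polynomial.derivative q ≠ 0 := by
        intro h0
        have h1 := congrArg (fun r => φ (r.coeff (q.natDegree - 1))) h0
        simp only [Polynomial.coeff_derivative, Polynomial.coeff_zero, map_zero, map_mul] at h1
        rw [Nat.sub_add_cancel (by omega)] at h1
        rcases mul_eq_zero.1 h1 with h1 | h1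
        · exact hq (Polynomial.leadingCoeff_eq_zero.1 (hφ (h1.trans (map_zero φ).symm)))
        · rw [map_add, map_natCast, map_one] at h1
          exact Nat.cast_add_one_ne_zero _ h1
      exact ih _ (hn ▸ Polynomial.natDegree_derivative_lt hd) _ hder h rfl
    · exact ⟨q, hy, h⟩

/-- A domain of characteristic zero of finite type over the integers has generators and relations
with nonzero Jacobian. -/
theorem exists_presentation (D : Type u) [CommRing D] [IsDomain D] [CharZero D]
    [hft : Algebra.FiniteType ℤ D] :
    ∃ (β γ : Type u) (_ : Fintype β) (_ : Fintype γ) (_ : DecidableEq γ) (ξ : β ⊕ γ → D)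
      (H : γ → MvPolynomial (β ⊕ γ) ℤ), Algebra.adjoin ℤ (Set.range ξ) = ⊤ ∧
      IsTranscendenceBasis ℤ (ξ ∘ Sum.inl) ∧ (∀ j, MvPolynomial.aeval ξ (H j) = 0) ∧
      (Matrix.of fun i j : γ =>
        MvPolynomial.aeval ξ (MvPolynomial.pderiv (.inr j) (H i))).det ≠ 0 := by
  classical
  obtain ⟨t, ht⟩ := hft.out
  have hfaith : FaithfulSMul ℤ D :=
    (faithfulSMul_iff_algebraMap_injective _ _).2 (algebraMap ℤ D).injective_int
  have halg : Algebra.IsAlgebraic (Algebra.adjoin ℤ (t : Set D)) D := by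
    constructor
    intro a
    have ha : a ∈ Algebra.adjoin ℤ (t : Set D) := ht ▸ Algebra.mem_top
    exact isAlgebraic_algebraMap (⟨a, ha⟩ : Algebra.adjoin ℤ (t : Set D))
  obtain ⟨w, hwt, hw⟩ := exists_isTranscendenceBasis_subset (R := ℤ) (t : Set D)
  have hwfin : Fintype w := (t.finite_toSet.subset hwt).fintype
  let φ : MvPolynomial w ℤ →+* D := (MvPolynomial.aeval (R := ℤ) (Subtype.val : w → D)).toRingHom
  have hφ : Function.Injective φ := hw.1
  have hex : ∀ y : t, ∃ q : Polynomial (MvPolynomial w ℤ), q.eval₂ φ (y : D) = 0 ∧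
      (Polynomial.derivative q).eval₂ φ (y : D) ≠ 0 := by
    intro y
    have hwalg := (isTranscendenceBasis_iff_algebraicIndependent_isAlgebraic.1 hw).2
    obtain ⟨q, hq, hqy⟩ := hwalg.isAlgebraic (y : D)
    let e : MvPolynomial w ℤ ≃ₐ[ℤ] Algebra.adjoin ℤ (Set.range (Subtype.val : w → D)) :=
      hw.1.aevalEquiv
    refine exists_simple_root φ hφ y (q.map (e.symm : _ →+* MvPolynomial w ℤ)) ?_ ?_
    · rwa [Ne, Polynomial.map_eq_zero_iff e.symm.injective]
    · rw [Polynomial.eval₂_map, ← hqy, Polynomial.aeval_def]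
      congr 1
      ext b
      have : b = e (e.symm b) := (e.apply_symm_apply b).symm
      conv_rhs => rw [this]
      exact (hw.1.algebraMap_aevalEquiv _).symm
  choose q hq hq' using hex
  let ξ : w ⊕ t → D := Sum.elim Subtype.val Subtype.val
  let ρ : MvPolynomial w ℤ →+* MvPolynomial (w ⊕ t) ℤ := (MvPolynomial.rename Sum.inl).toRingHom
  have hρ : ∀ (k : t) a, MvPolynomial.pderiv (.inr k) (ρ a) = 0 := by
    intro k a
    refine MvPolynomial.pderiv_eq_zero_of_notMem_vars fun h => ?_
    have h1 := MvPolynomial.vars_rename _ _ h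
    rw [Finset.mem_image] at h1
    obtain ⟨b, -, hb⟩ := h1
    simp at hb
  have hev : ∀ (r : Polynomial (MvPolynomial w ℤ)) (y : t),
      MvPolynomial.aeval ξ (r.eval₂ ρ (MvPolynomial.X (.inr y))) = r.eval₂ φ (y : D) := by
    intro r y
    have h1 := Polynomial.hom_eval₂ r ρ (MvPolynomial.aeval (R := ℤ) ξ).toRingHom
      (MvPolynomial.X (.inr y))
    refine h1.trans ?_
    congr 1
    · ext b
      · simp
      · simp [ρ, φ, ξ]
    · exact MvPolynomial.aeval_X _ _
  refine ⟨w, t, hwfin, inferInstance, inferInstance, ξ,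
    fun y => (q y).eval₂ ρ (MvPolynomial.X (.inr y)), ?_, hw, fun y => (hev _ _).trans (hq y), ?_⟩
  · rw [eq_top_iff, ← ht]
    refine Algebra.adjoin_mono fun a ha => ⟨.inr ⟨a, ha⟩, rfl⟩
  · have hdiag : (Matrix.of fun i j : t => MvPolynomial.aeval ξ (MvPolynomial.pderiv (.inr j)
        ((q i).eval₂ ρ (MvPolynomial.X (.inr i))))) =
        Matrix.diagonal fun i => (Polynomial.derivative (q i)).eval₂ φ (i : D) := by
      ext1 i j
      rw [Matrix.of_apply, pderiv_eval₂ ρ _ (hρ j), map_mul, hev, Matrix.diagonal_apply]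
      split_ifs with h
      · rw [h, MvPolynomial.pderiv_X_self, map_one, mul_one]
      · rw [MvPolynomial.pderiv_X_of_ne (by simpa using h), map_zero, mul_zero]
    rw [hdiag, Matrix.det_diagonal, Finset.prod_ne_zero_iff]
    exact fun i _ => hq' i

/-- The Jacobian multiplier, over polynomial rings. -/
theorem jacobian_multiplier_poly {D : Type u} [CommRing D] [IsDomain D] [IsNoetherianRing D]
    {β γ : Type*} [Fintype β] [Fintype γ] [DecidableEq γ] (ξ : β ⊕ γ → D)
    (hξ : Algebra.adjoin ℤ (Set.range ξ) = ⊤) (htb : IsTranscendenceBasis ℤ (ξ ∘ Sum.inl))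
    (H : γ → MvPolynomial (β ⊕ γ) ℤ) (hH : ∀ j, MvPolynomial.aeval ξ (H j) = 0) (s : ℕ) :
    ∃ k, ∀ (I : Ideal (MvPolynomial (Fin s) D)) (n : ℕ) (x : MvPolynomial (Fin s) D),
      IsIntegralOverIdeal (I ^ n) x → MvPolynomial.C (Matrix.of fun i j : γ =>
        MvPolynomial.aeval ξ (MvPolynomial.pderiv (.inr j) (H i))).det * x ∈ I ^ (n - k) := by
  classical
  let _ : Algebra ℤ (MvPolynomial (Fin s) D) := Ring.toIntAlgebra _
  let f : β ⊕ γ → (Fin s ⊕ β) ⊕ γ := Sum.map Sum.inr id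
  have hf : Function.Injective f := Sum.inr_injective.sumMap Function.injective_id
  let η : (Fin s ⊕ β) ⊕ γ → MvPolynomial (Fin s) D :=
    Sum.elim (Sum.elim MvPolynomial.X fun b => MvPolynomial.C (ξ (.inl b)))
      fun j => MvPolynomial.C (ξ (.inr j))
  have hηf : ∀ i, η (f i) = MvPolynomial.C (ξ i) := by rintro (i | i) <;> rfl
  have haev : ∀ p : MvPolynomial (β ⊕ γ) ℤ, MvPolynomial.aeval η (MvPolynomial.rename f p) =
      MvPolynomial.C (MvPolynomial.aeval ξ p) := by
    intro p
    rw [MvPolynomial.aeval_rename]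
    induction p using MvPolynomial.induction_on with
    | C a =>
      rw [MvPolynomial.aeval_C, MvPolynomial.aeval_C]
      simp
    | add p q hp hq => rw [map_add, map_add, hp, hq, map_add]
    | mul_X p i hp =>
      rw [map_mul, map_mul, hp, map_mul, MvPolynomial.aeval_X, MvPolynomial.aeval_X,
        Function.comp_apply, hηf]
  have hη : Algebra.adjoin ℤ (Set.range η) = ⊤ := by
    rw [eq_top_iff]
    intro p _
    have hC : ∀ b : D, MvPolynomial.C b ∈ Algebra.adjoin ℤ (Set.range η) := by
      intro b
      have hb : b ∈ Algebra.adjoin ℤ (Set.range ξ) := hξ ▸ Algebra.mem_top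
      rw [Algebra.adjoin_range_eq_range_aeval] at hb ⊢
      obtain ⟨q, rfl⟩ := hb
      exact ⟨MvPolynomial.rename f q, haev q⟩
    induction p using MvPolynomial.induction_on with
    | C a => exact hC a
    | add p q hp hq => exact add_mem (hp trivial) (hq trivial)
    | mul_X p i hp => exact mul_mem (hp trivial) (Algebra.subset_adjoin ⟨.inl (.inl i), rfl⟩)
  have hηtb : IsTranscendenceBasis ℤ (η ∘ Sum.inl) := by
    have h1 := htb.sumElim_comp (IsTranscendenceBasis.mvPolynomial (Fin s) D)
    convert h1 using 1
    ext (i | i) <;> rfl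
  obtain ⟨k, hk⟩ := jacobian_multiplier η hη hηtb (fun j => MvPolynomial.rename f (H j))
    (fun j => by rw [haev, hH, map_zero])
  refine ⟨k, fun I n x hx => ?_⟩
  have h1 := hk I n x hx
  convert h1 using 2
  rw [RingHom.map_det]
  congr 1
  ext1 i j
  rw [Matrix.of_apply]
  have h2 : MvPolynomial.pderiv (.inr j) (MvPolynomial.rename f (H i)) =
      MvPolynomial.rename f (MvPolynomial.pderiv (.inr j) (H i)) :=
    MvPolynomial.pderiv_rename hf (.inr j) (H i)
  rw [h2, haev]
  rfl

/-- Polynomial rings over the integers are smooth, so that their Jacobian multiplier is `1`. -/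
theorem PUBS.int : PUBS ℤ := by
  intro s
  obtain ⟨k, hk⟩ := jacobian_multiplier_poly (D := ℤ) (β := Empty) (γ := Empty)
    (fun i => isEmptyElim i) (by
      rw [eq_top_iff]
      intro a _
      exact Subalgebra.algebraMap_mem _ a) (by
      rw [isTranscendenceBasis_iff_algebraicIndependent_isAlgebraic]
      refine ⟨(algebraicIndependent_empty_type_iff).2 Function.injective_id, ⟨fun a => ?_⟩⟩
      have h := isAlgebraic_algebraMap (R := Algebra.adjoin ℤ (Set.range
        ((fun i => isEmptyElim i : Empty ⊕ Empty → ℤ) ∘ Sum.inl))) (A := ℤ)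
        ⟨a, Subalgebra.algebraMap_mem _ a⟩
      exact h) (fun i => isEmptyElim i)
    (fun i => isEmptyElim i) s
  refine ⟨k, fun I n x hx => ?_⟩
  have h1 := hk I n x hx
  rwa [Matrix.det_isEmpty, MvPolynomial.C_1, one_mul] at h1

/-! ### Uniform Artin–Rees for a prime number in `ℤ[x₁, …, x_N]` -/

section PrimeNumber

/-- Over a valuation ring in which `b ^ p ∣ p`, a lift `Φ` of the Frobenius satisfies
`Φ f ≡ f ^ p` modulo `p * b ^ (p * (a - 1))` on `I ^ a`, where `b` generates the extension
of `I`. -/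
theorem frobeniusLift_sub_pow {B V : Type*} [CommRing B] [CommRing V] (p : ℕ) (hp : p.Prime)
    (Φ : B →+* B) (hΦ : ∀ f, (p : B) ∣ Φ f - f ^ p) (φ : B →+* V) (I : Ideal B) (b : V)
    (hI : I.map φ = Ideal.span {b}) (hb : b ^ p ∣ (p : V)) (a : ℕ) :
    ∀ f ∈ I ^ a, (p : V) * b ^ (p * (a - 1)) ∣ φ (Φ f) - φ f ^ p := by
  have hmem : ∀ (a : ℕ), ∀ f ∈ I ^ a, b ^ a ∣ φ f := by
    intro a f hf
    have h := Ideal.mem_map_of_mem φ hf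
    rwa [Ideal.map_pow, hI, Ideal.span_singleton_pow, Ideal.mem_span_singleton] at h
  have h0 : ∀ f, (p : V) ∣ φ (Φ f) - φ f ^ p := by
    intro f
    have h := map_dvd φ (hΦ f)
    rwa [map_natCast, map_sub, map_pow] at h
  induction a with
  | zero => intro f _; simpa using h0 f
  | succ a ih =>
    intro f hf
    rw [pow_succ] at hf
    rw [Nat.add_sub_cancel]
    have hf' := hf
    refine Submodule.mul_induction_on' (C := fun f _ => (p : V) * b ^ (p * a) ∣ φ (Φ f) - φ f ^ p)
      ?_ ?_ hf
    · intro f hf g hg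
      obtain ⟨x, hx⟩ := ih f hf
      obtain ⟨y, hy⟩ := h0 g
      obtain ⟨f', hf'⟩ := hmem a f hf
      obtain ⟨g', hg'⟩ := hmem 1 g (by rwa [pow_one])
      obtain ⟨q, hq⟩ := hb
      rw [pow_one] at hg'
      have e1 : φ (Φ f) = φ f ^ p + p * b ^ (p * (a - 1)) * x := by rw [← hx]; ring
      have e2 : φ (Φ g) = φ g ^ p + p * y := by rw [← hy]; ring
      rw [map_mul, map_mul, map_mul, e1, e2]
      have h1 : ∀ z, b ^ (p * a) ∣ b ^ (p * (a - 1)) * b ^ p * z := fun z => by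
        refine dvd_mul_of_dvd_left ?_ z
        rw [← pow_add]
        refine pow_dvd_pow b ?_
        rcases a with _ | a
        · simp
        · rw [Nat.add_sub_cancel, Nat.mul_succ]
      have h2 : (φ f ^ p + p * b ^ (p * (a - 1)) * x) * (φ g ^ p + p * y) - (φ f * φ g) ^ p =
          p * (φ f ^ p * y + b ^ (p * (a - 1)) * (g' ^ p * b ^ p) * x +
            b ^ (p * (a - 1)) * (p : V) * x * y) := by
        rw [hg']; ring
      rw [h2]
      refine mul_dvd_mul_left _ (dvd_add (dvd_add ?_ ?_) ?_)
      · rw [hf', mul_pow, ← pow_mul, mul_comm a p, mul_assoc]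
        exact dvd_mul_right _ _
      · obtain ⟨w, hw⟩ := h1 (g' ^ p * x)
        exact ⟨w, by rw [← hw]; ring⟩
      · obtain ⟨w, hw⟩ := h1 (q * x * y)
        exact ⟨w, by rw [← hw, hq]; ring⟩
    · intro f hf g hg ihf ihg
      rw [← pow_succ] at hf hg
      obtain ⟨f', hf'⟩ := hmem _ f hf
      obtain ⟨g', hg'⟩ := hmem _ g hg
      obtain ⟨r, hr⟩ := exists_add_pow_prime_eq hp f' g'
      have h1 : φ (Φ (f + g)) - φ (f + g) ^ p = (φ (Φ f) - φ f ^ p) + (φ (Φ g) - φ g ^ p) -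
          p * b ^ (p * a) * (b ^ p * f' * g' * r) := by
        have h3 : (φ f + φ g) ^ p = φ f ^ p + φ g ^ p + p * (b ^ (a + 1)) ^ p * f' * g' * r := by
          rw [hf', hg', ← mul_add, mul_pow, hr]; ring
        rw [map_add, map_add, map_add, h3]
        ring
      rw [h1]
      exact dvd_sub (dvd_add ihf ihg) (dvd_mul_right _ _)

/-- If `p * u ∈ I ^ n` then `u` is integral over `I ^ (n - C)` for a uniform `C`. At a valuation
with `p ∣ b ^ C`, where `b` generates the extension of `I`, one cancels `p`; at the others `p` is
so small that comparing `Φ u - u ^ p` with `p⁻¹ * (Φ (p * u) - (p * u) ^ p)` improves the order of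
`u` along `I` one step at a time. -/
theorem isInt_of_prime_mul {B : Type u} [CommRing B] [IsDomain B] [IsNoetherianRing B]
    [CharZero B] (p : ℕ) (hp : p.Prime) (Φ : B →+* B) (hΦ : ∀ f, (p : B) ∣ Φ f - f ^ p) (k : ℕ)
    (hk : ∀ (I : Ideal B) (n : ℕ) (x : B), IsIntegralOverIdeal (I ^ n) x → x ∈ I ^ (n - k))
    (I : Ideal B) (n : ℕ) (u : B) (hu : (p : B) * u ∈ I ^ n) :
    ∀ a ≤ n - p * (k + 2), IsIntegralOverIdeal (I ^ a) u := by
  intro a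
  induction a with
  | zero =>
    intro _
    exact isInt_of_valuations fun V _ _ _ φ hφ => by
      rw [pow_zero, Ideal.one_eq_top, Ideal.map_top]; trivial
  | succ a ih =>
    intro ha
    have hua := hk I a u (ih (by omega))
    refine isInt_of_valuations fun V _ _ _ φ hφ => ?_
    obtain ⟨b, -, hb⟩ := fg_map_principal φ (IsNoetherian.noetherian I)
    generalize φ b = b at hb
    have hp0 : (p : V) ≠ 0 := by
      rw [← map_natCast φ, Ne, map_eq_zero_iff φ hφ]
      exact_mod_cast hp.ne_zero
    have hun : b ^ n ∣ p * φ u := by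
      have h := Ideal.mem_map_of_mem φ hu
      rwa [Ideal.map_pow, hb, Ideal.span_singleton_pow, Ideal.mem_span_singleton, map_mul,
        map_natCast] at h
    rw [Ideal.map_pow, hb, Ideal.span_singleton_pow, Ideal.mem_span_singleton]
    set C := p * (k + 2) with hC
    have hpC : p ≤ C := Nat.le_mul_of_pos_right p (by omega)
    have hp1 := hp.two_le
    rcases ValuationRing.dvd_total (p : V) (b ^ C) with ⟨c, hc⟩ | hbC
    · obtain ⟨m, rfl⟩ : ∃ m, n = C + m := ⟨n - C, by omega⟩
      obtain ⟨y, hy⟩ := hun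
      have h1 : φ u = b ^ m * c * y := by
        refine mul_left_cancel₀ hp0 ?_
        rw [hy, pow_add, hc]; ring
      rw [h1, mul_assoc]
      exact dvd_mul_of_dvd_left (pow_dvd_pow b (by omega)) _
    · have hbp : b ^ p ∣ (p : V) := (pow_dvd_pow b hpC).trans hbC
      by_cases hbu : IsUnit b
      · exact (hbu.pow _).dvd
      have hpu : (p : V) ∈ IsLocalRing.maximalIdeal V := by
        refine Ideal.mem_of_dvd _ hbp (Ideal.pow_mem_of_mem _ ?_ p hp.pos)
        exact hbu
      have hunit : IsUnit (1 - (p : V) ^ (p - 1)) := by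
        by_contra h
        have h1 : (1 : V) ∈ IsLocalRing.maximalIdeal V := by
          have h2 := Ideal.add_mem (IsLocalRing.maximalIdeal V)
            ((IsLocalRing.mem_maximalIdeal _).2 h)
            (Ideal.pow_mem_of_mem _ hpu (p - 1) (by omega))
          rwa [sub_add_cancel] at h2
        exact (Ideal.ne_top_iff_one _).1 (IsLocalRing.maximalIdeal.isMaximal V).ne_top h1
      have h1 := frobeniusLift_sub_pow p hp Φ hΦ φ I b hb hbp _ u hua
      have h2 := frobeniusLift_sub_pow p hp Φ hΦ φ I b hb hbp _ _ hu
      have h3 : φ (Φ (p * u)) - φ (p * u) ^ p = p * (φ (Φ u) - (p : V) ^ (p - 1) * φ u ^ p) := by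
        rw [map_mul, map_mul, map_mul, map_natCast, map_natCast, mul_pow]
        have : (p : V) ^ p = p * (p : V) ^ (p - 1) := by
          rw [← pow_succ', Nat.sub_add_cancel hp.one_le]
        rw [this]; ring
      rw [h3, mul_dvd_mul_iff_left hp0] at h2
      have h4 : b ^ (p * (a + 1)) ∣ φ (Φ u) - φ u ^ p := by
        refine Dvd.dvd.trans ?_ h1
        refine Dvd.dvd.trans ?_ (mul_dvd_mul_right hbC _)
        rw [← pow_add]
        refine pow_dvd_pow b ?_
        rw [hC, ← mul_add]
        exact Nat.mul_le_mul_left p (by omega)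
      have h5 : b ^ (p * (a + 1)) ∣ φ (Φ u) - (p : V) ^ (p - 1) * φ u ^ p :=
        (pow_dvd_pow b (Nat.mul_le_mul_left p (by omega))).trans h2
      have h6 : b ^ (p * (a + 1)) ∣ (1 - (p : V) ^ (p - 1)) * φ u ^ p := by
        have h7 := dvd_sub h5 h4
        have h8 : φ (Φ u) - (p : V) ^ (p - 1) * φ u ^ p - (φ (Φ u) - φ u ^ p) =
          (1 - (p : V) ^ (p - 1)) * φ u ^ p := by ring
        rwa [h8] at h7
      rw [hunit.dvd_mul_left, mul_comm, pow_mul] at h6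
      exact (IsIntegrallyClosed.pow_dvd_pow_iff hp.ne_zero).1 h6

/-- The kernel of `ℤ[x₁, …, x_N] → 𝔽_p[x₁, …, x_N]`. -/
theorem uar_ker_map_zmod (p : ℕ) [Fact p.Prime] (N : ℕ) :
    UAR (RingHom.ker (MvPolynomial.map (Int.castRingHom (ZMod p)) :
      MvPolynomial (Fin N) ℤ →+* MvPolynomial (Fin N) (ZMod p))) := by
  have hp : p.Prime := Fact.out
  obtain ⟨k, hk⟩ := PUBS.int N
  have hker : ∀ f : MvPolynomial (Fin N) ℤ, (p : MvPolynomial (Fin N) ℤ) ∣ f ↔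
      MvPolynomial.map (Int.castRingHom (ZMod p)) f = 0 := by
    intro f
    rw [← MvPolynomial.C_dvd_iff_zmod]
    simp
  have hΦ : ∀ f : MvPolynomial (Fin N) ℤ, (p : MvPolynomial (Fin N) ℤ) ∣
      (MvPolynomial.expand p : _ →ₐ[ℤ] _).toRingHom f - f ^ p := by
    intro f
    rw [hker, map_sub, map_pow]
    change MvPolynomial.map _ (MvPolynomial.expand p f) - _ = 0
    rw [MvPolynomial.map_expand, MvPolynomial.expand_zmod, sub_self]
  refine ⟨p * (k + 2) + k, fun I n v hv => ?_⟩
  obtain ⟨u, rfl⟩ := (hker v).2 hv.2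
  have h1 := isInt_of_prime_mul p hp _ hΦ k hk I n u hv.1 _ le_rfl
  have h2 := hk I _ u h1
  rw [mul_comm _ u, ← Nat.sub_sub]
  exact Ideal.mul_mem_mul h2 ((hker _).1 (dvd_refl _))

end PrimeNumber

/-! ### Finitely generated algebras over the integers -/

section FiniteTypeInt

theorem frobenius_finite_mvPolynomial (p : ℕ) [Fact p.Prime] (N : ℕ) :
    (frobenius (MvPolynomial (Fin N) (ZMod p)) p).Finite := by
  refine RingHom.IsIntegral.to_finite ?_ ?_
  · intro x
    refine ⟨Polynomial.X ^ p - Polynomial.C x,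
      Polynomial.monic_X_pow_sub_C x (Nat.Prime.ne_zero Fact.out), ?_⟩
    simp [frobenius_def]
  · have h : ((frobenius (MvPolynomial (Fin N) (ZMod p)) p).comp
        (algebraMap (ZMod p) (MvPolynomial (Fin N) (ZMod p)))).FiniteType := by
      rw [Subsingleton.elim ((frobenius (MvPolynomial (Fin N) (ZMod p)) p).comp
        (algebraMap (ZMod p) (MvPolynomial (Fin N) (ZMod p)))) (algebraMap _ _)]
      exact RingHom.finiteType_algebraMap.2 inferInstance
    exact RingHom.FiniteType.of_comp_finiteType h

/-- A map from a polynomial ring over `ℤ` to a ring of characteristic `p` factors through the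
polynomial ring over `ZMod p`. -/
theorem factor_zmod {N : ℕ} {E : Type*} [CommRing E] (π : MvPolynomial (Fin N) ℤ →+* E) (p : ℕ)
    [CharP E p] : ∃ π' : MvPolynomial (Fin N) (ZMod p) →+* E,
      π'.comp (MvPolynomial.map (Int.castRingHom (ZMod p))) = π := by
  refine ⟨MvPolynomial.eval₂Hom (ZMod.castHom (dvd_refl p) E) fun i => π (MvPolynomial.X i), ?_⟩
  ext i <;> simp

/-- The kernel of a surjection from `ℤ[x₁, …, x_N]` to a domain of characteristic zero is controlled
by flatness over `ℤ`; in characteristic `p` it is handled modulo `p` first. -/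
theorem uar_ker_int {N : ℕ} {E : Type} [CommRing E] [IsDomain E]
    (π : MvPolynomial (Fin N) ℤ →+* E) (hπ : Function.Surjective π) (hE : PUBS E) :
    UAR (RingHom.ker π) := by
  have : IsNoetherianRing E := isNoetherianRing_of_surjective _ _ π hπ
  obtain ⟨p, hchar⟩ := CharP.exists E
  rcases CharP.char_is_prime_or_zero E p with hp | rfl
  · have : Fact p.Prime := ⟨hp⟩
    obtain ⟨π', rfl⟩ := factor_zmod π p
    have hπ' : Function.Surjective π' := Function.Surjective.of_comp hπ
    have h1 := ((FGen.of_finite p (frobenius_finite_mvPolynomial p N))).uar π' hπ' hE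
    have h2 := UAR.comp _ (MvPolynomial.map_surjective _ (ZMod.intCast_surjective))
      (uar_ker_map_zmod p N) h1
    rwa [RingHom.comap_ker] at h2
  · have : CharZero E := CharP.charP_to_charZero E
    have hπ' : π = (MvPolynomial.aeval (R := ℤ) fun i => π (MvPolynomial.X i)).toRingHom := by
      ext i <;> simp
    have hs : Function.Surjective (MvPolynomial.aeval (R := ℤ) fun i => π (MvPolynomial.X i)) := by
      intro e
      obtain ⟨f, rfl⟩ := hπ e
      exact ⟨f, (congrArg (fun g : MvPolynomial (Fin N) ℤ →+* E => g f) hπ').symm⟩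
    have h1 := uar_ker_aeval hE N _ hs
    rw [hπ']
    exact h1

/-- Domains of finite type over `ℤ`. -/
theorem PUBS.of_int {N : ℕ} (E : Type) [CommRing E] [IsDomain E]
    (π : MvPolynomial (Fin N) ℤ →+* E) (hπ : Function.Surjective π) : PUBS E := by
  refine PUBS.induct (R := MvPolynomial (Fin N) ℤ) ?_ ?_ E π hπ
  · intro D _ _ π hπ
    have : IsNoetherianRing D := isNoetherianRing_of_surjective _ _ π hπ
    obtain ⟨p, hchar⟩ := CharP.exists D
    rcases CharP.char_is_prime_or_zero D p with hp | rfl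
    · have : Fact p.Prime := ⟨hp⟩
      obtain ⟨π', rfl⟩ := factor_zmod π p
      have hπ' : Function.Surjective π' := Function.Surjective.of_comp hπ
      have h1 : PUBS D := PUBS.of_ffinite p (frobenius_finite_mvPolynomial p N) N (by
        rw [MvPolynomial.ringKrullDim_of_isNoetherianRing, ringKrullDim_eq_zero_of_field]
        simp) D π' hπ'
      refine ⟨1, one_ne_zero, fun s => ?_⟩
      obtain ⟨k, hk⟩ := h1 s
      exact ⟨k, fun I n x hx => by rw [MvPolynomial.C_1, one_mul]; exact hk I n x hx⟩
    · have : CharZero D := CharP.charP_to_charZero D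
      have hft : Algebra.FiniteType ℤ D := by
        refine Algebra.FiniteType.of_surjective
          (MvPolynomial.aeval (R := ℤ) fun i => π (MvPolynomial.X i)) fun e => ?_
        obtain ⟨f, rfl⟩ := hπ e
        refine ⟨f, ?_⟩
        have hπ' : (MvPolynomial.aeval (R := ℤ) fun i => π (MvPolynomial.X i)).toRingHom = π := by
          ext i <;> simp
        exact congrArg (fun g : MvPolynomial (Fin N) ℤ →+* D => g f) hπ'
      obtain ⟨β, γ, _, _, _, ξ, H, hξ, htb, hH, hdet⟩ := exists_presentation D
      exact ⟨_, hdet, fun s => jacobian_multiplier_poly ξ hξ htb H hH s⟩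
  · intro D E _ _ _ _ π ρ hπ hρ hE s
    let e : MvPolynomial (Fin (s + N)) ℤ ≃+* MvPolynomial (Fin s) (MvPolynomial (Fin N) ℤ) :=
      ((MvPolynomial.renameEquiv ℤ finSumFinEquiv.symm).trans
        (MvPolynomial.sumAlgEquiv ℤ (Fin s) (Fin N))).toRingEquiv
    let θ : MvPolynomial (Fin (s + N)) ℤ →+* MvPolynomial (Fin s) D :=
      (MvPolynomial.map π).comp (e : _ →+* _)
    have hθ : Function.Surjective θ := (MvPolynomial.map_surjective π hπ).comp e.surjective
    have h1 := uar_ker_int ((MvPolynomial.map ρ).comp θ)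
      ((MvPolynomial.map_surjective ρ hρ).comp hθ) (hE.mvPolynomial s)
    rw [← RingHom.comap_ker] at h1
    exact UAR.of_comap θ hθ h1

/-- Rings that are essentially of finite type over `ℤ` and reduced. -/
theorem UBS.of_int {R : Type u} [CommRing R] [IsReduced R]
    (h : IsEssentiallyOfFiniteTypeOverInt R) : UBS R := by
  obtain ⟨A, hft, M, hM⟩ := h
  obtain ⟨N, f, hf⟩ := Algebra.FiniteType.iff_quotient_mvPolynomial''.1 hft
  -- `R` is also a localization of the image `S` of `A` in `R`, and `S` is reduced.
  let g : MvPolynomial (Fin N) ℤ →+* R := (algebraMap A R).comp f.toRingHom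
  let S := MvPolynomial (Fin N) ℤ ⧸ RingHom.ker g
  let q : MvPolynomial (Fin N) ℤ →+* S := Ideal.Quotient.mk _
  have hq : Function.Surjective q := Ideal.Quotient.mk_surjective
  let _ : Algebra S R := (RingHom.kerLift g).toAlgebra
  have hinj : Function.Injective (algebraMap S R) := RingHom.kerLift_injective g
  have hqR : ∀ x, algebraMap S R (q x) = algebraMap A R (f x) := fun x => rfl
  have hred : IsReduced S := isReduced_of_injective _ hinj
  let M' : Submonoid S := (M.comap f.toRingHom).map q
  have hloc : IsLocalization M' R := by
    refine ⟨?_, ?_, ?_⟩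
    · rintro ⟨_, x, hx, rfl⟩
      exact IsLocalization.map_units R (⟨f x, hx⟩ : M)
    · intro z
      obtain ⟨⟨a, m⟩, h1⟩ := IsLocalization.surj M z
      obtain ⟨x, rfl⟩ := hf a
      obtain ⟨y, hy⟩ := hf m
      refine ⟨⟨q x, ⟨q y, y, ?_, rfl⟩⟩, ?_⟩
      · change f y ∈ M
        rw [hy]
        exact m.2
      · change z * algebraMap S R (q y) = algebraMap S R (q x)
        rw [hqR, hqR, hy]
        exact h1
    · intro x y hxy
      exact ⟨1, by rw [hinj hxy]⟩
  have hs : ∀ P : Ideal S, Function.Surjective ((Ideal.Quotient.mk P).comp q) := fun P =>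
    Ideal.Quotient.mk_surjective.comp hq
  have key : ∀ P : Ideal S, P.IsPrime → PUBS (S ⧸ P) := fun P hP => PUBS.of_int _ _ (hs P)
  refine UBS.localization M' (UBS.of_reduced (R := S) (fun P hP => (key P hP).ubs) fun P hP => ?_)
  have h1 := uar_ker_int _ (hs P) (key P hP)
  rw [← RingHom.comap_ker, Ideal.mk_ker] at h1
  exact UAR.of_comap q hq h1

end FiniteTypeInt

end BS

/-- A reduced commutative noetherian ring `R` of finite Krull dimension has the uniform
Briançon–Skoda property provided (i) `R` has prime characteristic `p` and is module-finite
over `R^p`, or (ii) `R` is essentially of finite type over `ℤ`: there exists `k ≥ 0` such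
that `\overline{I ^ n} ⊆ I ^ (n - k)` for every ideal `I` of `R` and every `n ≥ k`. -/
theorem uniformBrianconSkoda_of_conditions {R : Type u} [CommRing R] [IsNoetherianRing R]
    [IsReduced R] (hdim : ∃ d : ℕ, ringKrullDim R ≤ d)
    (hcond : ModuleFiniteOverPthPowers R ∨ IsEssentiallyOfFiniteTypeOverInt R) :
    ∃ k : ℕ, ∀ (I : Ideal R) (n : ℕ), k ≤ n →
      Ideal.intClosure (I ^ n) ≤ I ^ (n - k) := by
  obtain ⟨k, hk⟩ : BS.UBS R := hcond.elim (BS.UBS.of_ffinite hdim) BS.UBS.of_int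
  exact ⟨k, fun I n _ => Ideal.span_le.2 fun x hx => hk I n x hx⟩
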